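/- arXiv:1308.3956 — 2 statements merged into one kernel-verified Lean document; each statement's English description precedes it below -/
import Mathlib

section
/- Fix a real number c. For each integer n ≥ 2 with log n + c > 0, set r_n := sqrt( (log n + c) / (π n) ). Let x_1,…,x_n be independent uniformly distributed random points in the unit square Q = [0,1]² ⊂ ℝ², and let G_n be the geometric graph on vertex set {1,…,n} with an edge between distinct i and j iff ‖x_i − x_j‖₂ ≤ r_n. Then lim_{n→∞} P( G_n is connected ) = exp( − e^{−c} ). -/
open MeasureTheory

/-- The closed unit square `[0,1]² ⊂ ℝ²` (with the Euclidean norm). -/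
def unitSquare : Set (EuclideanSpace ℝ (Fin 2)) :=
  {p | ∀ i, p i ∈ Set.Icc (0 : ℝ) 1}

/-- The uniform probability measure on the unit square. -/
noncomputable def unifSquare : Measure (EuclideanSpace ℝ (Fin 2)) :=
  volume.restrict unitSquare

/-- The geometric graph on the points `x 0, …, x (n-1)` with radius `r`: vertices `Fin n`,
with an edge between distinct `i` and `j` iff `‖x i − x j‖₂ ≤ r`. -/
def geomGraph {n : ℕ} (x : Fin n → EuclideanSpace ℝ (Fin 2)) (r : ℝ) : SimpleGraph (Fin n) :=
  SimpleGraph.fromRel fun i j => ‖x i - x j‖ ≤ r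

section Aux

open MeasureTheory Set Filter Topology
open scoped ENNReal


/-! ### Basic plane geometry and measure -/

abbrev Pt := EuclideanSpace ℝ (Fin 2)

lemma norm_le_iff_coord (i : Fin 2) {r : ℝ} (hr : 0 ≤ r) (p q : Pt) :
    ‖p - q‖ ≤ r ↔ (p i - q i) ^ 2 + (p (i + 1) - q (i + 1)) ^ 2 ≤ r ^ 2 := by
  rw [EuclideanSpace.norm_eq, Real.sqrt_le_left hr, Fin.sum_univ_two]
  fin_cases i <;> simp [add_comm]

lemma abs_coord_le_norm (i : Fin 2) (p q : Pt) : |p i - q i| ≤ ‖p - q‖ := by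
  have := PiLp.norm_apply_le (p - q) i
  simpa using this

lemma measurable_coord (i : Fin 2) : Measurable (fun p : Pt => p i) := by fun_prop

lemma lintegral_coord_mul (i : Fin 2) (f g : ℝ → ℝ≥0∞) (hf : Measurable f) (hg : Measurable g) :
    ∫⁻ p : Pt, f (p i) * g (p (i + 1)) = (∫⁻ t, f t) * ∫⁻ t, g t := by
  have h1 : ∫⁻ p : Pt, f (p i) * g (p (i + 1))
      = ∫⁻ p : Fin 2 → ℝ, f (p i) * g (p (i + 1)) := by
    rw [← (PiLp.volume_preserving_ofLp (Fin 2)).lintegral_comp]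
    fun_prop
  rw [h1]
  have key : ∀ f g : ℝ → ℝ≥0∞, Measurable f → Measurable g →
      ∫⁻ p : Fin 2 → ℝ, f (p 0) * g (p 1) = (∫⁻ t, f t) * ∫⁻ t, g t := by
    intro f g hf hg
    have h2 := (volume_preserving_piFinTwo (fun _ : Fin 2 => ℝ)).lintegral_comp
      (f := fun q : ℝ × ℝ => f q.1 * g q.2) (by fun_prop)
    simp only [MeasurableEquiv.piFinTwo_apply] at h2
    rw [h2, Measure.volume_eq_prod, lintegral_prod_mul hf.aemeasurable hg.aemeasurable]
  fin_cases i
  · exact key f g hf hg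
  · simp only [Fin.mk_one, Fin.isValue, show (1 + 1 : Fin 2) = 0 from rfl]
    rw [mul_comm, ← key g f hg hf]
    simp_rw [mul_comm]

lemma volume_box (i : Fin 2) (A B : Set ℝ) (hA : MeasurableSet A) (hB : MeasurableSet B) :
    volume {p : Pt | p i ∈ A ∧ p (i + 1) ∈ B} = volume A * volume B := by
  have hm : MeasurableSet {p : Pt | p i ∈ A ∧ p (i + 1) ∈ B} :=
    ((measurable_coord i) hA).inter ((measurable_coord (i + 1)) hB)
  rw [← lintegral_indicator_one hm, ← lintegral_indicator_one hA, ← lintegral_indicator_one hB,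
    ← lintegral_coord_mul i _ _ (measurable_one.indicator hA) (measurable_one.indicator hB)]
  congr 1
  ext p
  by_cases h1 : p i ∈ A <;> by_cases h2 : p (i + 1) ∈ B <;> simp [indicator, h1, h2]

lemma mem_unitSquare_iff (i : Fin 2) (p : Pt) :
    p ∈ unitSquare ↔ p i ∈ Icc (0 : ℝ) 1 ∧ p (i + 1) ∈ Icc (0 : ℝ) 1 := by
  unfold unitSquare
  rw [mem_ofPred_eq, Fin.forall_fin_two]
  fin_cases i
  · rfl
  · exact and_comm

lemma unitSquare_eq (i : Fin 2) :
    unitSquare = {p : Pt | p i ∈ Icc (0 : ℝ) 1 ∧ p (i + 1) ∈ Icc (0 : ℝ) 1} := by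
  ext p; exact mem_unitSquare_iff i p

lemma measurableSet_unitSquare : MeasurableSet unitSquare := by
  rw [unitSquare_eq 0]
  exact ((measurable_coord 0) measurableSet_Icc).inter ((measurable_coord _) measurableSet_Icc)

lemma volume_unitSquare : volume unitSquare = 1 := by
  rw [unitSquare_eq 0, volume_box 0 _ _ measurableSet_Icc measurableSet_Icc]
  simp

instance instProbUnif : IsProbabilityMeasure unifSquare := ⟨by
  rw [unifSquare, Measure.restrict_apply_univ, volume_unitSquare]⟩

lemma unif_apply_of_subset {A : Set Pt} (h : A ⊆ unitSquare) : unifSquare A = volume A := by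
  rw [unifSquare, Measure.restrict_eq_self _ h]

lemma unif_le_volume (A : Set Pt) : unifSquare A ≤ volume A := Measure.restrict_apply_le _ _

/-- lower bound for the uniform measure by an inscribed box -/
lemma unif_box_ge (i : Fin 2) {A : Set Pt} {a b c d : ℝ} (hab : a ≤ b) 
    (ha : 0 ≤ a) (hb : b ≤ 1) (hc : 0 ≤ c) (hd : d ≤ 1)
    (h : ∀ p : Pt, a < p i → p i < b → c < p (i + 1) → p (i + 1) < d → p ∈ A) :
    (b - a) * (d - c) ≤ unifSquare.real A := by
  have h1 : {p : Pt | p i ∈ Ioo a b ∧ p (i + 1) ∈ Ioo c d} ⊆ A := by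
    rintro p ⟨⟨h1, h2⟩, h3, h4⟩
    exact h p h1 h2 h3 h4
  have h2 : {p : Pt | p i ∈ Ioo a b ∧ p (i + 1) ∈ Ioo c d} ⊆ unitSquare := by
    rintro p ⟨⟨h1, h2⟩, h3, h4⟩
    rw [mem_unitSquare_iff i]
    exact ⟨⟨by linarith, by linarith⟩, by linarith, by linarith⟩
  have h3 : unifSquare.real {p : Pt | p i ∈ Ioo a b ∧ p (i + 1) ∈ Ioo c d}
      = (volume (Ioo a b) * volume (Ioo c d)).toReal := by
    rw [measureReal_def, unif_apply_of_subset h2, volume_box i _ _ measurableSet_Ioo measurableSet_Ioo]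
  rw [ENNReal.toReal_mul, Real.volume_Ioo, Real.volume_Ioo, ENNReal.toReal_ofReal (by linarith)] at h3
  calc (b - a) * (d - c) ≤ (b - a) * (ENNReal.ofReal (d - c)).toReal := by
        apply mul_le_mul_of_nonneg_left _ (by linarith)
        rw [ENNReal.toReal_ofReal']; exact le_max_left _ _
    _ = _ := h3.symm
    _ ≤ _ := measureReal_mono h1

lemma unif_line (i : Fin 2) (c : ℝ) : unifSquare {p : Pt | p i = c} = 0 := by
  refine le_antisymm ((unif_le_volume _).trans ?_) zero_le
  have := volume_box i {c} univ (measurableSet_singleton c) MeasurableSet.univ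
  simp only [mem_singleton_iff, mem_univ, and_true] at this
  rw [this]; simp

lemma volume_disc (x : Pt) {r : ℝ} (hr : 0 ≤ r) :
    volume (Metric.closedBall x r) = ENNReal.ofReal (Real.pi * r ^ 2) := by
  rw [EuclideanSpace.volume_closedBall_fin_two, mul_comm, ENNReal.ofReal_mul Real.pi_pos.le,
    ENNReal.ofReal_pow hr]

/-- Open half discs: the points `p` of the disc with `0 < e * (p i - x i)`. -/
def halfDisc (r : ℝ) (i : Fin 2) (e : ℝ) (x : Pt) : Set Pt :=
  {p | ‖p - x‖ ≤ r ∧ 0 < e * (p i - x i)}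

lemma measurableSet_halfDisc (r : ℝ) (i : Fin 2) (e : ℝ) (x : Pt) :
    MeasurableSet (halfDisc r i e x) := by
  have h1 : MeasurableSet {p : Pt | ‖p - x‖ ≤ r} := measurableSet_le (by fun_prop) (by fun_prop)
  have h2 : MeasurableSet {p : Pt | 0 < e * (p i - x i)} :=
    measurableSet_lt (by fun_prop) (by fun_prop)
  exact h1.inter h2

/-- area of the part of the disc inside the square -/
noncomputable def vv (r : ℝ) (x : Pt) : ℝ := unifSquare.real (Metric.closedBall x r)

lemma halfDisc_subset (r : ℝ) (i : Fin 2) (e : ℝ) (x : Pt) :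
    halfDisc r i e x ⊆ Metric.closedBall x r := by
  intro p hp
  rw [Metric.mem_closedBall, dist_eq_norm]; exact hp.1

/-- reflection of coordinate i -/
noncomputable def reflC (i : Fin 2) (c : ℝ) (p : Pt) : Pt :=
  WithLp.toLp 2 (fun j => if j = i then 2 * c - p j else p j)

lemma reflC_same (i : Fin 2) (c : ℝ) (p : Pt) : reflC i c p i = 2 * c - p i := by
  simp [reflC]

lemma fin2_ne (i : Fin 2) : i + 1 ≠ i := by fin_cases i <;> decide

lemma reflC_other (i : Fin 2) (c : ℝ) (p : Pt) : reflC i c p (i + 1) = p (i + 1) := by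
  simp [reflC]

lemma reflC_volume (i : Fin 2) (c : ℝ) : MeasurePreserving (reflC i c) volume volume := by
  have h := volume_preserving_pi (α' := fun _ : Fin 2 => ℝ) (β' := fun _ : Fin 2 => ℝ)
    (f := fun j t => if j = i then 2 * c - t else t) (by
      intro j
      by_cases hj : j = i
      · simpa [hj] using Measure.measurePreserving_sub_left volume (2 * c)
      · simpa [hj] using! MeasurePreserving.id (volume : Measure ℝ))
  exact (PiLp.volume_preserving_toLp (Fin 2)).comp (h.comp (PiLp.volume_preserving_ofLp (Fin 2)))

lemma vv_split (r : ℝ) (i : Fin 2) (x : Pt) :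
    vv r x = unifSquare.real (halfDisc r i 1 x) + unifSquare.real (halfDisc r i (-1) x) := by
  have hd : Disjoint (halfDisc r i 1 x) (halfDisc r i (-1) x) := by
    rw [Set.disjoint_left]
    rintro p ⟨_, h1⟩ ⟨_, h2⟩
    linarith
  rw [← measureReal_union hd (measurableSet_halfDisc _ _ _ _), vv, measureReal_def, measureReal_def]
  congr 1
  apply le_antisymm
  · have : Metric.closedBall x r ⊆
        (halfDisc r i 1 x ∪ halfDisc r i (-1) x) ∪ {p : Pt | p i = x i} := by
      intro p hp
      rw [Metric.mem_closedBall, dist_eq_norm] at hp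
      rcases lt_trichotomy (p i) (x i) with h | h | h
      · exact Or.inl (Or.inr ⟨hp, by linarith⟩)
      · exact Or.inr h
      · exact Or.inl (Or.inl ⟨hp, by linarith⟩)
    refine (measure_mono this).trans ((measure_union_le _ _).trans ?_)
    rw [unif_line, add_zero]
  · exact measure_mono (union_subset (halfDisc_subset _ _ _ _) (halfDisc_subset _ _ _ _))

lemma halfDisc_reflC (r : ℝ) (hr : 0 ≤ r) (i : Fin 2) (x p : Pt) (e : ℝ) :
    reflC i (x i) p ∈ halfDisc r i e x ↔ p ∈ halfDisc r i (-e) x := by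
  simp only [halfDisc, mem_ofPred_eq, norm_le_iff_coord i hr, reflC_same, reflC_other]
  have h1 : (2 * x i - p i - x i) ^ 2 = (p i - x i) ^ 2 := by ring
  have h2 : e * (2 * x i - p i - x i) = -e * (p i - x i) := by ring
  rw [h1, h2]

/-- If coordinate `i` does not leave the square, the two half discs have the same measure. -/
lemma halfDisc_free (r : ℝ) (hr : 0 ≤ r) (i : Fin 2) (x : Pt) (h0 : r ≤ x i) (h1 : x i ≤ 1 - r) :
    unifSquare.real (halfDisc r i 1 x) = unifSquare.real (halfDisc r i (-1) x) := by
  have key : reflC i (x i) ⁻¹' (halfDisc r i 1 x ∩ unitSquare) = halfDisc r i (-1) x ∩ unitSquare := by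
    ext p
    simp only [mem_preimage, mem_inter_iff, halfDisc_reflC r hr, mem_unitSquare_iff i, reflC_same,
      reflC_other, mem_Icc]
    constructor
    · rintro ⟨h2, h3, h4⟩
      have := abs_le.1 ((abs_coord_le_norm i p x).trans h2.1)
      exact ⟨h2, ⟨by linarith, by linarith⟩, h4⟩
    · rintro ⟨h2, h3, h4⟩
      have := abs_le.1 ((abs_coord_le_norm i p x).trans h2.1)
      exact ⟨h2, ⟨by linarith, by linarith⟩, h4⟩
  have hm := (reflC_volume i (x i)).measure_preimage
    ((measurableSet_halfDisc r i 1 x).inter measurableSet_unitSquare).nullMeasurableSet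
  rw [key] at hm
  rw [measureReal_def, measureReal_def, unifSquare,
    Measure.restrict_apply (measurableSet_halfDisc r i 1 x),
    Measure.restrict_apply (measurableSet_halfDisc r i (-1) x), hm]

lemma volume_halfDisc (r : ℝ) (hr : 0 ≤ r) (i : Fin 2) (x : Pt) (e : ℝ) (he : e = 1 ∨ e = -1) :
    volume.real (halfDisc r i e x) = Real.pi * r ^ 2 / 2 := by
  have key : reflC i (x i) ⁻¹' (halfDisc r i 1 x) = halfDisc r i (-1) x := by
    ext p; exact halfDisc_reflC r hr i x p 1
  have hm := (reflC_volume i (x i)).measure_preimage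
    (measurableSet_halfDisc r i 1 x).nullMeasurableSet
  rw [key] at hm
  have hfin : volume (Metric.closedBall x r) ≠ ∞ := measure_closedBall_lt_top.ne
  have hd : Disjoint (halfDisc r i 1 x) (halfDisc r i (-1) x) := by
    rw [Set.disjoint_left]
    rintro p ⟨_, h1⟩ ⟨_, h2⟩
    linarith
  have hU : volume (halfDisc r i 1 x ∪ halfDisc r i (-1) x) = volume (Metric.closedBall x r) := by
    apply le_antisymm
    · exact measure_mono (union_subset (halfDisc_subset _ _ _ _) (halfDisc_subset _ _ _ _))
    · have : Metric.closedBall x r ⊆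
        (halfDisc r i 1 x ∪ halfDisc r i (-1) x) ∪ {p : Pt | p i = x i} := by
        intro p hp
        rw [Metric.mem_closedBall, dist_eq_norm] at hp
        rcases lt_trichotomy (p i) (x i) with h | h | h
        · exact Or.inl (Or.inr ⟨hp, by linarith⟩)
        · exact Or.inr h
        · exact Or.inl (Or.inl ⟨hp, by linarith⟩)
      refine (measure_mono this).trans ((measure_union_le _ _).trans ?_)
      have h3 := volume_box i {x i} univ (measurableSet_singleton _) MeasurableSet.univ
      simp only [mem_singleton_iff, mem_univ, and_true] at h3
      rw [h3]; simp
  rw [measure_union hd (measurableSet_halfDisc _ _ _ _), hm, volume_disc x hr] at hU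
  have h4 : (volume (halfDisc r i 1 x)).toReal + (volume (halfDisc r i 1 x)).toReal
      = Real.pi * r ^ 2 := by
    rw [← ENNReal.toReal_add, hU, ENNReal.toReal_ofReal (by positivity)]
    · exact ne_top_of_le_ne_top hfin (measure_mono (halfDisc_subset _ _ _ _))
    · exact ne_top_of_le_ne_top hfin (measure_mono (halfDisc_subset _ _ _ _))
  rcases he with rfl | rfl
  · rw [measureReal_def]; linarith
  · rw [measureReal_def, hm]; linarith

lemma unif_halfDisc_le (r : ℝ) (hr : 0 ≤ r) (i : Fin 2) (x : Pt) (e : ℝ) (he : e = 1 ∨ e = -1) :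
    unifSquare.real (halfDisc r i e x) ≤ Real.pi * r ^ 2 / 2 := by
  rw [← volume_halfDisc r hr i x e he, measureReal_def, measureReal_def]
  apply ENNReal.toReal_mono _ (unif_le_volume _)
  exact ne_top_of_le_ne_top measure_closedBall_lt_top.ne (measure_mono (halfDisc_subset r i e x))

lemma unif_halfDisc_eq (r : ℝ) (hr : 0 ≤ r) (i : Fin 2) (x : Pt) (e : ℝ) (he : e = 1 ∨ e = -1)
    (hs : halfDisc r i e x ⊆ unitSquare) :
    unifSquare.real (halfDisc r i e x) = Real.pi * r ^ 2 / 2 := by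
  rw [← volume_halfDisc r hr i x e he, measureReal_def, measureReal_def, unif_apply_of_subset hs]

lemma vv_le (r : ℝ) (hr : 0 ≤ r) (x : Pt) : vv r x ≤ Real.pi * r ^ 2 := by
  rw [vv_split r 0]
  linarith [unif_halfDisc_le r hr 0 x 1 (Or.inl rfl), unif_halfDisc_le r hr 0 x (-1) (Or.inr rfl)]

lemma vv_nonneg (r : ℝ) (x : Pt) : 0 ≤ vv r x := measureReal_nonneg


/-! ### Area lower bounds -/

lemma add_one_add_one (i : Fin 2) : i + 1 + 1 = i := by fin_cases i <;> rfl

lemma closedBall_subset_unitSquare {r : ℝ} {x : Pt} (h : ∀ i, r ≤ x i ∧ x i ≤ 1 - r) :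
    Metric.closedBall x r ⊆ unitSquare := by
  intro p hp i
  rw [Metric.mem_closedBall, dist_eq_norm] at hp
  have := abs_le.1 ((abs_coord_le_norm i p x).trans hp)
  have := h i
  constructor <;> linarith

lemma vv_interior {r : ℝ} (hr : 0 ≤ r) {x : Pt} (h : ∀ i, r ≤ x i ∧ x i ≤ 1 - r) :
    vv r x = Real.pi * r ^ 2 := by
  rw [vv, measureReal_def, unif_apply_of_subset (closedBall_subset_unitSquare h), volume_disc x hr,
    ENNReal.toReal_ofReal (by positivity)]

lemma halfDisc_ge {r : ℝ} (hr : 0 ≤ r) (hr1 : r ≤ 1) (i : Fin 2) (e : ℝ) (he : e = 1 ∨ e = -1)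
    {x : Pt} (hx : x ∈ unitSquare) (h0 : 0 ≤ x i + e * (r / 2)) (h1 : x i + e * (r / 2) ≤ 1) :
    r ^ 2 / 4 ≤ unifSquare.real (halfDisc r i e x) := by
  rw [mem_unitSquare_iff i] at hx
  obtain ⟨⟨hx1, hx2⟩, hx3, hx4⟩ := hx
  have main : ∀ p : Pt, |p i - x i| ≤ r / 2 → |p (i + 1) - x (i + 1)| ≤ r / 2 →
      ‖p - x‖ ≤ r := by
    intro p h2 h3
    rw [norm_le_iff_coord i hr]
    have := sq_le_sq' (abs_le.1 h2).1 (abs_le.1 h2).2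
    have := sq_le_sq' (abs_le.1 h3).1 (abs_le.1 h3).2
    nlinarith
  have hother : ∃ c d : ℝ, 0 ≤ c ∧ d ≤ 1 ∧ d - c = r / 2 ∧ x (i + 1) - r / 2 ≤ c ∧
      d ≤ x (i + 1) + r / 2 := by
    rcases le_total (x (i + 1)) (1 / 2) with h | h
    · exact ⟨x (i + 1), x (i + 1) + r / 2, by linarith, by linarith, by ring, by linarith, le_rfl⟩
    · exact ⟨x (i + 1) - r / 2, x (i + 1), by linarith, by linarith, by ring, by linarith,
        by linarith⟩
  obtain ⟨c, d, hc, hd, hcd, hc', hd'⟩ := hother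
  rcases he with rfl | rfl
  · have := unif_box_ge i (A := halfDisc r i 1 x) (a := x i) (b := x i + r / 2) (c := c) (d := d)
      (by linarith) hx1 (by linarith) hc hd (by
        intro p p1 p2 p3 p4
        refine ⟨main p ?_ ?_, by linarith⟩ <;> rw [abs_le] <;> constructor <;> linarith)
    rw [hcd] at this
    nlinarith
  · have := unif_box_ge i (A := halfDisc r i (-1) x) (a := x i - r / 2) (b := x i) (c := c) (d := d)
      (by linarith) (by linarith) (by linarith) hc hd (by
        intro p p1 p2 p3 p4
        refine ⟨main p ?_ ?_, by linarith⟩ <;> rw [abs_le] <;> constructor <;> linarith)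
    rw [hcd] at this
    nlinarith

lemma exists_dir (r : ℝ) (hr : 0 ≤ r) (hr1 : r ≤ 1) (t : ℝ) (h0 : 0 ≤ t) (h1 : t ≤ 1) :
    ∃ e : ℝ, (e = 1 ∨ e = -1) ∧ 0 ≤ t + e * (r / 2) ∧ t + e * (r / 2) ≤ 1 := by
  rcases le_total t (1 / 2) with h | h
  · exact ⟨1, Or.inl rfl, by linarith, by linarith⟩
  · exact ⟨-1, Or.inr rfl, by linarith, by linarith⟩

lemma halfDisc_le_vv (r : ℝ) (i : Fin 2) (e : ℝ) (x : Pt) :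
    unifSquare.real (halfDisc r i e x) ≤ vv r x := measureReal_mono (halfDisc_subset r i e x)

lemma vv_corner {r : ℝ} (hr : 0 ≤ r) (hr1 : r ≤ 1) {x : Pt} (hx : x ∈ unitSquare) :
    r ^ 2 / 4 ≤ vv r x := by
  obtain ⟨e, he, h0, h1⟩ := exists_dir r hr hr1 (x 0) (hx 0).1 (hx 0).2
  exact (halfDisc_ge hr hr1 0 e he hx h0 h1).trans (halfDisc_le_vv _ _ _ _)

lemma halfDisc_subset_unitSquare {r : ℝ} (i : Fin 2) (e : ℝ) (he : e = 1 ∨ e = -1) {x : Pt}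
    (hx : x ∈ unitSquare) (hv : r ≤ x (i + 1) ∧ x (i + 1) ≤ 1 - r)
    (h0 : 0 ≤ x i + e * r) (h1 : x i + e * r ≤ 1) :
    halfDisc r i e x ⊆ unitSquare := by
  rintro p ⟨hp, hp2⟩
  rw [mem_unitSquare_iff i] at hx ⊢
  obtain ⟨⟨hx1, hx2⟩, hx3, hx4⟩ := hx
  have q1 := abs_le.1 ((abs_coord_le_norm i p x).trans hp)
  have q2 := abs_le.1 ((abs_coord_le_norm (i + 1) p x).trans hp)
  rcases he with rfl | rfl
  · exact ⟨⟨by linarith, by linarith⟩, by linarith, by linarith⟩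
  · exact ⟨⟨by linarith, by linarith⟩, by linarith, by linarith⟩

lemma vv_side_left {r : ℝ} (hr : 0 ≤ r) (hr1 : r ≤ 1 / 2) (i : Fin 2) {x : Pt}
    (hx : x ∈ unitSquare) (hv : r ≤ x (i + 1) ∧ x (i + 1) ≤ 1 - r) (ht : x i ≤ r) :
    Real.pi * r ^ 2 / 2 + r * x i / 2 ≤ vv r x := by
  have hx' := hx
  rw [mem_unitSquare_iff i] at hx'
  obtain ⟨⟨hx1, hx2⟩, hx3, hx4⟩ := hx'
  rw [vv_split r i, unif_halfDisc_eq r hr i x 1 (Or.inl rfl)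
    (halfDisc_subset_unitSquare i 1 (Or.inl rfl) hx hv (by linarith) (by linarith))]
  have := unif_box_ge i (A := halfDisc r i (-1) x) (a := x i / 2) (b := x i)
      (c := x (i + 1) - r / 2) (d := x (i + 1) + r / 2)
      (by linarith) (by linarith) (by linarith) (by linarith) (by linarith) (by
        intro p p1 p2 p3 p4
        refine ⟨?_, by linarith⟩
        rw [norm_le_iff_coord i hr]
        nlinarith)
  nlinarith

lemma vv_side_right {r : ℝ} (hr : 0 ≤ r) (hr1 : r ≤ 1 / 2) (i : Fin 2) {x : Pt}
    (hx : x ∈ unitSquare) (hv : r ≤ x (i + 1) ∧ x (i + 1) ≤ 1 - r) (ht : 1 - x i ≤ r) :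
    Real.pi * r ^ 2 / 2 + r * (1 - x i) / 2 ≤ vv r x := by
  have hx' := hx
  rw [mem_unitSquare_iff i] at hx'
  obtain ⟨⟨hx1, hx2⟩, hx3, hx4⟩ := hx'
  rw [vv_split r i, unif_halfDisc_eq r hr i x (-1) (Or.inr rfl)
    (halfDisc_subset_unitSquare i (-1) (Or.inr rfl) hx hv (by linarith) (by linarith))]
  have := unif_box_ge i (A := halfDisc r i 1 x) (a := x i) (b := x i + (1 - x i) / 2)
      (c := x (i + 1) - r / 2) (d := x (i + 1) + r / 2)
      (by linarith) (by linarith) (by linarith) (by linarith) (by linarith) (by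
        intro p p1 p2 p3 p4
        refine ⟨?_, by linarith⟩
        rw [norm_le_iff_coord i hr]
        nlinarith)
  nlinarith

/-- the box beyond the extreme point `z` -/
def zBox (r : ℝ) (i : Fin 2) (e : ℝ) (x y z : Pt) : Set Pt :=
  {p | x i < p i ∧ p i < y i ∧ |p i - z i| ≤ r / 2 ∧ 0 < e * (p (i + 1) - z (i + 1)) ∧
    e * (p (i + 1) - z (i + 1)) ≤ r / 2}

/-- the region which must be empty around a component with extreme points `x`, `y`, `z` -/
def URegion (r : ℝ) (i : Fin 2) (e : ℝ) (x y z : Pt) : Set Pt :=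
  (halfDisc r i (-1) x ∪ halfDisc r i 1 y) ∪ zBox r i e x y z

lemma measurableSet_zBox (r : ℝ) (i : Fin 2) (e : ℝ) (x y z : Pt) :
    MeasurableSet (zBox r i e x y z) := by
  have h1 : MeasurableSet {p : Pt | x i < p i} := measurableSet_lt (by fun_prop) (by fun_prop)
  have h2 : MeasurableSet {p : Pt | p i < y i} := measurableSet_lt (by fun_prop) (by fun_prop)
  have h3 : MeasurableSet {p : Pt | |p i - z i| ≤ r / 2} :=
    measurableSet_le (by fun_prop) (by fun_prop)
  have h4 : MeasurableSet {p : Pt | 0 < e * (p (i + 1) - z (i + 1))} :=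
    measurableSet_lt (by fun_prop) (by fun_prop)
  have h5 : MeasurableSet {p : Pt | e * (p (i + 1) - z (i + 1)) ≤ r / 2} :=
    measurableSet_le (by fun_prop) (by fun_prop)
  exact h1.inter (h2.inter (h3.inter (h4.inter h5)))

lemma zBox_ge {r : ℝ} (hr : 0 ≤ r) (i : Fin 2) (e : ℝ) (he : e = 1 ∨ e = -1) {x y z : Pt}
    (hx : x ∈ unitSquare) (hy : y ∈ unitSquare) (hz : z ∈ unitSquare)
    (hxz : x i ≤ z i) (hzy : z i ≤ y i)
    (h0 : 0 ≤ z (i + 1) + e * (r / 2)) (h1 : z (i + 1) + e * (r / 2) ≤ 1) :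
    min (y i - x i) (r / 2) * (r / 2) ≤ unifSquare.real (zBox r i e x y z) := by
  rw [mem_unitSquare_iff i] at hx hy hz
  obtain ⟨⟨hx1, hx2⟩, hx3, hx4⟩ := hx
  obtain ⟨⟨hy1, hy2⟩, hy3, hy4⟩ := hy
  obtain ⟨⟨hz1, hz2⟩, hz3, hz4⟩ := hz
  have hH : ∃ a b : ℝ, a ≤ b ∧ min (y i - x i) (r / 2) ≤ b - a ∧ x i ≤ a ∧ b ≤ y i ∧
      z i - r / 2 ≤ a ∧ b ≤ z i + r / 2 := by
    refine ⟨max (x i) (z i - r / 2), min (y i) (z i + r / 2), ?_, ?_, le_max_left _ _,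
      min_le_left _ _, le_max_right _ _, min_le_right _ _⟩
    · apply max_le <;> apply le_min <;> linarith
    · rcases max_cases (x i) (z i - r / 2) with ⟨h, h'⟩ | ⟨h, h'⟩ <;>
      rcases min_cases (y i) (z i + r / 2) with ⟨k, k'⟩ | ⟨k, k'⟩ <;> rw [h, k]
      · exact min_le_left _ _
      · exact (min_le_right _ _).trans (by linarith)
      · exact (min_le_right _ _).trans (by linarith)
      · exact (min_le_right _ _).trans (by linarith)
  obtain ⟨a, b, hab, hmin, ha, hb, ha', hb'⟩ := hH
  have hfin : ∀ c d : ℝ, 0 ≤ c → d ≤ 1 → d - c = r / 2 →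
      (∀ t, c < t → t < d → 0 < e * (t - z (i + 1)) ∧ e * (t - z (i + 1)) ≤ r / 2) →
      min (y i - x i) (r / 2) * (r / 2) ≤ unifSquare.real (zBox r i e x y z) := by
    intro c d hc hd hcd ht
    have := unif_box_ge i (A := zBox r i e x y z) (a := a) (b := b) (c := c) (d := d)
      hab (by linarith) (by linarith) hc hd (by
        intro p p1 p2 p3 p4
        refine ⟨by linarith, by linarith, ?_, ht _ p3 p4⟩
        rw [abs_le]; constructor <;> linarith)
    rw [hcd] at this
    exact (mul_le_mul_of_nonneg_right hmin (by linarith)).trans this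
  rcases he with rfl | rfl
  · exact hfin (z (i + 1)) (z (i + 1) + r / 2) hz3 (by linarith) (by ring)
      (fun t h2 h3 => ⟨by linarith, by linarith⟩)
  · exact hfin (z (i + 1) - r / 2) (z (i + 1)) (by linarith) hz4 (by ring)
      (fun t h2 h3 => ⟨by linarith, by linarith⟩)

lemma URegion_ge {r : ℝ} (hr : 0 ≤ r) (i : Fin 2) (e : ℝ) (he : e = 1 ∨ e = -1)
    {x y z : Pt} (hx : x ∈ unitSquare) (hy : y ∈ unitSquare) (hz : z ∈ unitSquare)
    (hxz : x i ≤ z i) (hzy : z i ≤ y i)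
    (h0 : 0 ≤ z (i + 1) + e * (r / 2)) (h1 : z (i + 1) + e * (r / 2) ≤ 1)
    (hxy : y i - x i ≤ 1 - 2 * r)
    (hfree : ∃ j, (r ≤ x j ∧ x j ≤ 1 - r) ∧ (r ≤ y j ∧ y j ≤ 1 - r)) :
    min (vv r x) (vv r y) + min (y i - x i) (r / 2) * (r / 2)
      ≤ unifSquare.real (URegion r i e x y z) := by
  have hd2 : Disjoint (halfDisc r i (-1) x ∪ halfDisc r i 1 y) (zBox r i e x y z) := by
    rw [Set.disjoint_left]
    rintro p (⟨_, h1⟩ | ⟨_, h1⟩) ⟨h2, h3, _⟩ <;> linarith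
  have hd1 : Disjoint (halfDisc r i (-1) x) (halfDisc r i 1 y) := by
    rw [Set.disjoint_left]
    rintro p ⟨_, h1⟩ ⟨_, h2⟩
    linarith
  rw [URegion, measureReal_union hd2 (measurableSet_zBox _ _ _ _ _ _),
    measureReal_union hd1 (measurableSet_halfDisc _ _ _ _)]
  have hz := zBox_ge hr i e he hx hy hz hxz hzy h0 h1
  suffices h : min (vv r x) (vv r y) ≤ unifSquare.real (halfDisc r i (-1) x) +
      unifSquare.real (halfDisc r i 1 y) by linarith
  obtain ⟨j, hj1, hj2⟩ := hfree
  have hj : j = i ∨ j = i + 1 := by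
    fin_cases i <;> fin_cases j <;> simp
  rcases hj with rfl | rfl
  · have e1 := halfDisc_free r hr j x hj1.1 hj1.2
    have e2 := halfDisc_free r hr j y hj2.1 hj2.2
    have e3 := vv_split r j x
    have e4 := vv_split r j y
    rcases le_total (vv r x) (vv r y) with h | h
    · rw [min_eq_left h]; linarith
    · rw [min_eq_right h]; linarith
  · have e3 := vv_split r i x
    have e4 := vv_split r i y
    obtain ⟨⟨q1, q2⟩, -⟩ := (mem_unitSquare_iff i x).1 hx
    obtain ⟨⟨q3, q4⟩, -⟩ := (mem_unitSquare_iff i y).1 hy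
    by_cases hc : y i ≤ 1 - r
    · refine (min_le_left _ _).trans ?_
      rw [unif_halfDisc_eq r hr i y 1 (Or.inl rfl)
        (halfDisc_subset_unitSquare i 1 (Or.inl rfl) hy hj2 (by linarith) (by linarith))]
      linarith [unif_halfDisc_le r hr i x 1 (Or.inl rfl)]
    · refine (min_le_right _ _).trans ?_
      rw [unif_halfDisc_eq r hr i x (-1) (Or.inr rfl)
        (halfDisc_subset_unitSquare i (-1) (Or.inr rfl) hx hj1 (by linarith) (by linarith))]
      linarith [unif_halfDisc_le r hr i y (-1) (Or.inr rfl)]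


/-! ### Sampling lemmas -/

/-- the law of `n` independent uniform points -/
noncomputable abbrev PP (n : ℕ) : Measure (Fin n → Pt) := Measure.pi fun _ : Fin n => unifSquare

lemma prob_tuple {k n : ℕ} (f : Fin k ↪ Fin n) (S : Set (Fin k → Pt)) (hS : MeasurableSet S)
    (R : (Fin k → Pt) → Set Pt) (hR : MeasurableSet {q : (Fin k → Pt) × Pt | q.2 ∈ R q.1}) :
    PP n {x | (x ∘ f) ∈ S ∧ ∀ j, j ∉ range f → x j ∉ R (x ∘ f)}
      = ∫⁻ y in S, (unifSquare (R y)ᶜ) ^ (n - k) ∂(PP k) := by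
  classical
  letI : Fintype {j // j ∈ range f} := Subtype.fintype fun j => j ∈ range f
  let e := MeasurableEquiv.piEquivPiSubtypeProd (fun _ : Fin n => Pt) (fun j => j ∈ range f)
  have he : MeasurePreserving e (PP n) _ :=
    measurePreserving_piEquivPiSubtypeProd (fun _ : Fin n => unifSquare) (fun j => j ∈ range f)
  let g : Fin k ≃ {j // j ∈ range f} := Equiv.ofInjective f f.injective
  have hg := measurePreserving_piCongrLeft (fun _ : {j // j ∈ range f} => unifSquare) g
  let c := MeasurableEquiv.piCongrLeft (fun _ : {j // j ∈ range f} => Pt) g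
  have hc : MeasurePreserving c.symm (Measure.pi fun _ : {j // j ∈ range f} => unifSquare) (PP k) :=
    MeasurePreserving.symm c hg
  have hcomb : MeasurePreserving
      (Prod.map c.symm (id : ({j // j ∉ range f} → Pt) → _) ∘ e) (PP n)
      ((PP k).prod (Measure.pi fun _ : {j // j ∉ range f} => unifSquare)) := by
    have h2 := hc.prod (MeasurePreserving.id (Measure.pi fun _ : {j // j ∉ range f} => unifSquare))
    exact h2.comp he
  let B : Set ((Fin k → Pt) × ({j // j ∉ range f} → Pt)) :=
    {q | q.1 ∈ S ∧ ∀ j, q.2 j ∉ R q.1}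
  have hB : MeasurableSet B := by
    have h1 : MeasurableSet {q : (Fin k → Pt) × ({j // j ∉ range f} → Pt) | q.1 ∈ S} :=
      measurable_fst hS
    have h2 : MeasurableSet {q : (Fin k → Pt) × ({j // j ∉ range f} → Pt) | ∀ j, q.2 j ∉ R q.1} := by
      have : {q : (Fin k → Pt) × ({j // j ∉ range f} → Pt) | ∀ j, q.2 j ∉ R q.1}
          = ⋂ j, (fun q : (Fin k → Pt) × ({j // j ∉ range f} → Pt) => (q.1, q.2 j)) ⁻¹'
            {q : (Fin k → Pt) × Pt | q.2 ∈ R q.1}ᶜ := by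
        ext q; simp
      rw [this]
      exact MeasurableSet.iInter fun j => (by fun_prop : Measurable
        (fun q : (Fin k → Pt) × ({j // j ∉ range f} → Pt) => (q.1, q.2 j))) hR.compl
    exact h1.inter h2
  have hpre : {x : Fin n → Pt | (x ∘ f) ∈ S ∧ ∀ j, j ∉ range f → x j ∉ R (x ∘ f)}
      = (Prod.map c.symm (id : ({j // j ∉ range f} → Pt) → _) ∘ e) ⁻¹' B := by
    ext x
    have h1 : c.symm (e x).1 = x ∘ f := by
      funext a
      rfl
    simp only [mem_ofPred_eq, mem_preimage, Function.comp_apply, Prod.map, B, h1]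
    constructor
    · rintro ⟨h2, h3⟩
      exact ⟨h2, fun j => h3 j.1 j.2⟩
    · rintro ⟨h2, h3⟩
      exact ⟨h2, fun j hj => h3 ⟨j, hj⟩⟩
  rw [hpre, hcomb.measure_preimage hB.nullMeasurableSet, Measure.prod_apply hB,
    ← lintegral_indicator hS]
  congr 1
  ext y
  by_cases hy : y ∈ S
  · rw [indicator_of_mem hy]
    have : Prod.mk y ⁻¹' B = Set.pi univ fun _ : {j // j ∉ range f} => (R y)ᶜ := by
      ext z
      simp [B, hy]
    rw [this, Measure.pi_pi, Finset.prod_const, Finset.card_univ]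
    congr 1
    rw [Fintype.card_subtype_compl, Fintype.card_fin]
    congr 1
    rw [← Fintype.card_congr g, Fintype.card_fin]
  · rw [indicator_of_notMem hy]
    have : Prod.mk y ⁻¹' B = ∅ := by
      ext z
      simp [B, hy]
    rw [this, measure_empty]

lemma unif_compl_pow_le (R : Set Pt) (hR : MeasurableSet R) (m : ℕ) :
    (unifSquare Rᶜ) ^ m ≤ ENNReal.ofReal (Real.exp (-(m * unifSquare.real R))) := by
  have h1 : unifSquare Rᶜ ≤ ENNReal.ofReal (Real.exp (-(unifSquare.real R))) := by
    rw [← ofReal_measureReal, probReal_compl_eq_one_sub hR]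
    exact ENNReal.ofReal_le_ofReal (Real.one_sub_le_exp_neg _)
  calc (unifSquare Rᶜ) ^ m ≤ (ENNReal.ofReal (Real.exp (-(unifSquare.real R)))) ^ m := by gcongr
    _ = _ := by
      rw [← ENNReal.ofReal_pow (Real.exp_pos _).le, ← Real.exp_nat_mul]
      congr 2; ring

/-- union bound over tuples of distinct indices -/
lemma prob_tuple_union_le {k n : ℕ} (S : Set (Fin k → Pt)) (hS : MeasurableSet S)
    (R : (Fin k → Pt) → Set Pt) (hR : MeasurableSet {q : (Fin k → Pt) × Pt | q.2 ∈ R q.1}) :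
    PP n {x | ∃ f : Fin k ↪ Fin n, (x ∘ f) ∈ S ∧ ∀ j, j ∉ range f → x j ∉ R (x ∘ f)}
      ≤ (n : ℝ≥0∞) ^ k *
        ∫⁻ y in S, ENNReal.ofReal (Real.exp (-((n - k : ℕ) * unifSquare.real (R y)))) ∂(PP k) := by
  classical
  have h0 : {x : Fin n → Pt | ∃ f : Fin k ↪ Fin n, (x ∘ f) ∈ S ∧ ∀ j, j ∉ range f → x j ∉ R (x ∘ f)}
      = ⋃ f : Fin k ↪ Fin n, {x | (x ∘ f) ∈ S ∧ ∀ j, j ∉ range f → x j ∉ R (x ∘ f)} := by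
    ext x; simp
  rw [h0]
  refine (measure_iUnion_fintype_le _ _).trans ?_
  have h1 : ∀ f : Fin k ↪ Fin n,
      PP n {x | (x ∘ f) ∈ S ∧ ∀ j, j ∉ range f → x j ∉ R (x ∘ f)} ≤
      ∫⁻ y in S, ENNReal.ofReal (Real.exp (-((n - k : ℕ) * unifSquare.real (R y)))) ∂(PP k) := by
    intro f
    rw [prob_tuple f S hS R hR]
    refine lintegral_mono fun y => ?_
    exact unif_compl_pow_le _ (measurable_prodMk_left hR) _
  refine (Finset.sum_le_sum fun f _ => h1 f).trans ?_
  rw [Finset.sum_const, nsmul_eq_mul, Finset.card_univ, Fintype.card_embedding_eq]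
  gcongr
  rw [Fintype.card_fin, Fintype.card_fin]
  calc ((n.descFactorial k : ℕ) : ℝ≥0∞) ≤ ((n ^ k : ℕ) : ℝ≥0∞) := by
        exact_mod_cast Nat.descFactorial_le_pow n k
    _ = _ := by push_cast; rfl

/-- integrate out coordinate `i` -/
lemma lintegral_PP_succ {k : ℕ} (i : Fin (k + 1)) (F : (Fin (k + 1) → Pt) → ℝ≥0∞)
    (hF : Measurable F) :
    ∫⁻ x, F x ∂(PP (k + 1)) =
      ∫⁻ y, ∫⁻ a, F (i.insertNth a y) ∂unifSquare ∂(PP k) := by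
  have h := (measurePreserving_piFinSuccAbove (fun _ : Fin (k + 1) => unifSquare) i).symm
  rw [← h.lintegral_comp hF, lintegral_prod_symm]
  · rfl
  · exact (hF.comp (MeasurableEquiv.measurable _)).aemeasurable

lemma lintegral_PP_zero (F : (Fin 0 → Pt) → ℝ≥0∞) :
    ∫⁻ x, F x ∂(PP 0) = F Fin.elim0 := by
  rw [PP, Measure.pi_of_empty (fun _ : Fin 0 => unifSquare) Fin.elim0, lintegral_dirac]

lemma lintegral_PP_one (F : (Fin 1 → Pt) → ℝ≥0∞) (hF : Measurable F) :
    ∫⁻ x, F x ∂(PP 1) = ∫⁻ a, F ![a] ∂unifSquare := by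
  rw [lintegral_PP_succ 0 F hF, lintegral_PP_zero]
  congr 1; ext a; congr 1; ext j
  fin_cases j; rfl

lemma ae_PP_mem {k : ℕ} : ∀ᵐ x ∂(PP k), ∀ i, x i ∈ unitSquare := by
  rw [ae_all_iff]
  intro i
  have h : ∀ᵐ p ∂unifSquare, p ∈ unitSquare := ae_restrict_mem measurableSet_unitSquare
  exact (measurePreserving_eval (fun _ : Fin k => unifSquare) i).quasiMeasurePreserving.ae h


/-! ### The backbone: deterministic argument on tiles -/

/-- the set of empty tiles in the window around `(a, b)` -/
def EmptyTile {V : Type*} (X Y : V → ℤ) (M : ℤ) (a b : ℤ) (t : ℤ × ℤ) : Prop :=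
  (a - 600 ≤ t.1 ∧ t.1 ≤ a + 600) ∧ (b - 600 ≤ t.2 ∧ t.2 ≤ b + 600) ∧
    (0 ≤ t.1 ∧ t.1 < M) ∧ (0 ≤ t.2 ∧ t.2 < M) ∧ ∀ v, ¬ (X v = t.1 ∧ Y v = t.2)

structure TileHyp {V : Type*} (G : SimpleGraph V) (X Y : V → ℤ) (M : ℤ) : Prop where
  hM : 1300 ≤ M
  hX : ∀ v, 0 ≤ X v ∧ X v < M
  hY : ∀ v, 0 ≤ Y v ∧ Y v < M
  near : ∀ u v, |X u - X v| + |Y u - Y v| ≤ 1 → G.Reachable u v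
  step : ∀ u v, G.Adj u v → |X u - X v| ≤ 4 ∧ |Y u - Y v| ≤ 4
  win : ∀ a b, 0 ≤ a → a < M → 0 ≤ b → b < M →
    ∀ S : Finset (ℤ × ℤ), (∀ t ∈ S, EmptyTile X Y M a b t) → S.card < 128

def FullCol {V : Type*} (X Y : V → ℤ) (M : ℤ) (b i : ℤ) : Prop :=
  ∀ j, b - 600 ≤ j → j ≤ b + 600 → 0 ≤ i → i < M → 0 ≤ j → j < M → ∃ v, X v = i ∧ Y v = j

namespace TileHyp

variable {V : Type*} {G : SimpleGraph V} {X Y : V → ℤ} {M : ℤ}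

lemma symm (H : TileHyp G X Y M) : TileHyp G Y X M where
  hM := H.hM
  hX := H.hY
  hY := H.hX
  near u v h := H.near u v (by rw [add_comm]; exact h)
  step u v h := (H.step u v h).symm
  win a b ha ha' hb hb' S hS := by
    have := H.win b a hb hb' ha ha' (S.map ⟨Prod.swap, Prod.swap_injective⟩) (by
      intro t ht
      rw [Finset.mem_map] at ht
      obtain ⟨s, hs, rfl⟩ := ht
      obtain ⟨h1, h2, h3, h4, h5⟩ := hS s hs
      exact ⟨h2, h1, h4, h3, fun v hv => h5 v ⟨hv.2, hv.1⟩⟩)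
    simpa using this

/-- fewer than 128 columns are not full -/
lemma nonfull (H : TileHyp G X Y M) {a b : ℤ} (ha : 0 ≤ a) (ha' : a < M) (hb : 0 ≤ b) (hb' : b < M)
    (C : Finset ℤ) (hC : ∀ i ∈ C, a - 600 ≤ i ∧ i ≤ a + 600) (hc : 128 ≤ C.card) :
    ∃ i ∈ C, FullCol X Y M b i := by
  by_contra hcon
  push Not at hcon
  have h1 : ∀ i ∈ C, ∃ j, EmptyTile X Y M a b (i, j) := by
    intro i hi
    have := hcon i hi
    unfold FullCol at this
    push Not at this
    obtain ⟨j, h1, h2, h3, h4, h5, h6, h7⟩ := this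
    exact ⟨j, hC i hi, ⟨h1, h2⟩, ⟨h3, h4⟩, ⟨h5, h6⟩, fun v hv => h7 v hv.1 hv.2⟩
  choose! f hf using h1
  have h2 := H.win a b ha ha' hb hb' (C.image fun i => (i, f i)) (by
    intro t ht
    rw [Finset.mem_image] at ht
    obtain ⟨i, hi, rfl⟩ := ht
    exact hf i hi)
  rw [Finset.card_image_of_injective _ (fun i j h => (Prod.ext_iff.1 h).1)] at h2
  omega

lemma exists_common (H : TileHyp G X Y M) {a b : ℤ} (ha : 0 ≤ a) (ha' : a < M) (hb : 0 ≤ b)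
    (hb' : b < M) :
    ∃ i, 0 ≤ i ∧ i < M ∧ a + 1 - 600 ≤ i ∧ i ≤ a + 600 ∧ FullCol X Y M b i := by
  have hM := H.hM
  by_cases h : a + 600 < M
  · obtain ⟨i, hi, hf⟩ := H.nonfull ha ha' hb hb' (Finset.Icc (a + 1) (a + 600))
      (by intro i hi; rw [Finset.mem_Icc] at hi; omega) (by rw [Int.card_Icc]; omega)
    rw [Finset.mem_Icc] at hi
    exact ⟨i, by omega, by omega, by omega, by omega, hf⟩
  · obtain ⟨i, hi, hf⟩ := H.nonfull ha ha' hb hb' (Finset.Icc (a + 1 - 600) a)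
      (by intro i hi; rw [Finset.mem_Icc] at hi; omega) (by rw [Int.card_Icc]; omega)
    rw [Finset.mem_Icc] at hi
    exact ⟨i, by omega, by omega, by omega, by omega, hf⟩

lemma exists_strip (H : TileHyp G X Y M) {a b : ℤ} (ha : 0 ≤ a) (ha' : a < M) (hb : 0 ≤ b)
    (hb' : b < M) (s : ℤ) (hs : s = 1 ∨ s = -1) :
    ∃ k : ℤ, 0 ≤ k ∧ k < 128 ∧ ∀ t, 0 ≤ t → t < 4 → FullCol X Y M b (a + s * (1 + 4 * k + t)) := by
  by_contra hcon
  push Not at hcon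
  have h1 : ∀ k ∈ Finset.Ico (0 : ℤ) 128, ∃ t, 0 ≤ t ∧ t < 4 ∧
      ¬ FullCol X Y M b (a + s * (1 + 4 * k + t)) := by
    intro k hk
    rw [Finset.mem_Ico] at hk
    exact hcon k hk.1 hk.2
  choose! f hf using h1
  obtain ⟨i, hi, hfull⟩ := H.nonfull ha ha' hb hb'
    ((Finset.Ico (0 : ℤ) 128).image fun k => a + s * (1 + 4 * k + f k)) (by
      intro i hi
      rw [Finset.mem_image] at hi
      obtain ⟨k, hk, rfl⟩ := hi
      have := hf k hk
      rw [Finset.mem_Ico] at hk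
      rcases hs with rfl | rfl <;> omega) (by
      rw [Finset.card_image_of_injOn]
      · simp
      · intro k hk l hl hkl
        have h1 := hf k hk
        have h2 := hf l hl
        simp only at hkl
        rcases hs with rfl | rfl <;> omega)
  rw [Finset.mem_image] at hi
  obtain ⟨k, hk, rfl⟩ := hi
  exact (hf k hk).2.2 hfull

lemma col_reach (H : TileHyp G X Y M) {b i : ℤ} (hf : FullCol X Y M b i) (u : V)
    (hu : X u = i) (hu1 : b - 600 ≤ Y u) (d : ℕ) :
    ∀ v, X v = i → Y v ≤ b + 600 → Y v = Y u + d → G.Reachable u v := by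
  induction d with
  | zero =>
    intro v hv _ hd
    refine H.near u v ?_
    rw [hu, hv, hd]; simp
  | succ d ih =>
    intro v hv hv1 hd
    push_cast at hd
    have h1 := H.hX u
    have h2 := H.hY u
    have h3 := H.hY v
    obtain ⟨w, hw1, hw2⟩ := hf (Y u + d) (by omega) (by omega) (by omega) (by omega) (by omega)
      (by omega)
    refine (ih w hw1 (by omega) hw2).trans (H.near w v ?_)
    rw [hw1, hw2, hv, hd]
    simp

lemma col_reach' (H : TileHyp G X Y M) {b i : ℤ} (hf : FullCol X Y M b i) (u v : V)
    (hu : X u = i) (hv : X v = i) (hu1 : |Y u - b| ≤ 600) (hv1 : |Y v - b| ≤ 600) :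
    G.Reachable u v := by
  rw [abs_le] at hu1 hv1
  rcases le_total (Y u) (Y v) with h | h
  · exact H.col_reach hf u hu (by omega) (Y v - Y u).toNat v hv (by omega) (by omega)
  · exact (H.col_reach hf v hv (by omega) (Y u - Y v).toNat u hu (by omega) (by omega)).symm

def BB (X Y : V → ℤ) (M a b : ℤ) (u : V) : Prop :=
  |X u - a| ≤ 600 ∧ |Y u - b| ≤ 600 ∧ (FullCol X Y M b (X u) ∨ FullCol Y X M a (Y u))

lemma BB_symm {a b : ℤ} {u : V} : BB Y X M b a u ↔ BB X Y M a b u := by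
  unfold BB; tauto

lemma bb_conn (H : TileHyp G X Y M) {a b : ℤ} (ha : 0 ≤ a) (ha' : a < M) (hb : 0 ≤ b)
    (hb' : b < M) (u v : V) (hu : BB X Y M a b u) (hv : BB X Y M a b v) : G.Reachable u v := by
  obtain ⟨i, hi0, hiM, hi1, hi2, hi⟩ := H.exists_common ha ha' hb hb'
  obtain ⟨j, hj0, hjM, hj1, hj2, hj⟩ := H.symm.exists_common hb hb' ha ha'
  obtain ⟨w, hw1, hw2⟩ := hi j (by omega) (by omega) hi0 hiM hj0 hjM
  have key : ∀ u, BB X Y M a b u → G.Reachable u w := by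
    rintro u ⟨h1, h2, h3⟩
    have h4 := H.hX u
    have h5 := H.hY u
    have h1' := abs_le.1 h1
    have h2' := abs_le.1 h2
    rcases h3 with h3 | h3
    · obtain ⟨q, hq1, hq2⟩ := h3 j (by omega) (by omega) (by omega) (by omega) (by omega) (by omega)
      refine (H.col_reach' h3 u q rfl hq1 h2 ?_).trans (H.symm.col_reach' hj q w hq2 hw2 ?_ ?_)
      · rw [hq2, abs_le]; omega
      · rw [hq1]; exact h1
      · rw [hw1, abs_le]; omega
    · obtain ⟨q, hq1, hq2⟩ := h3 i (by omega) (by omega) (by omega) (by omega) (by omega) (by omega)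
      refine (H.symm.col_reach' h3 u q rfl hq1 h1 ?_).trans (H.col_reach' hi q w hq2 hw1 ?_ ?_)
      · rw [hq2, abs_le]; omega
      · rw [hq1]; exact h2
      · rw [hw2, abs_le]; omega
  exact (key u hu).trans (key v hv).symm

lemma bb_common (H : TileHyp G X Y M) {a b : ℤ} (ha : 0 ≤ a) (ha' : a < M) (hb : 0 ≤ b)
    (hb' : b < M) : ∃ w, BB X Y M a b w ∧ BB X Y M (a + 1) b w := by
  obtain ⟨i, hi0, hiM, hi1, hi2, hi⟩ := H.exists_common ha ha' hb hb'
  obtain ⟨w, hw1, hw2⟩ := hi b (by omega) (by omega) hi0 hiM hb hb'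
  refine ⟨w, ⟨?_, ?_, Or.inl (hw1 ▸ hi)⟩, ⟨?_, ?_, Or.inl (hw1 ▸ hi)⟩⟩ <;> rw [abs_le] <;> omega

lemma bb_all (H : TileHyp G X Y M) : ∃ p, ∀ a b, 0 ≤ a → a < M → 0 ≤ b → b < M →
    ∀ u, BB X Y M a b u → G.Reachable p u := by
  have hM := H.hM
  obtain ⟨p, hp, -⟩ := H.bb_common (a := 0) (b := 0) le_rfl (by omega) le_rfl (by omega)
  refine ⟨p, ?_⟩
  have h1 : ∀ n : ℕ, (n : ℤ) < M → ∀ u, BB X Y M n 0 u → G.Reachable p u := by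
    intro n
    induction n with
    | zero => exact fun _ u hu => H.bb_conn le_rfl (by omega) le_rfl (by omega) p u hp hu
    | succ n ih =>
      intro hn u hu
      push_cast at hn hu
      obtain ⟨w, hw, hw'⟩ := H.bb_common (a := n) (b := 0) (by omega) (by omega) le_rfl (by omega)
      exact (ih (by omega) w hw).trans
        (H.bb_conn (by omega) (by omega) le_rfl (by omega) w u hw' hu)
  have h2 : ∀ n : ℕ, (n : ℤ) < M → ∀ m : ℕ, (m : ℤ) < M → ∀ u, BB X Y M n m u →
      G.Reachable p u := by
    intro n hn m
    induction m with
    | zero => exact fun _ => h1 n hn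
    | succ m ih =>
      intro hm u hu
      push_cast at hm hu
      obtain ⟨w, hw, hw'⟩ := H.symm.bb_common (a := m) (b := n) (by omega) (by omega) (by omega)
        (by omega)
      rw [BB_symm] at hw hw'
      exact (ih (by omega) w hw).trans
        (H.bb_conn (by omega) (by omega) (by omega) (by omega) w u hw' hu)
  intro a b ha ha' hb hb' u hu
  have := h2 a.toNat (by omega) b.toNat (by omega) u
  rw [Int.toNat_of_nonneg ha, Int.toNat_of_nonneg hb] at this
  exact this hu

theorem main (H : TileHyp G X Y M) : ∃ p, ∀ u, ¬ G.Reachable p u → ∀ v, G.Reachable u v →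
    |X v - X u| ≤ 600 ∧ |Y v - Y u| ≤ 600 := by
  obtain ⟨p, hp⟩ := H.bb_all
  refine ⟨p, fun u hu => ?_⟩
  have hXu := H.hX u
  have hYu := H.hY u
  obtain ⟨k1, hk1, hk1', f1⟩ := H.exists_strip hXu.1 hXu.2 hYu.1 hYu.2 1 (Or.inl rfl)
  obtain ⟨k2, hk2, hk2', f2⟩ := H.exists_strip hXu.1 hXu.2 hYu.1 hYu.2 (-1) (Or.inr rfl)
  obtain ⟨k3, hk3, hk3', f3⟩ := H.symm.exists_strip hYu.1 hYu.2 hXu.1 hXu.2 1 (Or.inl rfl)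
  obtain ⟨k4, hk4, hk4', f4⟩ := H.symm.exists_strip hYu.1 hYu.2 hXu.1 hXu.2 (-1) (Or.inr rfl)
  have key : ∀ v, G.Reachable u v →
      (X v < X u + (1 + 4 * k1) ∧ X u - (1 + 4 * k2) < X v) ∧
      (Y v < Y u + (1 + 4 * k3) ∧ Y u - (1 + 4 * k4) < Y v) := by
    intro v hv
    rw [SimpleGraph.reachable_iff_reflTransGen] at hv
    induction hv with
    | refl => omega
    | tail huv hvw ih =>
      rename_i v w
      have hw : G.Reachable u w := by
        rw [SimpleGraph.reachable_iff_reflTransGen]; exact huv.tail hvw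
      obtain ⟨s1, s2⟩ := H.step v w hvw
      rw [abs_le] at s1 s2
      have nb : ¬ BB X Y M (X u) (Y u) w := fun hb =>
        hu ((hp _ _ hXu.1 hXu.2 hYu.1 hYu.2 w hb).trans hw.symm)
      have b1 : |X w - X u| ≤ 600 := by rw [abs_le]; omega
      have b2 : |Y w - Y u| ≤ 600 := by rw [abs_le]; omega
      refine ⟨⟨?_, ?_⟩, ?_, ?_⟩
      · by_contra hc
        have := f1 (X w - X u - (1 + 4 * k1)) (by omega) (by omega)
        rw [show X u + 1 * (1 + 4 * k1 + (X w - X u - (1 + 4 * k1))) = X w by ring] at this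
        exact nb ⟨b1, b2, Or.inl this⟩
      · by_contra hc
        have := f2 (X u - X w - (1 + 4 * k2)) (by omega) (by omega)
        rw [show X u + -1 * (1 + 4 * k2 + (X u - X w - (1 + 4 * k2))) = X w by ring] at this
        exact nb ⟨b1, b2, Or.inl this⟩
      · by_contra hc
        have := f3 (Y w - Y u - (1 + 4 * k3)) (by omega) (by omega)
        rw [show Y u + 1 * (1 + 4 * k3 + (Y w - Y u - (1 + 4 * k3))) = Y w by ring] at this
        exact nb ⟨b1, b2, Or.inr this⟩
      · by_contra hc
        have := f4 (Y u - Y w - (1 + 4 * k4)) (by omega) (by omega)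
        rw [show Y u + -1 * (1 + 4 * k4 + (Y u - Y w - (1 + 4 * k4))) = Y w by ring] at this
        exact nb ⟨b1, b2, Or.inr this⟩
  intro v hv
  have := key v hv
  rw [abs_le, abs_le]
  omega

end TileHyp


/-! ### The tile argument for the geometric graph -/

lemma geomGraph_adj {n : ℕ} (x : Fin n → Pt) (r : ℝ) (i j : Fin n) :
    (geomGraph x r).Adj i j ↔ i ≠ j ∧ ‖x i - x j‖ ≤ r := by
  rw [geomGraph, SimpleGraph.fromRel_adj]
  constructor
  · rintro ⟨h, h1 | h1⟩
    · exact ⟨h, h1⟩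
    · exact ⟨h, by rwa [norm_sub_rev]⟩
  · rintro ⟨h, h1⟩
    exact ⟨h, Or.inl h1⟩

/-- the tile coordinate -/
noncomputable def tileC {n : ℕ} (M : ℕ) (i : Fin 2) (x : Fin n → Pt) (v : Fin n) : ℤ := ⌊(M : ℝ) * x v i⌋

lemma floor_diff_abs (s t : ℝ) (k : ℤ) (h : |s - t| ≤ k) : |⌊s⌋ - ⌊t⌋| ≤ k := by
  have h1 := Int.floor_le s
  have h2 := Int.lt_floor_add_one s
  have h3 := Int.floor_le t
  have h4 := Int.lt_floor_add_one t
  rw [abs_le] at h ⊢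
  constructor
  · have : (-k : ℝ) - 1 < (⌊s⌋ : ℝ) - ⌊t⌋ := by linarith [h.1]
    have : -k - 1 < ⌊s⌋ - ⌊t⌋ := by exact_mod_cast this
    omega
  · have : (⌊s⌋ : ℝ) - ⌊t⌋ < k + 1 := by linarith [h.2]
    have : ⌊s⌋ - ⌊t⌋ < k + 1 := by exact_mod_cast this
    omega

lemma diff_abs_of_floor (s t : ℝ) (k : ℤ) (h : |⌊s⌋ - ⌊t⌋| ≤ k) : |s - t| ≤ k + 1 := by
  have h1 := Int.floor_le s
  have h2 := Int.lt_floor_add_one s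
  have h3 := Int.floor_le t
  have h4 := Int.lt_floor_add_one t
  rw [abs_le] at h ⊢
  have h5 : (-k : ℝ) ≤ (⌊s⌋ : ℝ) - ⌊t⌋ := by exact_mod_cast h.1
  have h6 : (⌊s⌋ : ℝ) - ⌊t⌋ ≤ k := by exact_mod_cast h.2
  constructor <;> linarith

lemma cluster_of_disconnected {n : ℕ} (hn : 0 < n) (x : Fin n → Pt) {r : ℝ} (hr : 0 < r) (M : ℕ)
    (hM : 1300 ≤ M) (hM1 : 3 ≤ r * M) (hM2 : r * M ≤ 4)
    (hx : ∀ v i, 0 ≤ x v i ∧ x v i < 1)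
    (hwin : ∀ a b : ℤ, 0 ≤ a → a < M → 0 ≤ b → b < M →
      ∀ S : Finset (ℤ × ℤ), (∀ t ∈ S, EmptyTile (tileC M 0 x) (tileC M 1 x) M a b t) → S.card < 128)
    (hdis : ¬ (geomGraph x r).Connected) :
    ∃ D : Finset (Fin n), D.Nonempty ∧ (∀ u ∈ D, ∀ v, v ∉ D → r < ‖x u - x v‖) ∧
      ∀ u ∈ D, ∀ v ∈ D, ∀ i, |x u i - x v i| ≤ 300 * r := by
  classical
  have hM0 : (0:ℝ) < M := by
    have : (1300:ℝ) ≤ M := by exact_mod_cast hM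
    linarith
  have hgrid : ∀ i v, 0 ≤ tileC M i x v ∧ tileC M i x v < M := by
    intro i v
    obtain ⟨h0, h1⟩ := hx v i
    constructor
    · exact Int.floor_nonneg.2 (by positivity)
    · unfold tileC
      rw [Int.floor_lt]
      push_cast
      nlinarith
  have hmul : ∀ s t : ℝ, |(M:ℝ) * s - M * t| = M * |s - t| := by
    intro s t
    rw [← mul_sub, abs_mul, abs_of_pos hM0]
  have H : TileHyp (geomGraph x r) (tileC M 0 x) (tileC M 1 x) (M : ℤ) := by
    refine ⟨by exact_mod_cast hM, hgrid 0, hgrid 1, ?_, ?_, hwin⟩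
    · intro u v huv
      by_cases h : u = v
      · subst h; exact SimpleGraph.Reachable.refl _
      apply SimpleGraph.Adj.reachable
      rw [geomGraph_adj]
      refine ⟨h, ?_⟩
      rw [norm_le_iff_coord 0 hr.le]
      have key : ∀ a b : ℝ, |(M:ℝ) * a| ≤ 2 → |(M:ℝ) * b| ≤ 1 → a ^ 2 + b ^ 2 ≤ r ^ 2 := by
        intro a b ha hb
        have h1 : ((M:ℝ) * a)^2 ≤ 2^2 := sq_le_sq' (by linarith [(abs_le.1 ha).1]) (abs_le.1 ha).2
        have h2 : ((M:ℝ) * b)^2 ≤ 1^2 := sq_le_sq' (by linarith [(abs_le.1 hb).1]) (abs_le.1 hb).2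
        have h3 : (3:ℝ)^2 ≤ (r * M)^2 := by gcongr
        have h4 : (M:ℝ)^2 * (a^2 + b^2) ≤ (M:ℝ)^2 * r^2 := by nlinarith
        exact le_of_mul_le_mul_left h4 (by positivity)
      have h0 := abs_nonneg (tileC M 0 x u - tileC M 0 x v)
      have h1 := abs_nonneg (tileC M 1 x u - tileC M 1 x v)
      rcases (by omega : (|tileC M 0 x u - tileC M 0 x v| ≤ 1 ∧ |tileC M 1 x u - tileC M 1 x v| ≤ 0) ∨
        (|tileC M 0 x u - tileC M 0 x v| ≤ 0 ∧ |tileC M 1 x u - tileC M 1 x v| ≤ 1)) with h | h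
      · have e1 := diff_abs_of_floor _ _ _ h.1
        have e2 := diff_abs_of_floor _ _ _ h.2
        rw [← mul_sub] at e1 e2
        push_cast at e1 e2
        exact key _ _ (by linarith) (by simpa using e2)
      · have e1 := diff_abs_of_floor _ _ _ h.1
        have e2 := diff_abs_of_floor _ _ _ h.2
        rw [← mul_sub] at e1 e2
        push_cast at e1 e2
        rw [add_comm]
        refine key _ _ ?_ (by simpa using e1)
        have : ((0 : Fin 2) + 1) = 1 := rfl
        rw [this]
        linarith
    · intro u v huv
      rw [geomGraph_adj] at huv
      have : ∀ i, |tileC M i x u - tileC M i x v| ≤ 4 := by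
        intro i
        apply floor_diff_abs
        rw [hmul]
        have := abs_coord_le_norm i (x u) (x v)
        push_cast
        calc (M:ℝ) * |x u i - x v i| ≤ M * r := by gcongr; exact this.trans huv.2
          _ ≤ 4 := by linarith
      exact ⟨this 0, this 1⟩
  obtain ⟨p, hp⟩ := H.main
  have : ∃ u, ¬ (geomGraph x r).Reachable p u := by
    by_contra hcon
    push Not at hcon
    haveI : Nonempty (Fin n) := ⟨⟨0, hn⟩⟩
    exact hdis ⟨fun a b => (hcon a).symm.trans (hcon b)⟩
  obtain ⟨u, hu⟩ := this
  refine ⟨Finset.univ.filter fun v => (geomGraph x r).Reachable u v, ⟨u, by simp⟩, ?_, ?_⟩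
  · intro a ha b hb
    simp only [Finset.mem_filter, Finset.mem_univ, true_and] at ha hb
    by_contra hcon
    push Not at hcon
    apply hb
    by_cases hab : a = b
    · rwa [← hab]
    exact ha.trans (SimpleGraph.Adj.reachable ((geomGraph_adj x r a b).2 ⟨hab, hcon⟩))
  · intro a ha b hb i
    simp only [Finset.mem_filter, Finset.mem_univ, true_and] at ha hb
    have hpa : ¬ (geomGraph x r).Reachable p a := fun h => hu (h.trans ha.symm)
    have h1 := hp a hpa b (ha.symm.trans hb)
    have h2 : |tileC M i x b - tileC M i x a| ≤ 600 := by
      fin_cases i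
      · exact h1.1
      · exact h1.2
    have h3 := diff_abs_of_floor _ _ _ h2
    rw [hmul] at h3
    push_cast at h3
    rw [abs_sub_comm]
    have h4 : (M:ℝ) * |x b i - x a i| ≤ M * (300 * r) := by nlinarith
    exact le_of_mul_le_mul_left h4 hM0


/-! ### Probability of a bad window -/

def tileSet (M : ℕ) (t : ℤ × ℤ) : Set Pt := {p | ⌊(M : ℝ) * p 0⌋ = t.1 ∧ ⌊(M : ℝ) * p 1⌋ = t.2}

lemma measurableSet_tileSet (M : ℕ) (t : ℤ × ℤ) : MeasurableSet (tileSet M t) := by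
  have h : ∀ (i : Fin 2) (a : ℤ), MeasurableSet {p : Pt | ⌊(M : ℝ) * p i⌋ = a} := by
    intro i a
    have h1 : Measurable fun p : Pt => ⌊(M : ℝ) * p i⌋ := by
      have := measurable_coord i
      fun_prop
    exact h1 (measurableSet_singleton a)
  exact (h 0 t.1).inter (h 1 t.2)

lemma tileSet_ge (M : ℕ) (hM : 0 < M) (t : ℤ × ℤ) (h1 : 0 ≤ t.1 ∧ t.1 < M) (h2 : 0 ≤ t.2 ∧ t.2 < M) :
    1 / (M:ℝ)^2 ≤ unifSquare.real (tileSet M t) := by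
  have hM0 : (0:ℝ) < M := by exact_mod_cast hM
  have e1 : (0:ℝ) ≤ t.1 := by exact_mod_cast h1.1
  have e2 : (t.1:ℝ) + 1 ≤ M := by exact_mod_cast h1.2
  have e3 : (0:ℝ) ≤ t.2 := by exact_mod_cast h2.1
  have e4 : (t.2:ℝ) + 1 ≤ M := by exact_mod_cast h2.2
  have := unif_box_ge 0 (A := tileSet M t) (a := t.1 / M) (b := (t.1 + 1)/M) (c := t.2/M) (d := (t.2+1)/M)
    (by gcongr; linarith) (by positivity) (by rw [div_le_one hM0]; exact e2) (by positivity)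
    (by rw [div_le_one hM0]; exact e4) ?_
  · refine le_trans (le_of_eq ?_) this
    field_simp; ring
  · intro p ha hb hc hd
    rw [div_lt_iff₀ hM0] at ha hc
    rw [lt_div_iff₀ hM0] at hb hd
    refine ⟨?_, ?_⟩
    · rw [Int.floor_eq_iff]; constructor <;> linarith
    · rw [Int.floor_eq_iff]
      simp only [zero_add] at hc hd
      constructor <;> linarith

lemma prob_tiles_empty (n M : ℕ) (hM : 0 < M) (S : Finset (ℤ × ℤ))
    (hS : ∀ t ∈ S, (0 ≤ t.1 ∧ t.1 < M) ∧ (0 ≤ t.2 ∧ t.2 < M)) (hc : S.card = 128) :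
    PP n {x | ∀ t ∈ S, ∀ v, ¬ (tileC M 0 x v = t.1 ∧ tileC M 1 x v = t.2)}
      ≤ ENNReal.ofReal (Real.exp (-(n * (128 / (M:ℝ)^2)))) := by
  let R : Set Pt := ⋃ t ∈ S, tileSet M t
  have hR : MeasurableSet R := Finset.measurableSet_biUnion S fun t _ => measurableSet_tileSet M t
  have h0 : {x : Fin n → Pt | ∀ t ∈ S, ∀ v, ¬ (tileC M 0 x v = t.1 ∧ tileC M 1 x v = t.2)}
      = Set.univ.pi fun _ => Rᶜ := by
    ext x
    simp only [mem_ofPred_eq, Set.mem_pi, mem_univ, true_implies, R, mem_compl_iff, mem_iUnion, tileSet, tileC]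
    push Not
    constructor
    · intro h v t ht; exact h t ht v
    · intro h t ht v; exact h v t ht
  rw [h0, Measure.pi_pi]
  simp only [Finset.prod_const, Finset.card_univ, Fintype.card_fin]
  refine (unif_compl_pow_le R hR n).trans (ENNReal.ofReal_le_ofReal (Real.exp_le_exp.2 ?_))
  have h1 : 128 / (M:ℝ)^2 ≤ unifSquare.real R := by
    rw [measureReal_biUnion_finset]
    · calc 128 / (M:ℝ)^2 = ∑ t ∈ S, 1 / (M:ℝ)^2 := by
            rw [Finset.sum_const, hc]; simp [div_eq_mul_inv]
        _ ≤ _ := Finset.sum_le_sum fun t ht => tileSet_ge M hM t (hS t ht).1 (hS t ht).2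
    · intro t _ s _ hts
      rw [Function.onFun, Set.disjoint_left]
      rintro p ⟨h1, h2⟩ ⟨h3, h4⟩
      exact hts (Prod.ext (h1.symm.trans h3) (h2.symm.trans h4))
    · exact fun t _ => measurableSet_tileSet M t
  have : (0:ℝ) ≤ n := by positivity
  nlinarith

def badWin (n M : ℕ) : Set (Fin n → Pt) := {x | ∃ a b : ℤ, (0 ≤ a ∧ a < M) ∧ (0 ≤ b ∧ b < M) ∧
  ∃ S : Finset (ℤ × ℤ), (∀ t ∈ S, EmptyTile (tileC M 0 x) (tileC M 1 x) M a b t) ∧ 128 ≤ S.card}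

/-- number of ways to choose the empty tiles in a window -/
noncomputable def winConst : ℕ :=
  Classical.choose (⟨((1201 * 1201 : ℕ).choose 128), le_rfl⟩ : ∃ W : ℕ, (1201 * 1201 : ℕ).choose 128 ≤ W)

lemma winConst_ge : (1201 * 1201 : ℕ).choose 128 ≤ winConst :=
  Classical.choose_spec (⟨((1201 * 1201 : ℕ).choose 128), le_rfl⟩ : ∃ W : ℕ, (1201 * 1201 : ℕ).choose 128 ≤ W)

lemma prob_badWin (n M : ℕ) (hM : 0 < M) :
    PP n (badWin n M) ≤ (M:ℝ≥0∞)^2 * winConst * ENNReal.ofReal (Real.exp (-(n * (128 / (M:ℝ)^2)))) := by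
  classical
  let W : ℤ × ℤ → Finset (ℤ × ℤ) := fun c => Finset.Icc (c.1 - 600) (c.1 + 600) ×ˢ Finset.Icc (c.2 - 600) (c.2 + 600)
  let T : ℤ × ℤ → Finset (Finset (ℤ × ℤ)) := fun c => ((W c).powersetCard 128).filter
    fun S => ∀ t ∈ S, (0 ≤ t.1 ∧ t.1 < M) ∧ (0 ≤ t.2 ∧ t.2 < M)
  let C : Finset (ℤ × ℤ) := Finset.Ico 0 (M:ℤ) ×ˢ Finset.Ico 0 (M:ℤ)
  have hTc : ∀ c, (T c).card ≤ winConst := by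
    intro c
    refine (Finset.card_filter_le _ _).trans ?_
    rw [Finset.card_powersetCard]
    refine le_trans (le_of_eq ?_) winConst_ge
    congr 1
    simp only [W, Finset.card_product, Int.card_Icc]
    congr 1
    · have : c.1 + 600 + 1 - (c.1 - 600) = 1201 := by ring
      rw [this]; rfl
    · have : c.2 + 600 + 1 - (c.2 - 600) = 1201 := by ring
      rw [this]; rfl
  have hCc : C.card = M ^ 2 := by
    simp [C, Finset.card_product, pow_two]
  have hsub : badWin n M ⊆ ⋃ c ∈ C, ⋃ S ∈ T c,
      {x | ∀ t ∈ S, ∀ v, ¬ (tileC M 0 x v = t.1 ∧ tileC M 1 x v = t.2)} := by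
    rintro x ⟨a, b, ha, hb, S, hS, hc⟩
    obtain ⟨S', hS', hc'⟩ := Finset.exists_subset_card_eq hc
    simp only [mem_iUnion]
    refine ⟨(a, b), by simp only [C, Finset.mem_product, Finset.mem_Ico]; exact ⟨ha, hb⟩, S', ?_, ?_⟩
    · simp only [T, Finset.mem_filter, Finset.mem_powersetCard]
      refine ⟨⟨?_, hc'⟩, ?_⟩
      · intro t ht
        obtain ⟨h1, h2, h3, h4, h5⟩ := hS t (hS' ht)
        simp only [W, Finset.mem_product, Finset.mem_Icc]
        exact ⟨h1, h2⟩
      · intro t ht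
        obtain ⟨h1, h2, h3, h4, h5⟩ := hS t (hS' ht)
        exact ⟨h3, h4⟩
    · intro t ht
      exact (hS t (hS' ht)).2.2.2.2
  set δ := ENNReal.ofReal (Real.exp (-(n * (128 / (M:ℝ)^2)))) with hδ
  calc PP n (badWin n M) ≤ _ := measure_mono hsub
    _ ≤ ∑ c ∈ C, ∑ S ∈ T c, PP n {x | ∀ t ∈ S, ∀ v, ¬ (tileC M 0 x v = t.1 ∧ tileC M 1 x v = t.2)} :=
        (measure_biUnion_finset_le _ _).trans (Finset.sum_le_sum fun c _ => measure_biUnion_finset_le _ _)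
    _ ≤ ∑ c ∈ C, ∑ S ∈ T c, δ := by
        refine Finset.sum_le_sum fun c _ => Finset.sum_le_sum fun S hS => ?_
        simp only [T, Finset.mem_filter, Finset.mem_powersetCard] at hS
        exact prob_tiles_empty n M hM S hS.2 hS.1.2
    _ ≤ ∑ c ∈ C, winConst * δ := by
        refine Finset.sum_le_sum fun c _ => ?_
        rw [Finset.sum_const, nsmul_eq_mul]
        gcongr
        exact hTc c
    _ = _ := by
        rw [Finset.sum_const, nsmul_eq_mul, hCc]; push_cast; ring


/-! ### Integral estimates -/

lemma lintegral_exp_abs {a : ℝ} (ha : 0 < a) :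
    ∫⁻ t : ℝ, ENNReal.ofReal (Real.exp (-(a * |t|))) ≤ ENNReal.ofReal (2 / a) := by
  have h1 : ∫⁻ t in Iic (0:ℝ), ENNReal.ofReal (Real.exp (-(a * |t|))) = ENNReal.ofReal (1 / a) := by
    have e : ∫⁻ t in Iic (0:ℝ), ENNReal.ofReal (Real.exp (-(a * |t|)))
        = ∫⁻ t in Iic (0:ℝ), ENNReal.ofReal (Real.exp (a * t)) := by
      refine setLIntegral_congr_fun measurableSet_Iic fun t ht => ?_
      rw [abs_of_nonpos ht]; simp
    rw [e, ← ofReal_integral_eq_lintegral_ofReal (integrableOn_exp_mul_Iic ha 0)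
      (ae_of_all _ fun _ => (Real.exp_pos _).le), integral_exp_mul_Iic ha]
    simp
  have h2 : ∫⁻ t in Ioi (0:ℝ), ENNReal.ofReal (Real.exp (-(a * |t|))) = ENNReal.ofReal (1 / a) := by
    have e : ∫⁻ t in Ioi (0:ℝ), ENNReal.ofReal (Real.exp (-(a * |t|)))
        = ∫⁻ t in Ioi (0:ℝ), ENNReal.ofReal (Real.exp ((-a) * t)) := by
      refine setLIntegral_congr_fun measurableSet_Ioi fun t ht => ?_
      rw [abs_of_pos ht]; simp
    have ha' : -a < 0 := by linarith
    rw [e, ← ofReal_integral_eq_lintegral_ofReal (integrableOn_exp_mul_Ioi ha' 0)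
      (ae_of_all _ fun _ => (Real.exp_pos _).le), integral_exp_mul_Ioi ha']
    simp
  rw [← lintegral_add_compl _ (measurableSet_Iic : MeasurableSet (Iic (0:ℝ))), compl_Iic, h1, h2,
    ← ENNReal.ofReal_add (by positivity) (by positivity)]
  apply le_of_eq; congr 1; ring

lemma unif_lintegral_coord_le (i : Fin 2) (f : ℝ → ℝ≥0∞) (hf : Measurable f) :
    ∫⁻ p, f (p i) ∂unifSquare ≤ ∫⁻ t, f t := by
  rw [unifSquare, ← lintegral_indicator measurableSet_unitSquare]
  calc _ ≤ ∫⁻ p : Pt, f (p i) * (Icc (0:ℝ) 1).indicator (fun _ => 1) (p (i + 1)) := by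
        refine lintegral_mono fun p => ?_
        by_cases hp : p ∈ unitSquare
        · rw [indicator_of_mem hp, indicator_of_mem ((mem_unitSquare_iff i p).1 hp).2, mul_one]
        · rw [indicator_of_notMem hp]; exact zero_le
    _ = _ := by
        rw [lintegral_coord_mul i f _ hf (measurable_const.indicator measurableSet_Icc),
          lintegral_indicator measurableSet_Icc]
        simp

/-- the interior region -/
def QI (r : ℝ) : Set Pt := {p | ∀ i, r ≤ p i ∧ p i ≤ 1 - r}

/-- the corner region -/
def corner (s : ℝ) : Set Pt := {p | ∀ i, p i ≤ s ∨ 1 - s ≤ p i}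

lemma measurableSet_QI (r : ℝ) : MeasurableSet (QI r) := by
  have : QI r = ⋂ i : Fin 2, {p : Pt | r ≤ p i} ∩ {p : Pt | p i ≤ 1 - r} := by
    ext p; simp [QI]
  rw [this]
  refine MeasurableSet.iInter fun i => ?_
  have := measurable_coord i
  exact (measurableSet_le measurable_const this).inter (measurableSet_le this measurable_const)

lemma measurableSet_corner (r : ℝ) : MeasurableSet (corner r) := by
  have : corner r = ⋂ i : Fin 2, {p : Pt | p i ≤ r} ∪ {p : Pt | 1 - r ≤ p i} := by
    ext p; simp [corner]
  rw [this]
  refine MeasurableSet.iInter fun i => ?_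
  have := measurable_coord i
  exact (measurableSet_le this measurable_const).union (measurableSet_le measurable_const this)

lemma unif_corner_le {s : ℝ} (hs : 0 ≤ s) : unifSquare (corner s) ≤ ENNReal.ofReal (4 * s ^ 2) := by
  rw [unifSquare, Measure.restrict_apply (measurableSet_corner s)]
  let A : Set ℝ := Icc 0 s ∪ Icc (1 - s) 1
  have hA : MeasurableSet A := measurableSet_Icc.union measurableSet_Icc
  have hv : volume A ≤ ENNReal.ofReal (2 * s) := by
    refine (measure_union_le _ _).trans ?_
    rw [Real.volume_Icc, Real.volume_Icc, ← ENNReal.ofReal_add (by linarith) (by linarith)]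
    apply le_of_eq; congr 1; ring
  have hsub : corner s ∩ unitSquare ⊆ {p : Pt | p 0 ∈ A ∧ p (0 + 1) ∈ A} := by
    rintro p ⟨h1, h2⟩
    have : ∀ i, p i ∈ A := by
      intro i
      rcases h1 i with h | h
      · exact Or.inl ⟨(h2 i).1, h⟩
      · exact Or.inr ⟨h, (h2 i).2⟩
    exact ⟨this _, this _⟩
  refine (measure_mono hsub).trans ?_
  rw [volume_box 0 A A hA hA]
  calc volume A * volume A ≤ ENNReal.ofReal (2 * s) * ENNReal.ofReal (2 * s) := by gcongr
    _ = _ := by rw [← ENNReal.ofReal_mul (by linarith)]; congr 1; ring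

lemma measurable_unif_real {α : Type*} [MeasurableSpace α] (R : α → Set Pt)
    (hR : MeasurableSet {q : α × Pt | q.2 ∈ R q.1}) : Measurable fun y => unifSquare.real (R y) :=
  (measurable_measure_prodMk_left (ν := unifSquare) hR).ennreal_toReal

lemma measurable_vv (r : ℝ) : Measurable (vv r) := by
  apply measurable_unif_real fun x : Pt => Metric.closedBall x r
  have : MeasurableSet {q : Pt × Pt | dist q.2 q.1 ≤ r} := measurableSet_le (by fun_prop) (by fun_prop)
  exact this

lemma exp_shift (n k : ℕ) {t : ℝ} (h0 : 0 ≤ t) (h1 : t ≤ 1) :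
    ENNReal.ofReal (Real.exp (-((n - k : ℕ) * t))) ≤
      ENNReal.ofReal (Real.exp k) * ENNReal.ofReal (Real.exp (-(n * t))) := by
  rw [← ENNReal.ofReal_mul (Real.exp_pos _).le, ← Real.exp_add]
  refine ENNReal.ofReal_le_ofReal (Real.exp_le_exp.2 ?_)
  have h2 : (n:ℝ) ≤ (n - k : ℕ) + k := by
    have : n ≤ (n - k) + k := by omega
    exact_mod_cast this
  have h3 : (0:ℝ) ≤ k := by positivity
  nlinarith

lemma est_pointwise (n : ℕ) {r : ℝ} (hr : 0 < r) (hr1 : r ≤ 1 / 2) {p : Pt} (hp : p ∈ unitSquare)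
    (hq : p ∉ QI r) :
    ENNReal.ofReal (Real.exp (-(n * vv r p))) ≤
      (corner r).indicator (fun _ => ENNReal.ofReal (Real.exp (-(n * r^2 / 4)))) p
      + ENNReal.ofReal (Real.exp (-(n * (Real.pi * r^2) / 2))) * ∑ i : Fin 2,
        (ENNReal.ofReal (Real.exp (-((n * r / 2) * |p i|))) +
         ENNReal.ofReal (Real.exp (-((n * r / 2) * |1 - p i|)))) := by
  have hn0 : (0:ℝ) ≤ n := by positivity
  by_cases hc : p ∈ corner r
  · rw [indicator_of_mem hc]
    refine le_add_right (ENNReal.ofReal_le_ofReal (Real.exp_le_exp.2 ?_))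
    have := vv_corner hr.le (by linarith) hp
    nlinarith
  · refine le_add_left ?_
    simp only [corner, mem_ofPred_eq] at hc
    push Not at hc
    obtain ⟨j, hj1, hj2⟩ := hc
    obtain ⟨i, rfl⟩ : ∃ i, j = i + 1 := ⟨j + 1, (add_one_add_one j).symm⟩
    have hi : p i < r ∨ 1 - r < p i := by
      by_contra hcon
      push Not at hcon
      apply hq
      intro k
      have : k = i ∨ k = i + 1 := by fin_cases i <;> fin_cases k <;> simp
      rcases this with h | h
      · rw [h]; exact hcon
      · rw [h]; exact ⟨hj1.le, hj2.le⟩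
    have hterm := Finset.single_le_sum (f := fun i : Fin 2 =>
        (ENNReal.ofReal (Real.exp (-((n * r / 2) * |p i|))) +
         ENNReal.ofReal (Real.exp (-((n * r / 2) * |1 - p i|))))) (fun _ _ => zero_le) (Finset.mem_univ i)
    refine le_trans ?_ (mul_le_mul_right hterm _)
    have hpi := hp i
    rcases hi with h | h
    · refine le_trans ?_ (mul_le_mul_right (le_add_right le_rfl) _)
      rw [← ENNReal.ofReal_mul (Real.exp_pos _).le, ← Real.exp_add, abs_of_nonneg hpi.1]
      refine ENNReal.ofReal_le_ofReal (Real.exp_le_exp.2 ?_)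
      have := vv_side_left hr.le hr1 i hp ⟨hj1.le, hj2.le⟩ h.le
      nlinarith
    · refine le_trans ?_ (mul_le_mul_right (le_add_left le_rfl) _)
      rw [← ENNReal.ofReal_mul (Real.exp_pos _).le, ← Real.exp_add, abs_of_nonneg (by linarith [hpi.2])]
      refine ENNReal.ofReal_le_ofReal (Real.exp_le_exp.2 ?_)
      have := vv_side_right hr.le hr1 i hp ⟨hj1.le, hj2.le⟩ (by linarith)
      nlinarith

lemma est_boundary (n : ℕ) {r lam : ℝ} (hn : 1 ≤ n) (hr : 0 < r) (hr1 : r ≤ 1 / 2)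
    (hlam : n * Real.exp (-(n * (Real.pi * r^2))) = lam) :
    (n:ℝ≥0∞) * ∫⁻ p in (QI r)ᶜ, ENNReal.ofReal (Real.exp (-(n * vv r p))) ∂unifSquare
      ≤ ENNReal.ofReal (4 * (n * r^2) * Real.exp (-(n * r^2 / 4)) + 16 * √(lam / (n * r^2))) := by
  have hn0 : (0:ℝ) < n := by exact_mod_cast hn
  have ha : 0 < n * r / 2 := by positivity
  have hae : ∀ᵐ p ∂(unifSquare.restrict (QI r)ᶜ), p ∈ unitSquare ∧ p ∈ (QI r)ᶜ := by
    have h1 : ∀ᵐ p ∂unifSquare, p ∈ unitSquare := ae_restrict_mem measurableSet_unitSquare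
    filter_upwards [ae_restrict_of_ae h1, ae_restrict_mem (measurableSet_QI r).compl] with p h2 h3
    exact ⟨h2, h3⟩
  have hm : ∀ i : Fin 2, Measurable fun p : Pt => p i := measurable_coord
  have hI1 : ∀ i : Fin 2, ∫⁻ p, ENNReal.ofReal (Real.exp (-((n * r / 2) * |p i|))) ∂unifSquare
      ≤ ENNReal.ofReal (4 / (n * r)) := by
    intro i
    refine (unif_lintegral_coord_le i (fun t => ENNReal.ofReal (Real.exp (-((n * r / 2) * |t|))))
      (by fun_prop)).trans ((lintegral_exp_abs ha).trans (le_of_eq ?_))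
    congr 1; field_simp; norm_num
  have hI2 : ∀ i : Fin 2, ∫⁻ p, ENNReal.ofReal (Real.exp (-((n * r / 2) * |1 - p i|))) ∂unifSquare
      ≤ ENNReal.ofReal (4 / (n * r)) := by
    intro i
    refine (unif_lintegral_coord_le i (fun t => ENNReal.ofReal (Real.exp (-((n * r / 2) * |1 - t|))))
      (by fun_prop)).trans ?_
    rw [lintegral_sub_left_eq_self (fun t => ENNReal.ofReal (Real.exp (-((n * r / 2) * |t|)))) 1]
    refine ((lintegral_exp_abs ha).trans (le_of_eq ?_))
    congr 1; field_simp; norm_num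
  have hb : ∫⁻ p in (QI r)ᶜ, ENNReal.ofReal (Real.exp (-(n * vv r p))) ∂unifSquare ≤
      ENNReal.ofReal (Real.exp (-(n * r^2 / 4))) * ENNReal.ofReal (4 * r^2) +
      ENNReal.ofReal (Real.exp (-(n * (Real.pi * r^2) / 2))) * ∑ i : Fin 2,
        (ENNReal.ofReal (4 / (n * r)) + ENNReal.ofReal (4 / (n * r))) := by
    calc _ ≤ ∫⁻ p in (QI r)ᶜ, ((corner r).indicator (fun _ => ENNReal.ofReal (Real.exp (-(n * r^2 / 4)))) p
          + ENNReal.ofReal (Real.exp (-(n * (Real.pi * r^2) / 2))) * ∑ i : Fin 2,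
          (ENNReal.ofReal (Real.exp (-((n * r / 2) * |p i|))) +
          ENNReal.ofReal (Real.exp (-((n * r / 2) * |1 - p i|))))) ∂unifSquare := by
          refine lintegral_mono_ae ?_
          filter_upwards [hae] with p hp
          exact est_pointwise n hr hr1 hp.1 hp.2
      _ ≤ ∫⁻ p, ((corner r).indicator (fun _ => ENNReal.ofReal (Real.exp (-(n * r^2 / 4)))) p
          + ENNReal.ofReal (Real.exp (-(n * (Real.pi * r^2) / 2))) * ∑ i : Fin 2,
          (ENNReal.ofReal (Real.exp (-((n * r / 2) * |p i|))) +
          ENNReal.ofReal (Real.exp (-((n * r / 2) * |1 - p i|))))) ∂unifSquare :=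
          setLIntegral_le_lintegral _ _
      _ ≤ _ := by
          rw [lintegral_add_left (measurable_const.indicator (measurableSet_corner r)),
            lintegral_indicator (measurableSet_corner r), setLIntegral_const,
            lintegral_const_mul _ (by fun_prop), lintegral_finsetSum _ (by intro i _; fun_prop)]
          gcongr with i
          · exact unif_corner_le hr.le
          · rw [lintegral_add_left (by fun_prop)]
            gcongr
            · exact hI1 i
            · exact hI2 i
  refine (mul_le_mul_right hb _).trans (le_of_eq ?_)
  have hs : √(lam / (n * r^2)) = Real.exp (-(n * (Real.pi * r^2) / 2)) / r := by
    rw [← hlam, Real.sqrt_eq_iff_mul_self_eq (by positivity) (by positivity)]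
    rw [div_mul_div_comm, ← Real.exp_add]
    field_simp
    ring_nf
  rw [hs, Finset.sum_const, Finset.card_univ, Fintype.card_fin, ← ENNReal.ofReal_add (by positivity) (by positivity),
    ← ENNReal.ofReal_mul (by positivity), ← ENNReal.ofReal_nsmul, ← ENNReal.ofReal_mul (by positivity),
    ← ENNReal.ofReal_add (by positivity) (by positivity), ← ENNReal.ofReal_natCast, ← ENNReal.ofReal_mul (by positivity)]
  congr 1
  simp only [nsmul_eq_mul]
  field_simp
  ring

lemma est_all (n : ℕ) {r lam : ℝ} (hn : 1 ≤ n) (hr : 0 < r) (hr1 : r ≤ 1 / 2)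
    (hlam : n * Real.exp (-(n * (Real.pi * r^2))) = lam) :
    (n:ℝ≥0∞) * ∫⁻ p, ENNReal.ofReal (Real.exp (-(n * vv r p))) ∂unifSquare
      ≤ ENNReal.ofReal (lam + (4 * (n * r^2) * Real.exp (-(n * r^2 / 4)) + 16 * √(lam / (n * r^2)))) := by
  have hl0 : 0 ≤ lam := by rw [← hlam]; positivity
  rw [← lintegral_add_compl _ (measurableSet_QI r), mul_add, ENNReal.ofReal_add hl0 (by positivity)]
  refine add_le_add ?_ (est_boundary n hn hr hr1 hlam)
  calc (n:ℝ≥0∞) * ∫⁻ p in QI r, ENNReal.ofReal (Real.exp (-(n * vv r p))) ∂unifSquare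
      = (n:ℝ≥0∞) * ∫⁻ p in QI r, ENNReal.ofReal (Real.exp (-(n * (Real.pi * r^2)))) ∂unifSquare := by
        congr 1
        refine setLIntegral_congr_fun (measurableSet_QI r) fun p hp => ?_
        rw [vv_interior hr.le hp]
    _ ≤ (n:ℝ≥0∞) * (ENNReal.ofReal (Real.exp (-(n * (Real.pi * r^2)))) * 1) := by
        rw [setLIntegral_const]
        gcongr
        exact prob_le_one
    _ = ENNReal.ofReal lam := by
        rw [mul_one, ← hlam, ENNReal.ofReal_mul (by positivity), ENNReal.ofReal_natCast]


/-! ### Bad events with one distinguished point -/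

lemma prob_one_union_le {n : ℕ} (S : Set Pt) (hS : MeasurableSet S) (R : Pt → Set Pt)
    (hR : MeasurableSet {q : Pt × Pt | q.2 ∈ R q.1}) :
    PP n {x | ∃ i, x i ∈ S ∧ ∀ j, j ≠ i → x j ∉ R (x i)} ≤
      ENNReal.ofReal (Real.exp 1) *
      ((n:ℝ≥0∞) * ∫⁻ a in S, ENNReal.ofReal (Real.exp (-(n * unifSquare.real (R a)))) ∂unifSquare) := by
  have hR1 : MeasurableSet {q : (Fin 1 → Pt) × Pt | q.2 ∈ R (q.1 0)} :=
    (by fun_prop : Measurable fun q : (Fin 1 → Pt) × Pt => (q.1 0, q.2)) hR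
  have hS1 : MeasurableSet {y : Fin 1 → Pt | y 0 ∈ S} := measurable_pi_apply 0 hS
  have h := prob_tuple_union_le (n := n) {y : Fin 1 → Pt | y 0 ∈ S} hS1 (fun y => R (y 0)) hR1
  have hsub : {x : Fin n → Pt | ∃ i, x i ∈ S ∧ ∀ j, j ≠ i → x j ∉ R (x i)} ⊆
      {x | ∃ f : Fin 1 ↪ Fin n, (x ∘ f) ∈ {y : Fin 1 → Pt | y 0 ∈ S} ∧
        ∀ j, j ∉ range f → x j ∉ R ((x ∘ f) 0)} := by
    rintro x ⟨i, hi, hj⟩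
    refine ⟨⟨fun _ => i, fun a b _ => Subsingleton.elim a b⟩, hi, fun j hj' => hj j ?_⟩
    rintro rfl
    exact hj' ⟨0, rfl⟩
  refine (measure_mono hsub).trans (h.trans ?_)
  rw [pow_one]
  have hmeas : Measurable fun a : Pt => unifSquare.real (R a) := measurable_unif_real R hR
  rw [← lintegral_indicator hS1, lintegral_PP_one _ (by
    refine Measurable.indicator ?_ hS1
    have : Measurable fun y : Fin 1 → Pt => unifSquare.real (R (y 0)) := hmeas.comp (measurable_pi_apply 0)
    fun_prop), mul_left_comm]
  gcongr
  rw [← lintegral_const_mul _ (by fun_prop), ← lintegral_indicator hS]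
  refine lintegral_mono fun a => ?_
  by_cases ha : a ∈ S
  · rw [indicator_of_mem ha, indicator_of_mem (by simpa using ha)]
    have := exp_shift n 1 (t := unifSquare.real (R a)) measureReal_nonneg measureReal_le_one
    simpa using this
  · rw [indicator_of_notMem (by simpa using ha)]; exact zero_le

/-- some vertex near the boundary is isolated -/
def badIso (n : ℕ) (r : ℝ) : Set (Fin n → Pt) := {x | ∃ i, x i ∈ (QI r)ᶜ ∧ ∀ j, j ≠ i → r < ‖x j - x i‖}

lemma measurableSet_ball_prod (r : ℝ) : MeasurableSet {q : Pt × Pt | q.2 ∈ Metric.closedBall q.1 r} := by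
  have : MeasurableSet {q : Pt × Pt | dist q.2 q.1 ≤ r} := measurableSet_le (by fun_prop) (by fun_prop)
  exact this

lemma prob_badIso (n : ℕ) {r lam : ℝ} (hn : 1 ≤ n) (hr : 0 < r) (hr1 : r ≤ 1 / 2)
    (hlam : n * Real.exp (-(n * (Real.pi * r^2))) = lam) :
    PP n (badIso n r) ≤ ENNReal.ofReal
      (Real.exp 1 * (4 * (n * r^2) * Real.exp (-(n * r^2 / 4)) + 16 * √(lam / (n * r^2)))) := by
  have h := prob_one_union_le (n := n) (QI r)ᶜ (measurableSet_QI r).compl (fun a => Metric.closedBall a r)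
    (measurableSet_ball_prod r)
  have e : badIso n r = {x | ∃ i, x i ∈ (QI r)ᶜ ∧ ∀ j, j ≠ i → x j ∉ Metric.closedBall (x i) r} := by
    ext x; simp [badIso, dist_eq_norm]
  rw [e, ENNReal.ofReal_mul (Real.exp_pos _).le]
  refine h.trans ?_
  gcongr
  exact est_boundary n hn hr hr1 hlam

/-- an extremal point in a corner -/
def badCorner (n : ℕ) (r e : ℝ) : Set (Fin n → Pt) :=
  {x | ∃ i, x i ∈ corner (301 * r) ∩ ({p : Pt | 0 ≤ p 0 + e * (r/2)} ∩ {p : Pt | p 0 + e * (r/2) ≤ 1}) ∧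
    ∀ j, j ≠ i → x j ∉ halfDisc r 0 e (x i)}

lemma measurableSet_halfDisc_prod (r e : ℝ) (i : Fin 2) :
    MeasurableSet {q : Pt × Pt | q.2 ∈ halfDisc r i e q.1} := by
  have hm := measurable_coord i
  have h1 : MeasurableSet {q : Pt × Pt | ‖q.2 - q.1‖ ≤ r} := measurableSet_le (by fun_prop) (by fun_prop)
  have h2 : MeasurableSet {q : Pt × Pt | 0 < e * (q.2 i - q.1 i)} :=
    measurableSet_lt (by fun_prop) (by fun_prop)
  exact h1.inter h2

lemma prob_badCorner (n : ℕ) {r e : ℝ} (he : e = 1 ∨ e = -1) (hr : 0 < r) (hr1 : r ≤ 1) :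
    PP n (badCorner n r e) ≤ ENNReal.ofReal
      (Real.exp 1 * (4 * 301^2 * (n * r^2) * Real.exp (-(n * r^2 / 4)))) := by
  have hm := measurable_coord 0
  have hS : MeasurableSet (corner (301 * r) ∩ ({p : Pt | 0 ≤ p 0 + e * (r/2)} ∩ {p : Pt | p 0 + e * (r/2) ≤ 1})) :=
    (measurableSet_corner _).inter ((measurableSet_le (by fun_prop) (by fun_prop)).inter
      (measurableSet_le (by fun_prop) (by fun_prop)))
  have h := prob_one_union_le (n := n) _ hS (fun a => halfDisc r 0 e a) (measurableSet_halfDisc_prod r e 0)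
  rw [ENNReal.ofReal_mul (Real.exp_pos _).le]
  refine h.trans ?_
  gcongr
  calc _ ≤ (n:ℝ≥0∞) * ∫⁻ a in (corner (301 * r) ∩ ({p : Pt | 0 ≤ p 0 + e * (r/2)} ∩ {p : Pt | p 0 + e * (r/2) ≤ 1})),
          ENNReal.ofReal (Real.exp (-(n * r^2 / 4))) ∂unifSquare := by
        refine mul_le_mul_right ?_ _
        refine lintegral_mono_ae ?_
        have h1 : ∀ᵐ p ∂unifSquare, p ∈ unitSquare := ae_restrict_mem measurableSet_unitSquare
        filter_upwards [ae_restrict_of_ae h1, ae_restrict_mem hS] with p h2 h3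
        refine ENNReal.ofReal_le_ofReal (Real.exp_le_exp.2 ?_)
        have := halfDisc_ge hr.le hr1 0 e he h2 h3.2.1 h3.2.2
        have hn0 : (0:ℝ) ≤ n := by positivity
        nlinarith
    _ ≤ (n:ℝ≥0∞) * (ENNReal.ofReal (Real.exp (-(n * r^2 / 4))) * ENNReal.ofReal (4 * (301 * r)^2)) := by
        rw [setLIntegral_const]
        gcongr
        exact (measure_mono inter_subset_left).trans (unif_corner_le (by positivity))
    _ = _ := by
        rw [← ENNReal.ofReal_mul (by positivity), ← ENNReal.ofReal_natCast, ← ENNReal.ofReal_mul (by positivity)]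
        congr 1; ring


/-! ### Bad events with two or three distinguished points -/

structure TripleCond (r : ℝ) (i : Fin 2) (e : ℝ) (x y z : Pt) : Prop where
  hxz : x i ≤ z i
  hzy : z i ≤ y i
  h0 : 0 ≤ z (i + 1) + e * (r / 2)
  h1 : z (i + 1) + e * (r / 2) ≤ 1
  hxy : y i - x i ≤ 300 * r
  d1 : |y (i + 1) - x (i + 1)| ≤ y i - x i
  d2 : |z (i + 1) - x (i + 1)| ≤ y i - x i
  d3 : |z (i + 1) - y (i + 1)| ≤ y i - x i
  hfree : ∃ j, (r ≤ x j ∧ x j ≤ 1 - r) ∧ (r ≤ y j ∧ y j ≤ 1 - r)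

lemma measurableSet_tripleCond (r : ℝ) (i : Fin 2) (e : ℝ) :
    MeasurableSet {q : Pt × Pt × Pt | TripleCond r i e q.1 q.2.1 q.2.2} := by
  have hm : ∀ i : Fin 2, Measurable fun p : Pt => p i := measurable_coord
  have a1 : MeasurableSet {q : Pt × Pt × Pt | q.1 i ≤ q.2.2 i} := measurableSet_le (by fun_prop) (by fun_prop)
  have a2 : MeasurableSet {q : Pt × Pt × Pt | q.2.2 i ≤ q.2.1 i} := measurableSet_le (by fun_prop) (by fun_prop)
  have a3 : MeasurableSet {q : Pt × Pt × Pt | 0 ≤ q.2.2 (i + 1) + e * (r / 2)} :=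
    measurableSet_le (by fun_prop) (by fun_prop)
  have a4 : MeasurableSet {q : Pt × Pt × Pt | q.2.2 (i + 1) + e * (r / 2) ≤ 1} :=
    measurableSet_le (by fun_prop) (by fun_prop)
  have a5 : MeasurableSet {q : Pt × Pt × Pt | q.2.1 i - q.1 i ≤ 300 * r} :=
    measurableSet_le (by fun_prop) (by fun_prop)
  have a6 : MeasurableSet {q : Pt × Pt × Pt | |q.2.1 (i+1) - q.1 (i+1)| ≤ q.2.1 i - q.1 i} :=
    measurableSet_le (by fun_prop) (by fun_prop)
  have a7 : MeasurableSet {q : Pt × Pt × Pt | |q.2.2 (i+1) - q.1 (i+1)| ≤ q.2.1 i - q.1 i} :=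
    measurableSet_le (by fun_prop) (by fun_prop)
  have a8 : MeasurableSet {q : Pt × Pt × Pt | |q.2.2 (i+1) - q.2.1 (i+1)| ≤ q.2.1 i - q.1 i} :=
    measurableSet_le (by fun_prop) (by fun_prop)
  have a9 : MeasurableSet (⋃ j : Fin 2, ({q : Pt × Pt × Pt | r ≤ q.1 j} ∩ {q : Pt × Pt × Pt | q.1 j ≤ 1 - r}) ∩
      ({q : Pt × Pt × Pt | r ≤ q.2.1 j} ∩ {q : Pt × Pt × Pt | q.2.1 j ≤ 1 - r})) :=
    MeasurableSet.iUnion fun j => ((measurableSet_le (by fun_prop) (by fun_prop)).inter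
      (measurableSet_le (by fun_prop) (by fun_prop))).inter ((measurableSet_le (by fun_prop) (by fun_prop)).inter
      (measurableSet_le (by fun_prop) (by fun_prop)))
  have : {q : Pt × Pt × Pt | TripleCond r i e q.1 q.2.1 q.2.2} =
      {q : Pt × Pt × Pt | q.1 i ≤ q.2.2 i} ∩ ({q : Pt × Pt × Pt | q.2.2 i ≤ q.2.1 i} ∩
      ({q : Pt × Pt × Pt | 0 ≤ q.2.2 (i + 1) + e * (r / 2)} ∩ ({q : Pt × Pt × Pt | q.2.2 (i + 1) + e * (r / 2) ≤ 1} ∩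
      ({q : Pt × Pt × Pt | q.2.1 i - q.1 i ≤ 300 * r} ∩ ({q : Pt × Pt × Pt | |q.2.1 (i+1) - q.1 (i+1)| ≤ q.2.1 i - q.1 i} ∩
      ({q : Pt × Pt × Pt | |q.2.2 (i+1) - q.1 (i+1)| ≤ q.2.1 i - q.1 i} ∩
      ({q : Pt × Pt × Pt | |q.2.2 (i+1) - q.2.1 (i+1)| ≤ q.2.1 i - q.1 i} ∩
      (⋃ j : Fin 2, ({q : Pt × Pt × Pt | r ≤ q.1 j} ∩ {q : Pt × Pt × Pt | q.1 j ≤ 1 - r}) ∩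
      ({q : Pt × Pt × Pt | r ≤ q.2.1 j} ∩ {q : Pt × Pt × Pt | q.2.1 j ≤ 1 - r})))))))))  := by
    ext q
    simp only [mem_inter_iff, mem_iUnion, mem_ofPred_eq]
    constructor
    · rintro ⟨h1, h2, h3, h4, h5, h6, h7, h8, h9⟩
      exact ⟨h1, h2, h3, h4, h5, h6, h7, h8, h9⟩
    · rintro ⟨h1, h2, h3, h4, h5, h6, h7, h8, h9⟩
      exact ⟨h1, h2, h3, h4, h5, h6, h7, h8, h9⟩
  rw [this]
  exact a1.inter (a2.inter (a3.inter (a4.inter (a5.inter (a6.inter (a7.inter (a8.inter a9)))))))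

lemma measurableSet_URegion_prod (r : ℝ) (i : Fin 2) (e : ℝ) :
    MeasurableSet {q : (Pt × Pt × Pt) × Pt | q.2 ∈ URegion r i e q.1.1 q.1.2.1 q.1.2.2} := by
  have hm : ∀ i : Fin 2, Measurable fun p : Pt => p i := measurable_coord
  have b1 : MeasurableSet {q : (Pt × Pt × Pt) × Pt | q.2 ∈ halfDisc r i (-1) q.1.1} :=
    (by fun_prop : Measurable fun q : (Pt × Pt × Pt) × Pt => (q.1.1, q.2)) (measurableSet_halfDisc_prod r (-1) i)
  have b2 : MeasurableSet {q : (Pt × Pt × Pt) × Pt | q.2 ∈ halfDisc r i 1 q.1.2.1} :=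
    (by fun_prop : Measurable fun q : (Pt × Pt × Pt) × Pt => (q.1.2.1, q.2)) (measurableSet_halfDisc_prod r 1 i)
  have h1 : MeasurableSet {q : (Pt × Pt × Pt) × Pt | q.1.1 i < q.2 i} := measurableSet_lt (by fun_prop) (by fun_prop)
  have h2 : MeasurableSet {q : (Pt × Pt × Pt) × Pt | q.2 i < q.1.2.1 i} := measurableSet_lt (by fun_prop) (by fun_prop)
  have h3 : MeasurableSet {q : (Pt × Pt × Pt) × Pt | |q.2 i - q.1.2.2 i| ≤ r / 2} :=
    measurableSet_le (by fun_prop) (by fun_prop)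
  have h4 : MeasurableSet {q : (Pt × Pt × Pt) × Pt | 0 < e * (q.2 (i + 1) - q.1.2.2 (i + 1))} :=
    measurableSet_lt (by fun_prop) (by fun_prop)
  have h5 : MeasurableSet {q : (Pt × Pt × Pt) × Pt | e * (q.2 (i + 1) - q.1.2.2 (i + 1)) ≤ r / 2} :=
    measurableSet_le (by fun_prop) (by fun_prop)
  exact (b1.union b2).union (h1.inter (h2.inter (h3.inter (h4.inter h5))))

/-- exponential weight -/
noncomputable def HH (κ : ℝ) (u : Pt) : ℝ≥0∞ := ENNReal.ofReal (Real.exp (-(κ * (|u 0| + |u 1|))))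

lemma measurable_HH (κ : ℝ) : Measurable (HH κ) := by
  have hm : ∀ i : Fin 2, Measurable fun p : Pt => p i := measurable_coord
  unfold HH; fun_prop

lemma lintegral_HH {κ : ℝ} (hκ : 0 < κ) : ∫⁻ u, HH κ u ≤ ENNReal.ofReal ((2 / κ) ^ 2) := by
  have h := lintegral_coord_mul 0 (fun t => ENNReal.ofReal (Real.exp (-(κ * |t|))))
    (fun t => ENNReal.ofReal (Real.exp (-(κ * |t|)))) (by fun_prop) (by fun_prop)
  have e : ∫⁻ u, HH κ u = ∫⁻ p : Pt, ENNReal.ofReal (Real.exp (-(κ * |p 0|))) *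
      ENNReal.ofReal (Real.exp (-(κ * |p (0 + 1)|))) := by
    congr 1; ext u
    rw [HH, ← ENNReal.ofReal_mul (Real.exp_pos _).le, ← Real.exp_add]
    congr 2; simp only [zero_add]; ring
  rw [e, h, pow_two, ENNReal.ofReal_mul (by positivity)]
  gcongr <;> exact lintegral_exp_abs hκ

lemma HH_le_one {κ : ℝ} (hκ : 0 ≤ κ) (u : Pt) : HH κ u ≤ 1 := by
  rw [HH, ← ENNReal.ofReal_one]
  apply ENNReal.ofReal_le_ofReal
  rw [Real.exp_le_one_iff]
  have : 0 ≤ κ * (|u 0| + |u 1|) := by positivity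
  linarith

lemma peel {k : ℕ} (j : Fin (k + 1)) (b : Fin k) {κ : ℝ} (hκ : 0 < κ) (F : (Fin k → Pt) → ℝ≥0∞)
    (hF : Measurable F) :
    ∫⁻ x, F (fun t => x (j.succAbove t)) * HH κ (x j - x (j.succAbove b)) ∂(PP (k + 1)) ≤
      (∫⁻ y, F y ∂(PP k)) * ENNReal.ofReal ((2 / κ) ^ 2) := by
  have hH := measurable_HH κ
  rw [lintegral_PP_succ j _ (by
    have h1 : Measurable fun x : Fin (k+1) → Pt => F (fun t => x (j.succAbove t)) :=
      hF.comp (by fun_prop)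
    have h2 : Measurable fun x : Fin (k+1) → Pt => HH κ (x j - x (j.succAbove b)) := hH.comp (by fun_prop)
    exact h1.mul h2), ← lintegral_mul_const _ hF]
  refine lintegral_mono fun y => ?_
  simp only [Fin.insertNth_apply_succAbove, Fin.insertNth_apply_same]
  have h3 : Measurable fun a : Pt => HH κ (a - y b) := hH.comp (by fun_prop)
  rw [lintegral_const_mul _ h3]
  gcongr
  calc ∫⁻ a, HH κ (a - y b) ∂unifSquare ≤ ∫⁻ a, HH κ (a - y b) :=
        lintegral_mono' Measure.restrict_le_self le_rfl
    _ = ∫⁻ a, HH κ a := lintegral_sub_right_eq_self _ _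
    _ ≤ _ := lintegral_HH hκ

/-- weight of a point -/
noncomputable def EE (n : ℕ) (r : ℝ) (p : Pt) : ℝ≥0∞ := ENNReal.ofReal (Real.exp (-(n * vv r p)))

lemma measurable_EE (n : ℕ) (r : ℝ) : Measurable (EE n r) := by
  have := measurable_vv r
  unfold EE; fun_prop

lemma abs_sum_coord (i : Fin 2) (u : Pt) : |u 0| + |u 1| = |u i| + |u (i + 1)| := by
  fin_cases i
  · rfl
  · exact add_comm _ _

lemma URegion_exp_le (n k : ℕ) {r : ℝ} (hr : 0 < r) (hr1 : 302 * r ≤ 1) (i : Fin 2) (e : ℝ) (he : e = 1 ∨ e = -1)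
    {x y z : Pt} (hx : x ∈ unitSquare) (hy : y ∈ unitSquare) (hz : z ∈ unitSquare)
    (hc : TripleCond r i e x y z) :
    ENNReal.ofReal (Real.exp (-((n - k : ℕ) * unifSquare.real (URegion r i e x y z)))) ≤
      ENNReal.ofReal (Real.exp k) *
        (EE n r x * HH (n * r / 4800) (y - x) * HH (n * r / 4800) (z - x) +
          EE n r y * HH (n * r / 4800) (x - y) * HH (n * r / 4800) (z - y)) := by
  have hn0 : (0:ℝ) ≤ n := by positivity
  refine (exp_shift n k measureReal_nonneg measureReal_le_one).trans ?_
  gcongr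
  have hge := URegion_ge hr.le i e he hx hy hz hc.hxz hc.hzy hc.h0 hc.h1 (by linarith [hc.hxy]) hc.hfree
  set a := y i - x i with ha
  have ha0 : 0 ≤ a := by linarith [hc.hxz, hc.hzy]
  have hmin : a / 600 ≤ min a (r/2) := le_min (by linarith) (by linarith [hc.hxy])
  have hge2 : min (vv r x) (vv r y) + a * r / 1200 ≤ unifSquare.real (URegion r i e x y z) := by nlinarith
  have key : ∀ w p q : Pt, min (vv r x) (vv r y) = vv r w → |p i - w i| ≤ a → |p (i+1) - w (i+1)| ≤ a →
      |q i - w i| ≤ a → |q (i+1) - w (i+1)| ≤ a →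
      ENNReal.ofReal (Real.exp (-(n * unifSquare.real (URegion r i e x y z)))) ≤
      EE n r w * HH (n * r / 4800) (p - w) * HH (n * r / 4800) (q - w) := by
    intro w p q hw h1 h2 h3 h4
    rw [EE, HH, HH, ← ENNReal.ofReal_mul (Real.exp_pos _).le, ← Real.exp_add,
      ← ENNReal.ofReal_mul (Real.exp_pos _).le, ← Real.exp_add, abs_sum_coord i, abs_sum_coord i]
    refine ENNReal.ofReal_le_ofReal (Real.exp_le_exp.2 ?_)
    simp only [PiLp.sub_apply]
    rw [hw] at hge2
    have h5 : |p i - w i| + |p (i+1) - w (i+1)| + (|q i - w i| + |q (i+1) - w (i+1)|) ≤ 4 * a := by linarith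
    have h6 : (n:ℝ) * r * (|p i - w i| + |p (i+1) - w (i+1)| + (|q i - w i| + |q (i+1) - w (i+1)|)) ≤
      n * r * (4 * a) := by gcongr
    have h7 : (n:ℝ) * (vv r w + a * r / 1200) ≤ n * unifSquare.real (URegion r i e x y z) := by gcongr
    nlinarith
  have hxz := hc.hxz
  have hzy := hc.hzy
  rcases le_total (vv r x) (vv r y) with h | h
  · refine le_add_right (key x y z (min_eq_left h) ?_ hc.d1 ?_ hc.d2)
    · rw [abs_of_nonneg ha0]
    · rw [abs_of_nonneg (by linarith)]; linarith
  · refine le_add_left (key y x z (min_eq_right h) ?_ ?_ ?_ hc.d3)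
    · rw [abs_sub_comm, abs_of_nonneg ha0]
    · rw [abs_sub_comm]; exact hc.d1
    · rw [abs_sub_comm, abs_of_nonneg (by linarith)]; linarith

/-- a cluster with extremal points given by `k` of the sample points -/
def badCl (k : ℕ) (a b w : Fin k) (n : ℕ) (r : ℝ) (i : Fin 2) (e : ℝ) : Set (Fin n → Pt) :=
  {x | ∃ f : Fin k ↪ Fin n, TripleCond r i e (x (f a)) (x (f b)) (x (f w)) ∧
    ∀ j, j ∉ range f → x j ∉ URegion r i e (x (f a)) (x (f b)) (x (f w))}

lemma prob_badCl (k : ℕ) (a b w : Fin k) (n : ℕ) {r : ℝ} (hr : 0 < r) (hr1 : 302 * r ≤ 1)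
    (i : Fin 2) (e : ℝ) (he : e = 1 ∨ e = -1) :
    PP n (badCl k a b w n r i e) ≤ (n:ℝ≥0∞) ^ k * (ENNReal.ofReal (Real.exp k) *
      ∫⁻ y, (EE n r (y a) * HH (n * r / 4800) (y b - y a) * HH (n * r / 4800) (y w - y a) +
          EE n r (y b) * HH (n * r / 4800) (y a - y b) * HH (n * r / 4800) (y w - y b)) ∂(PP k)) := by
  let S : Set (Fin k → Pt) := {y | TripleCond r i e (y a) (y b) (y w)}
  have hS : MeasurableSet S :=
    (by fun_prop : Measurable fun y : Fin k → Pt => (y a, y b, y w)) (measurableSet_tripleCond r i e)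
  have hR : MeasurableSet {q : (Fin k → Pt) × Pt | q.2 ∈ URegion r i e (q.1 a) (q.1 b) (q.1 w)} :=
    (by fun_prop : Measurable fun q : (Fin k → Pt) × Pt => ((q.1 a, q.1 b, q.1 w), q.2))
      (measurableSet_URegion_prod r i e)
  have h := prob_tuple_union_le (n := n) S hS (fun y => URegion r i e (y a) (y b) (y w)) hR
  refine h.trans ?_
  refine mul_le_mul_right ?_ _
  have hE := measurable_EE n r
  have hH := measurable_HH (n * r / 4800)
  rw [← lintegral_const_mul _ (by fun_prop)]
  refine le_trans (lintegral_mono_ae ?_) (setLIntegral_le_lintegral S _)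
  filter_upwards [ae_restrict_of_ae (ae_PP_mem (k := k)), ae_restrict_mem hS] with y h1 h2
  exact URegion_exp_le n k hr hr1 i e he (h1 a) (h1 b) (h1 w) h2

lemma prob_badCl_two (w : Fin 2) (n : ℕ) (hn : 1 ≤ n) {r : ℝ} (hr : 0 < r) (hr1 : 302 * r ≤ 1)
    (i : Fin 2) (e : ℝ) (he : e = 1 ∨ e = -1) (A : ℝ) (hA0 : 0 ≤ A)
    (hA : (n:ℝ≥0∞) * ∫⁻ p, EE n r p ∂unifSquare ≤ ENNReal.ofReal A) :
    PP n (badCl 2 0 1 w n r i e) ≤ ENNReal.ofReal (2 * Real.exp 2 * A * (9600 ^ 2 / (n * r^2))) := by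
  have hn0 : (0:ℝ) < n := by exact_mod_cast hn
  have hκ : 0 < n * r / 4800 := by positivity
  set κ := n * r / 4800 with hκd
  have hE := measurable_EE n r
  have hH := measurable_HH κ
  set I := ∫⁻ p, EE n r p ∂unifSquare with hI
  have e1 : ∫⁻ y : Fin 1 → Pt, EE n r (y 0) ∂(PP 1) = I := by
    rw [lintegral_PP_one _ (by fun_prop)]; rfl
  have p1 := peel (1 : Fin 2) (0 : Fin 1) hκ (fun y : Fin 1 → Pt => EE n r (y 0)) (by fun_prop)
  have p2 := peel (0 : Fin 2) (0 : Fin 1) hκ (fun y : Fin 1 → Pt => EE n r (y 0)) (by fun_prop)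
  rw [e1] at p1 p2
  have p1' : ∫⁻ x : Fin 2 → Pt, EE n r (x 0) * HH κ (x 1 - x 0) ∂(PP 2) ≤ I * ENNReal.ofReal ((2 / κ) ^ 2) := p1
  have p2' : ∫⁻ x : Fin 2 → Pt, EE n r (x 1) * HH κ (x 0 - x 1) ∂(PP 2) ≤ I * ENNReal.ofReal ((2 / κ) ^ 2) := p2
  refine (prob_badCl 2 0 1 w n hr hr1 i e he).trans ?_
  calc _ ≤ (n:ℝ≥0∞) ^ 2 * (ENNReal.ofReal (Real.exp 2) *
      ∫⁻ y : Fin 2 → Pt, (EE n r (y 0) * HH κ (y 1 - y 0) + EE n r (y 1) * HH κ (y 0 - y 1)) ∂(PP 2)) := by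
        refine mul_le_mul_right (mul_le_mul' (by norm_num) ?_) _
        · refine lintegral_mono fun y => ?_
          refine add_le_add ?_ ?_
          · exact mul_le_of_le_one_right' (HH_le_one hκ.le _)
          · exact mul_le_of_le_one_right' (HH_le_one hκ.le _)
    _ ≤ (n:ℝ≥0∞) ^ 2 * (ENNReal.ofReal (Real.exp 2) * (I * ENNReal.ofReal ((2 / κ) ^ 2) +
          I * ENNReal.ofReal ((2 / κ) ^ 2))) := by
        rw [lintegral_add_left (by fun_prop)]
        gcongr
    _ = ((n:ℝ≥0∞) * I) * ((n:ℝ≥0∞) * (ENNReal.ofReal (Real.exp 2) * (2 * ENNReal.ofReal ((2 / κ) ^ 2)))) := by ring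
    _ ≤ ENNReal.ofReal A * ((n:ℝ≥0∞) * (ENNReal.ofReal (Real.exp 2) * (2 * ENNReal.ofReal ((2 / κ) ^ 2)))) := by
        gcongr
    _ = _ := by
        have e2 : (2:ℝ≥0∞) = ENNReal.ofReal 2 := by simp
        rw [e2, ← ENNReal.ofReal_natCast, ← ENNReal.ofReal_mul (by positivity),
          ← ENNReal.ofReal_mul (by positivity), ← ENNReal.ofReal_mul (by positivity),
          ← ENNReal.ofReal_mul (by positivity)]
        congr 1
        rw [hκd]; field_simp; ring

lemma prob_badCl_three (n : ℕ) (hn : 1 ≤ n) {r : ℝ} (hr : 0 < r) (hr1 : 302 * r ≤ 1)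
    (i : Fin 2) (e : ℝ) (he : e = 1 ∨ e = -1) (A : ℝ) (hA0 : 0 ≤ A)
    (hA : (n:ℝ≥0∞) * ∫⁻ p, EE n r p ∂unifSquare ≤ ENNReal.ofReal A) :
    PP n (badCl 3 0 1 2 n r i e) ≤ ENNReal.ofReal (2 * Real.exp 3 * A * (9600 ^ 2 / (n * r^2)) ^ 2) := by
  have hn0 : (0:ℝ) < n := by exact_mod_cast hn
  have hκ : 0 < n * r / 4800 := by positivity
  set κ := n * r / 4800 with hκd
  have hE := measurable_EE n r
  have hH := measurable_HH κ
  set I := ∫⁻ p, EE n r p ∂unifSquare with hI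
  have e1 : ∫⁻ y : Fin 1 → Pt, EE n r (y 0) ∂(PP 1) = I := by
    rw [lintegral_PP_one _ (by fun_prop)]; rfl
  have p1 := peel (1 : Fin 2) (0 : Fin 1) hκ (fun y : Fin 1 → Pt => EE n r (y 0)) (by fun_prop)
  have p2 := peel (0 : Fin 2) (0 : Fin 1) hκ (fun y : Fin 1 → Pt => EE n r (y 0)) (by fun_prop)
  rw [e1] at p1 p2
  have p1' : ∫⁻ x : Fin 2 → Pt, EE n r (x 0) * HH κ (x 1 - x 0) ∂(PP 2) ≤ I * ENNReal.ofReal ((2 / κ) ^ 2) := p1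
  have p2' : ∫⁻ x : Fin 2 → Pt, EE n r (x 1) * HH κ (x 0 - x 1) ∂(PP 2) ≤ I * ENNReal.ofReal ((2 / κ) ^ 2) := p2
  have q1 := peel (2 : Fin 3) (0 : Fin 2) hκ (fun x : Fin 2 → Pt => EE n r (x 0) * HH κ (x 1 - x 0)) (by fun_prop)
  have q2 := peel (2 : Fin 3) (1 : Fin 2) hκ (fun x : Fin 2 → Pt => EE n r (x 1) * HH κ (x 0 - x 1)) (by fun_prop)
  have q1' : ∫⁻ x : Fin 3 → Pt, EE n r (x 0) * HH κ (x 1 - x 0) * HH κ (x 2 - x 0) ∂(PP 3) ≤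
    (I * ENNReal.ofReal ((2 / κ) ^ 2)) * ENNReal.ofReal ((2 / κ) ^ 2) := le_trans q1 (by gcongr)
  have q2' : ∫⁻ x : Fin 3 → Pt, EE n r (x 1) * HH κ (x 0 - x 1) * HH κ (x 2 - x 1) ∂(PP 3) ≤
    (I * ENNReal.ofReal ((2 / κ) ^ 2)) * ENNReal.ofReal ((2 / κ) ^ 2) := le_trans q2 (by gcongr)
  refine (prob_badCl 3 0 1 2 n hr hr1 i e he).trans ?_
  calc _ ≤ (n:ℝ≥0∞) ^ 3 * (ENNReal.ofReal (Real.exp 3) * ((I * ENNReal.ofReal ((2 / κ) ^ 2)) * ENNReal.ofReal ((2 / κ) ^ 2) +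
          (I * ENNReal.ofReal ((2 / κ) ^ 2)) * ENNReal.ofReal ((2 / κ) ^ 2))) := by
        rw [lintegral_add_left (by fun_prop)]
        gcongr
        norm_num
    _ = ((n:ℝ≥0∞) * I) * ((n:ℝ≥0∞) * (n * (ENNReal.ofReal (Real.exp 3) *
          (2 * (ENNReal.ofReal ((2 / κ) ^ 2) * ENNReal.ofReal ((2 / κ) ^ 2)))))) := by ring
    _ ≤ ENNReal.ofReal A * ((n:ℝ≥0∞) * (n * (ENNReal.ofReal (Real.exp 3) *
          (2 * (ENNReal.ofReal ((2 / κ) ^ 2) * ENNReal.ofReal ((2 / κ) ^ 2)))))) := by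
        gcongr
    _ = _ := by
        have e2 : (2:ℝ≥0∞) = ENNReal.ofReal 2 := by simp
        rw [e2, ← ENNReal.ofReal_natCast, ← ENNReal.ofReal_mul (by positivity),
          ← ENNReal.ofReal_mul (by positivity), ← ENNReal.ofReal_mul (by positivity),
          ← ENNReal.ofReal_mul (by positivity), ← ENNReal.ofReal_mul (by positivity),
          ← ENNReal.ofReal_mul (by positivity)]
        congr 1
        rw [hκd]; field_simp; ring


/-! ### Deterministic analysis of a small cluster -/

/-- there is an isolated vertex in the interior -/
def isoQI (n : ℕ) (r : ℝ) : Set (Fin n → Pt) := {x | ∃ i, x i ∈ QI r ∧ ∀ j, j ≠ i → r < ‖x j - x i‖}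

lemma exists_extremal {n : ℕ} (x : Fin n → Pt) {r : ℝ} (hx : ∀ v, x v ∈ unitSquare) (hr : 0 < r)
    (hr1 : 302 * r ≤ 1) (D : Finset (Fin n)) (hD : D.Nonempty)
    (hext : ∀ u ∈ D, ∀ v ∈ D, ∀ i, |x u i - x v i| ≤ 300 * r) (j : Fin 2) :
    ∃ z ∈ D, ∃ e : ℝ, (e = 1 ∨ e = -1) ∧ (∀ p ∈ D, e * (x p j - x z j) ≤ 0) ∧
      0 ≤ x z j + e * (r / 2) ∧ x z j + e * (r / 2) ≤ 1 := by
  obtain ⟨a, ha, ha'⟩ := D.exists_max_image (fun p => x p j) hD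
  obtain ⟨b, hb, hb'⟩ := D.exists_min_image (fun p => x p j) hD
  by_cases h : x a j + r / 2 ≤ 1
  · refine ⟨a, ha, 1, Or.inl rfl, fun p hp => ?_, ?_, ?_⟩
    · linarith [ha' p hp]
    · linarith [(hx a j).1]
    · linarith
  · refine ⟨b, hb, -1, Or.inr rfl, fun p hp => ?_, ?_, ?_⟩
    · linarith [hb' p hp]
    · have := (abs_le.1 (hext a ha b hb j)).2
      linarith
    · linarith [(hx b j).2]

lemma exists_long_direction {n : ℕ} (x : Fin n → Pt) (D : Finset (Fin n)) (hD : 1 < D.card) :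
    ∃ i : Fin 2, ∃ u ∈ D, ∃ v ∈ D, u ≠ v ∧ (∀ p ∈ D, x u i ≤ x p i ∧ x p i ≤ x v i) ∧
      ∀ p ∈ D, ∀ q ∈ D, |x p (i + 1) - x q (i + 1)| ≤ x v i - x u i := by
  have hne : D.Nonempty := Finset.card_pos.1 (by omega)
  have hmax : ∀ j, ∃ a ∈ D, ∀ p ∈ D, x p j ≤ x a j := fun j => D.exists_max_image (fun p => x p j) hne
  have hmin : ∀ j, ∃ a ∈ D, ∀ p ∈ D, x a j ≤ x p j := fun j => D.exists_min_image (fun p => x p j) hne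
  choose M hM hM' using hmax
  choose m hm hm' using hmin
  have hdir : ∃ i : Fin 2, x (M (i+1)) (i+1) - x (m (i+1)) (i+1) ≤ x (M i) i - x (m i) i := by
    rcases le_total (x (M (0+1)) (0+1) - x (m (0+1)) (0+1)) (x (M 0) 0 - x (m 0) 0) with h | h
    · exact ⟨0, h⟩
    · exact ⟨1, h⟩
  obtain ⟨i, hi⟩ := hdir
  have hspread : ∀ p ∈ D, ∀ q ∈ D, |x p (i + 1) - x q (i + 1)| ≤ x (M i) i - x (m i) i := by
    intro p hp q hq
    have h1 := hM' (i+1) p hp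
    have h2 := hM' (i+1) q hq
    have h3 := hm' (i+1) p hp
    have h4 := hm' (i+1) q hq
    rw [abs_le]; constructor <;> linarith
  by_cases h : m i = M i
  · obtain ⟨u, hu, v, hv, huv⟩ := Finset.one_lt_card.1 hD
    have hall : ∀ p ∈ D, x p i = x (M i) i := by
      intro p hp
      have h1 := hM' i p hp
      have h2 := hm' i p hp
      rw [h] at h2
      linarith
    refine ⟨i, u, hu, v, hv, huv, fun p hp => ?_, fun p hp q hq => ?_⟩
    · rw [hall p hp, hall u hu, hall v hv]; exact ⟨le_rfl, le_rfl⟩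
    · have := hspread p hp q hq
      rw [h] at this
      rw [hall u hu, hall v hv]
      exact this
  · exact ⟨i, m i, hm i, M i, hM i, h, fun p hp => ⟨hm' i p hp, hM' i p hp⟩, hspread⟩

lemma cluster_bad {n : ℕ} (x : Fin n → Pt) {r : ℝ} (hx : ∀ v, x v ∈ unitSquare) (hr : 0 < r)
    (hr1 : 302 * r ≤ 1) (D : Finset (Fin n)) (hD : D.Nonempty)
    (hsep : ∀ u ∈ D, ∀ v, v ∉ D → r < ‖x u - x v‖)
    (hext : ∀ u ∈ D, ∀ v ∈ D, ∀ i, |x u i - x v i| ≤ 300 * r) :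
    x ∈ isoQI n r ∨ x ∈ badIso n r ∨ (∃ e : ℝ, (e = 1 ∨ e = -1) ∧ x ∈ badCorner n r e) ∨
      ∃ (i : Fin 2) (e : ℝ), (e = 1 ∨ e = -1) ∧ (x ∈ badCl 2 0 1 0 n r i e ∨ x ∈ badCl 2 0 1 1 n r i e ∨
        x ∈ badCl 3 0 1 2 n r i e) := by
  rcases Nat.lt_or_ge 1 D.card with hcard | hcard
  swap
  · have h1 : D.card = 1 := le_antisymm hcard (Finset.card_pos.2 hD)
    obtain ⟨u, rfl⟩ := Finset.card_eq_one.1 h1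
    have hiso : ∀ j, j ≠ u → r < ‖x j - x u‖ := by
      intro j hj
      rw [norm_sub_rev]
      exact hsep u (by simp) j (by simpa using hj)
    by_cases hq : x u ∈ QI r
    · exact Or.inl ⟨u, hq, hiso⟩
    · exact Or.inr (Or.inl ⟨u, hq, hiso⟩)
  right; right
  obtain ⟨z, hz, e, he, hmaxz, h0, h1⟩ := exists_extremal x hx hr hr1 D hD hext 0
  by_cases hcor : x z ∈ corner (301 * r)
  · left
    refine ⟨e, he, z, ⟨hcor, h0, h1⟩, fun j _ hj => ?_⟩
    by_cases hjD : j ∈ D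
    · linarith [hmaxz j hjD, hj.2]
    · have := hsep z hz j hjD
      rw [norm_sub_rev] at this
      linarith [hj.1]
  right
  simp only [corner, mem_ofPred_eq] at hcor
  push Not at hcor
  obtain ⟨j0, hj1, hj2⟩ := hcor
  have hfree : ∀ p ∈ D, r ≤ x p j0 ∧ x p j0 ≤ 1 - r := by
    intro p hp
    have := abs_le.1 (hext p hp z hz j0)
    constructor <;> linarith
  obtain ⟨i, u, hu, v, hv, huv, hbd, hsp⟩ := exists_long_direction x D hcard
  obtain ⟨w, hw, e', he', hmaxw, h0', h1'⟩ := exists_extremal x hx hr hr1 D hD hext (i + 1)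
  have hT : TripleCond r i e' (x u) (x v) (x w) :=
    { hxz := (hbd w hw).1
      hzy := (hbd w hw).2
      h0 := h0'
      h1 := h1'
      hxy := (abs_le.1 (hext v hv u hu i)).2
      d1 := hsp v hv u hu
      d2 := hsp w hw u hu
      d3 := hsp w hw v hv
      hfree := ⟨j0, hfree u hu, hfree v hv⟩ }
  have hav : ∀ j, x j ∉ URegion r i e' (x u) (x v) (x w) := by
    intro j hj
    by_cases hjD : j ∈ D
    · rcases hj with (hj | hj) | hj
      · have := hj.2; linarith [(hbd j hjD).1]
      · have := hj.2; linarith [(hbd j hjD).2]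
      · have := hj.2.2.2.1
        linarith [hmaxw j hjD]
    · rcases hj with (hj | hj) | hj
      · have := hsep u hu j hjD
        rw [norm_sub_rev] at this
        linarith [hj.1]
      · have := hsep v hv j hjD
        rw [norm_sub_rev] at this
        linarith [hj.1]
      · have h2 := hsep w hw j hjD
        rw [norm_sub_rev] at h2
        apply absurd h2
        rw [not_lt, norm_le_iff_coord i hr.le]
        obtain ⟨_, _, h3, h4, h5⟩ := hj
        have h6 : (x j i - x w i)^2 ≤ (r/2)^2 := by
          rw [← sq_abs]; gcongr
        have h7 : (x j (i+1) - x w (i+1))^2 ≤ (r/2)^2 := by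
          have : (x j (i+1) - x w (i+1))^2 = (e' * (x j (i+1) - x w (i+1)))^2 := by
            rcases he' with h | h <;> rw [h] <;> ring
          rw [this]
          gcongr
        nlinarith
  refine ⟨i, e', he', ?_⟩
  by_cases hwu : w = u
  · left
    refine ⟨⟨![u, v], ?_⟩, ?_, ?_⟩
    · intro a b hab
      fin_cases a <;> fin_cases b <;> simp_all
    · rw [hwu] at hT; exact hT
    · intro j _
      have := hav j
      rw [hwu] at this; exact this
  by_cases hwv : w = v
  · right; left
    refine ⟨⟨![u, v], ?_⟩, ?_, ?_⟩
    · intro a b hab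
      fin_cases a <;> fin_cases b <;> simp_all
    · rw [hwv] at hT; exact hT
    · intro j _
      have := hav j
      rw [hwv] at this; exact this
  · right; right
    refine ⟨⟨![u, v, w], ?_⟩, hT, fun j _ => hav j⟩
    intro a b hab
    fin_cases a <;> fin_cases b <;> simp_all [eq_comm]


/-! ### Total error bound -/

noncomputable def errA (lam T : ℝ) : ℝ := 4 * T * Real.exp (-(T / 4)) + 16 * √(lam / T)

noncomputable def errTot (lam T : ℝ) : ℝ :=
  16 * winConst * lam / T + Real.exp 1 * errA lam T
    + 2 * (Real.exp 1 * (4 * 301^2 * T * Real.exp (-(T / 4))))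
    + 4 * (2 * (2 * Real.exp 2 * (lam + errA lam T) * (9600 ^ 2 / T))
      + 2 * Real.exp 3 * (lam + errA lam T) * (9600 ^ 2 / T) ^ 2)

lemma errTot_tendsto (lam : ℝ) : Tendsto (errTot lam) atTop (𝓝 0) := by
  have h1 : Tendsto (fun T : ℝ => T * Real.exp (-(T / 4))) atTop (𝓝 0) := by
    have h := Real.tendsto_pow_mul_exp_neg_atTop_nhds_zero 1
    have h2 := (h.comp (tendsto_id.atTop_div_const (by norm_num : (0:ℝ) < 4))).const_mul 4
    simp only [mul_zero] at h2
    refine h2.congr fun T => ?_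
    simp only [Function.comp, id, pow_one]
    ring
  have hinv : Tendsto (fun T : ℝ => 1 / T) atTop (𝓝 0) := by
    simpa using tendsto_inv_atTop_zero (𝕜 := ℝ)
  have h2 : Tendsto (fun T : ℝ => √(lam / T)) atTop (𝓝 0) := by
    have : Tendsto (fun T : ℝ => lam / T) atTop (𝓝 0) := by
      have := hinv.const_mul lam
      simpa [div_eq_mul_inv] using this
    have h3 := (Real.continuous_sqrt.tendsto 0).comp this
    simpa [Function.comp_def] using h3
  have hA : Tendsto (errA lam) atTop (𝓝 0) := by
    have := (h1.const_mul 4).add (h2.const_mul 16)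
    simp only [mul_zero, add_zero] at this
    refine this.congr fun T => ?_
    rw [errA]; ring
  have hlA : Tendsto (fun T => lam + errA lam T) atTop (𝓝 lam) := by
    simpa using (tendsto_const_nhds (x := lam)).add hA
  have hall := ((((hinv.const_mul (16 * winConst * lam)).add (hA.const_mul (Real.exp 1))).add
    ((h1.const_mul (4 * 301^2)).const_mul (2 * Real.exp 1))).add
    ((((hlA.mul (hinv.const_mul (9600^2))).const_mul (4 * (2 * (2 * Real.exp 2)))).add
     ((hlA.mul ((hinv.const_mul (9600^2)).pow 2)).const_mul (4 * (2 * Real.exp 3))))))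
  simp only [mul_zero, add_zero, ne_eq, OfNat.ofNat_ne_zero, not_false_eq_true, zero_pow] at hall
  refine hall.congr fun T => ?_
  rw [errTot]
  ring

lemma errA_nonneg {lam T : ℝ} (hT : 0 ≤ T) : 0 ≤ errA lam T := by
  unfold errA; positivity

/-- the union of all bad events -/
def badAll (n M : ℕ) (r : ℝ) : Set (Fin n → Pt) :=
  {x | ¬ ∀ v, x v ∈ unitSquare ∧ ∀ i, x v i ≠ 1} ∪ (badWin n M ∪ (badIso n r ∪ ((badCorner n r 1 ∪ badCorner n r (-1)) ∪
    ⋃ i : Fin 2, ((badCl 2 0 1 0 n r i 1 ∪ badCl 2 0 1 1 n r i 1 ∪ badCl 3 0 1 2 n r i 1) ∪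
      (badCl 2 0 1 0 n r i (-1) ∪ badCl 2 0 1 1 n r i (-1) ∪ badCl 3 0 1 2 n r i (-1))))))

lemma conn_of_not_bad {n M : ℕ} (hn : 0 < n) {r : ℝ} (hr : 0 < r) (hr1 : 302 * r ≤ 1)
    (hM : 1300 ≤ M) (hM1 : 3 ≤ r * M) (hM2 : r * M ≤ 4) (x : Fin n → Pt) (hb : x ∉ badAll n M r)
    (hi : x ∉ isoQI n r) : (geomGraph x r).Connected := by
  by_contra hdis
  simp only [badAll, mem_union, not_or, mem_iUnion, not_exists, mem_ofPred_eq, not_not] at hb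
  obtain ⟨b1, b2, b3, b4, b5⟩ := hb
  have hx : ∀ v, x v ∈ unitSquare := fun v => (b1 v).1
  obtain ⟨D, hD, hsep, hext⟩ := cluster_of_disconnected hn x hr M hM hM1 hM2
    (fun v i => ⟨(hx v i).1, lt_of_le_of_ne (hx v i).2 ((b1 v).2 i)⟩) (by
      intro a b ha ha' hb hb' S hS
      by_contra hcon
      exact b2 ⟨a, b, ⟨ha, ha'⟩, ⟨hb, hb'⟩, S, hS, not_lt.1 hcon⟩) hdis
  rcases cluster_bad x hx hr hr1 D hD hsep hext with h | h | ⟨e, he, h⟩ | ⟨i, e, he, h⟩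
  · exact hi h
  · exact b3 h
  · rcases he with rfl | rfl
    · exact b4.1 h
    · exact b4.2 h
  · have := b5 i
    rcases he with rfl | rfl
    · tauto
    · tauto

lemma prob_null (n : ℕ) : PP n {x | ¬ ∀ v, x v ∈ unitSquare ∧ ∀ i, x v i ≠ 1} = 0 := by
  have h : ∀ᵐ x ∂(PP n), ∀ v, x v ∈ unitSquare ∧ ∀ i, x v i ≠ 1 := by
    rw [ae_all_iff]
    intro v
    have h1 : ∀ᵐ p ∂unifSquare, p ∈ unitSquare := ae_restrict_mem measurableSet_unitSquare
    have h2 : ∀ᵐ p ∂unifSquare, ∀ i : Fin 2, p i ≠ 1 := by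
      rw [ae_all_iff]
      intro i
      rw [ae_iff]
      simpa using unif_line i 1
    have h3 : ∀ᵐ p ∂unifSquare, p ∈ unitSquare ∧ ∀ i : Fin 2, p i ≠ 1 := by
      filter_upwards [h1, h2] with p a b using ⟨a, b⟩
    exact (measurePreserving_eval (fun _ : Fin n => unifSquare) v).quasiMeasurePreserving.ae h3
  exact h

lemma prob_badAll {n M : ℕ} (hn : 1 ≤ n) {r lam : ℝ} (hr : 0 < r) (hr1 : 302 * r ≤ 1)
    (hM0 : 0 < M) (hM2 : r * M ≤ 4)
    (hlam : n * Real.exp (-(n * (Real.pi * r^2))) = lam) :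
    PP n (badAll n M r) ≤ ENNReal.ofReal (errTot lam (n * r^2)) := by
  have hn0 : (0:ℝ) < n := by exact_mod_cast hn
  have hl0 : 0 ≤ lam := by rw [← hlam]; positivity
  set T := n * r^2 with hT
  have hT0 : 0 < T := by positivity
  have hA0 := errA_nonneg (lam := lam) hT0.le
  have hr2 : r ≤ 1/2 := by linarith
  have hA : (n:ℝ≥0∞) * ∫⁻ p, EE n r p ∂unifSquare ≤ ENNReal.ofReal (lam + errA lam T) :=
    est_all n hn hr hr2 hlam
  have hw : PP n (badWin n M) ≤ ENNReal.ofReal (16 * winConst * lam / T) := by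
    refine (prob_badWin n M hM0).trans ?_
    have hMr : (0:ℝ) < M := by exact_mod_cast hM0
    rw [← ENNReal.ofReal_natCast, ← ENNReal.ofReal_natCast, ← ENNReal.ofReal_pow (by positivity),
      ← ENNReal.ofReal_mul (by positivity), ← ENNReal.ofReal_mul (by positivity)]
    apply ENNReal.ofReal_le_ofReal
    have h1 : (r * M)^2 ≤ 4^2 := by gcongr
    have h2 : (M:ℝ)^2 ≤ 16 / r^2 := by
      rw [le_div_iff₀ (by positivity)]; nlinarith
    have h3 : Real.exp (-(n * (128 / (M:ℝ)^2))) ≤ lam / n := by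
      rw [← hlam, mul_div_cancel_left₀ _ hn0.ne']
      apply Real.exp_le_exp.2
      have h4 : Real.pi * r^2 ≤ 128 / (M:ℝ)^2 := by
        rw [le_div_iff₀ (by positivity)]
        have h5 : Real.pi ≤ 8 := by linarith [Real.pi_le_four]
        nlinarith [Real.pi_pos]
      have : n * (Real.pi * r^2) ≤ n * (128 / (M:ℝ)^2) := by gcongr
      linarith
    calc (M:ℝ)^2 * winConst * Real.exp (-(n * (128 / (M:ℝ)^2)))
        ≤ (16 / r^2) * winConst * (lam / n) := by gcongr
      _ = _ := by rw [hT]; field_simp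
  have hI : PP n (badIso n r) ≤ ENNReal.ofReal (Real.exp 1 * errA lam T) := prob_badIso n hn hr hr2 hlam
  have hC : ∀ e : ℝ, (e = 1 ∨ e = -1) → PP n (badCorner n r e) ≤
      ENNReal.ofReal (Real.exp 1 * (4 * 301^2 * T * Real.exp (-(T / 4)))) := fun e he =>
    prob_badCorner n he hr (by linarith)
  set c2 := 2 * Real.exp 2 * (lam + errA lam T) * (9600 ^ 2 / T) with hc2
  set c3 := 2 * Real.exp 3 * (lam + errA lam T) * (9600 ^ 2 / T) ^ 2 with hc3
  have hc20 : 0 ≤ c2 := by positivity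
  have hc30 : 0 ≤ c3 := by positivity
  have h2 : ∀ w i e, (e = 1 ∨ e = -1) → PP n (badCl 2 0 1 w n r i e) ≤ ENNReal.ofReal c2 := fun w i e he =>
    prob_badCl_two w n hn hr hr1 i e he _ (by positivity) hA
  have h3 : ∀ i e, (e = 1 ∨ e = -1) → PP n (badCl 3 0 1 2 n r i e) ≤ ENNReal.ofReal c3 := fun i e he =>
    prob_badCl_three n hn hr hr1 i e he _ (by positivity) hA
  have h4 : ∀ i e, (e = 1 ∨ e = -1) → PP n (badCl 2 0 1 0 n r i e ∪ badCl 2 0 1 1 n r i e ∪ badCl 3 0 1 2 n r i e)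
      ≤ ENNReal.ofReal (2 * c2 + c3) := by
    intro i e he
    rw [two_mul, ENNReal.ofReal_add (by positivity) hc30, ENNReal.ofReal_add hc20 hc20]
    exact (measure_union_le _ _).trans (add_le_add ((measure_union_le _ _).trans
      (add_le_add (h2 0 i e he) (h2 1 i e he))) (h3 i e he))
  have h5 : PP n (⋃ i : Fin 2, ((badCl 2 0 1 0 n r i 1 ∪ badCl 2 0 1 1 n r i 1 ∪ badCl 3 0 1 2 n r i 1) ∪
      (badCl 2 0 1 0 n r i (-1) ∪ badCl 2 0 1 1 n r i (-1) ∪ badCl 3 0 1 2 n r i (-1)))) ≤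
      ENNReal.ofReal (4 * (2 * c2 + c3)) := by
    refine (measure_iUnion_fintype_le _ _).trans ?_
    calc _ ≤ ∑ i : Fin 2, ENNReal.ofReal (2 * (2 * c2 + c3)) := by
          refine Finset.sum_le_sum fun i _ => ?_
          rw [two_mul (2 * c2 + c3), ENNReal.ofReal_add (by positivity) (by positivity)]
          exact (measure_union_le _ _).trans (add_le_add (h4 i 1 (Or.inl rfl)) (h4 i (-1) (Or.inr rfl)))
      _ = _ := by
          rw [Fin.sum_univ_two, ← ENNReal.ofReal_add (by positivity) (by positivity)]
          congr 1; ring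
  have hk : PP n (badCorner n r 1 ∪ badCorner n r (-1)) ≤
      ENNReal.ofReal (2 * (Real.exp 1 * (4 * 301^2 * T * Real.exp (-(T / 4))))) := by
    rw [two_mul, ENNReal.ofReal_add (by positivity) (by positivity)]
    exact (measure_union_le _ _).trans (add_le_add (hC 1 (Or.inl rfl)) (hC (-1) (Or.inr rfl)))
  have e0 : errTot lam T = 0 + (16 * winConst * lam / T + (Real.exp 1 * errA lam T
    + (2 * (Real.exp 1 * (4 * 301^2 * T * Real.exp (-(T / 4)))) + 4 * (2 * c2 + c3)))) := by
    rw [errTot]; ring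
  rw [e0, ENNReal.ofReal_add le_rfl (by positivity), ENNReal.ofReal_add (by positivity) (by positivity),
    ENNReal.ofReal_add (by positivity) (by positivity), ENNReal.ofReal_add (by positivity) (by positivity)]
  unfold badAll
  refine (measure_union_le _ _).trans (add_le_add (by rw [prob_null]; exact zero_le) ?_)
  refine (measure_union_le _ _).trans (add_le_add hw ?_)
  refine (measure_union_le _ _).trans (add_le_add hI ?_)
  exact (measure_union_le _ _).trans (add_le_add hk h5)

lemma not_conn_of_iso {n : ℕ} (hn : 2 ≤ n) {r : ℝ} (x : Fin n → Pt) (h : x ∈ isoQI n r) :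
    ¬ (geomGraph x r).Connected := by
  obtain ⟨i, _, hi⟩ := h
  intro hc
  haveI : Nontrivial (Fin n) := Fin.nontrivial_iff_two_le.2 hn
  obtain ⟨j, hj⟩ := hc.preconnected.exists_adj_of_nontrivial i
  rw [geomGraph_adj] at hj
  have := hi j hj.1.symm
  rw [norm_sub_rev] at this
  linarith [hj.2]


/-! ### Factorial moments: upper bound -/

def SS (k : ℕ) (r : ℝ) : Set (Fin k → Pt) := {y | (∀ i, y i ∈ QI r) ∧ ∀ i j, i ≠ j → r < ‖y i - y j‖}

def Un {k : ℕ} (r : ℝ) (y : Fin k → Pt) : Set Pt := ⋃ i, Metric.closedBall (y i) r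

lemma measurableSet_far {k : ℕ} (s : ℝ) (i j : Fin k) : MeasurableSet {y : Fin k → Pt | s < ‖y i - y j‖} := by
  have : MeasurableSet {y : Fin k → Pt | s < ‖y i - y j‖} := measurableSet_lt (by fun_prop) (by fun_prop)
  exact this

lemma measurableSet_SS (k : ℕ) (r : ℝ) : MeasurableSet (SS k r) := by
  have e : SS k r = (⋂ i, {y : Fin k → Pt | y i ∈ QI r}) ∩
      ⋂ i, ⋂ j, ⋂ (_ : i ≠ j), {y : Fin k → Pt | r < ‖y i - y j‖} := by
    ext y; simp [SS]
  rw [e]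
  refine MeasurableSet.inter (MeasurableSet.iInter fun i => ?_) (MeasurableSet.iInter fun i =>
    MeasurableSet.iInter fun j => MeasurableSet.iInter fun _ => measurableSet_far r i j)
  exact (measurable_pi_apply i) (measurableSet_QI r)

lemma measurableSet_Un_prod (k : ℕ) (r : ℝ) :
    MeasurableSet {q : (Fin k → Pt) × Pt | q.2 ∈ Un r q.1} := by
  have e : {q : (Fin k → Pt) × Pt | q.2 ∈ Un r q.1} =
      ⋃ i, {q : (Fin k → Pt) × Pt | dist q.2 (q.1 i) ≤ r} := by
    ext q; simp [Un]
  rw [e]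
  refine MeasurableSet.iUnion fun i => ?_
  have : MeasurableSet {q : (Fin k → Pt) × Pt | dist q.2 (q.1 i) ≤ r} :=
    measurableSet_le (by fun_prop) (by fun_prop)
  exact this

lemma measurable_Un_real (k : ℕ) (r : ℝ) : Measurable fun y : Fin k → Pt => unifSquare.real (Un r y) :=
  measurable_unif_real _ (measurableSet_Un_prod k r)

lemma measurableSet_Un {k : ℕ} (r : ℝ) (y : Fin k → Pt) : MeasurableSet (Un r y) :=
  MeasurableSet.iUnion fun _ => Metric.isClosed_closedBall.measurableSet

lemma Un_real_le {k : ℕ} {r : ℝ} (hr : 0 ≤ r) (y : Fin k → Pt) :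
    unifSquare.real (Un r y) ≤ k * (Real.pi * r ^ 2) := by
  refine (measureReal_iUnion_fintype_le _).trans ?_
  refine (Finset.sum_le_sum fun i _ => vv_le r hr (y i)).trans ?_
  simp

lemma Un_real_far {k : ℕ} {r : ℝ} (hr : 0 ≤ r) (y : Fin k → Pt) (hy : y ∈ SS k r)
    (hf : ∀ i j, i ≠ j → 2 * r < ‖y i - y j‖) :
    unifSquare.real (Un r y) = k * (Real.pi * r ^ 2) := by
  have h := measureReal_iUnion_fintype (μ := unifSquare) (f := fun i => Metric.closedBall (y i) r)
    (fun i j hij => by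
      apply Metric.closedBall_disjoint_closedBall
      rw [dist_eq_norm]; linarith [hf i j hij]) (fun i => Metric.isClosed_closedBall.measurableSet)
  rw [Un, h]
  have : ∀ i, unifSquare.real (Metric.closedBall (y i) r) = Real.pi * r ^ 2 := fun i =>
    vv_interior hr (hy.1 i)
  simp [this]

lemma Un_real_close {k : ℕ} {r : ℝ} (hr : 0 < r) (y : Fin (k + 1) → Pt) (hy : y ∈ SS (k + 1) r)
    (hf : ∃ i j, i ≠ j ∧ ‖y i - y j‖ ≤ 2 * r) :
    ∃ (i : Fin (k + 1)) (j : Fin k), ‖y i - y (i.succAbove j)‖ ≤ 2 * r ∧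
      r ^ 2 / 32 + unifSquare.real (Un r fun j => y (i.succAbove j)) ≤ unifSquare.real (Un r y) := by
  classical
  set C : Finset (Fin (k + 1)) := Finset.univ.filter fun i => ∃ j, i ≠ j ∧ ‖y i - y j‖ ≤ 2 * r
  have hC : C.Nonempty := by
    obtain ⟨i, j, h⟩ := hf
    exact ⟨i, by simp only [C, Finset.mem_filter, Finset.mem_univ, true_and]; exact ⟨j, h⟩⟩
  obtain ⟨i, hiC, hmin⟩ := C.exists_min_image (fun i => y i 0) hC
  obtain ⟨j0, hij0, hj0⟩ := (Finset.mem_filter.1 hiC).2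
  obtain ⟨j, rfl⟩ := Fin.exists_succAbove_eq hij0.symm
  refine ⟨i, j, hj0, ?_⟩
  set Bx : Set Pt := {p | y i 0 - 3 * r / 4 < p 0 ∧ p 0 < y i 0 - r / 2 ∧
    y i 1 - r / 16 < p 1 ∧ p 1 < y i 1 + r / 16}
  have hq := hy.1 i
  have hq0 := hq 0
  have hq1 := hq 1
  have hbox : r ^ 2 / 32 ≤ unifSquare.real Bx := by
    have := unif_box_ge 0 (A := Bx) (a := y i 0 - 3 * r / 4) (b := y i 0 - r / 2)
      (c := y i 1 - r / 16) (d := y i 1 + r / 16) (by linarith) (by linarith) (by linarith)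
      (by linarith) (by linarith) (fun p h1 h2 h3 h4 => ⟨h1, h2, h3, h4⟩)
    refine le_trans (le_of_eq ?_) this
    ring
  have hmB : MeasurableSet Bx := by
    have hm : ∀ i : Fin 2, Measurable fun p : Pt => p i := measurable_coord
    have h1 : MeasurableSet {p : Pt | y i 0 - 3 * r / 4 < p 0} := measurableSet_lt (by fun_prop) (by fun_prop)
    have h2 : MeasurableSet {p : Pt | p 0 < y i 0 - r / 2} := measurableSet_lt (by fun_prop) (by fun_prop)
    have h3 : MeasurableSet {p : Pt | y i 1 - r / 16 < p 1} := measurableSet_lt (by fun_prop) (by fun_prop)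
    have h4 : MeasurableSet {p : Pt | p 1 < y i 1 + r / 16} := measurableSet_lt (by fun_prop) (by fun_prop)
    exact h1.inter (h2.inter (h3.inter h4))
  have hin : Bx ⊆ Metric.closedBall (y i) r := by
    rintro p ⟨h1, h2, h3, h4⟩
    rw [Metric.mem_closedBall, dist_eq_norm, norm_le_iff_coord 0 hr.le]
    have e : (0 : Fin 2) + 1 = 1 := rfl
    rw [e]
    nlinarith
  have hdisj : Disjoint Bx (Un r fun j => y (i.succAbove j)) := by
    rw [Set.disjoint_left]
    rintro p ⟨h1, h2, h3, h4⟩ hp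
    obtain ⟨j', hj'⟩ := mem_iUnion.1 hp
    have hne : i ≠ i.succAbove j' := (Fin.succAbove_ne i j').symm
    set m := i.succAbove j'
    have hpi : ‖p - y i‖ ≤ r := by
      have := hin ⟨h1, h2, h3, h4⟩
      rwa [Metric.mem_closedBall, dist_eq_norm] at this
    rw [Metric.mem_closedBall, dist_eq_norm] at hj'
    have hd2 : ‖y i - y m‖ ≤ 2 * r := by
      calc ‖y i - y m‖ = ‖(p - y m) - (p - y i)‖ := by congr 1; abel
        _ ≤ ‖p - y m‖ + ‖p - y i‖ := norm_sub_le _ _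
        _ ≤ 2 * r := by linarith
    have hmC : m ∈ C := by
      simp only [C, Finset.mem_filter, Finset.mem_univ, true_and]
      exact ⟨i, hne.symm, by rwa [norm_sub_rev]⟩
    have h0 := hmin m hmC
    have hd1 := hy.2 i m hne
    have hd1' : ¬ ‖y i - y m‖ ≤ r := not_le.2 hd1
    have e : (0 : Fin 2) + 1 = 1 := rfl
    rw [norm_le_iff_coord 0 hr.le, e, not_le] at hd1'
    rw [norm_le_iff_coord 0 hr.le, e] at hj'
    have hc1 := abs_coord_le_norm 1 (y i) (y m)
    have hc2 := abs_le.1 (hc1.trans hd2)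
    set D0 := y m 0 - y i 0
    set D1 := y m 1 - y i 1
    have hD0 : 0 ≤ D0 := by simp only [D0]; linarith
    set al := y i 0 - p 0 with hal
    set t := p 1 - y i 1 with ht
    have a1 : r / 2 < al := by simp only [al]; linarith
    have t1 : -(r/16) < t := by simp only [t]; linarith
    have t2 : t < r/16 := by simp only [t]; linarith
    have e0 : p 0 - y m 0 = -(al + D0) := by simp only [al, D0]; ring
    have e1 : p 1 - y m 1 = t - D1 := by simp only [t, D1]; ring
    have e2 : y i 0 - y m 0 = - D0 := by simp only [D0]; ring
    have e3 : y i 1 - y m 1 = - D1 := by simp only [D1]; ring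
    rw [e0, e1] at hj'
    rw [e2, e3] at hd1'
    rw [e3] at hc2
    have k1 : t * D1 ≤ r / 16 * (2 * r) := by
      refine (le_abs_self _).trans ?_
      rw [abs_mul]
      refine mul_le_mul (abs_le.2 ⟨t1.le, t2.le⟩) (abs_le.2 ⟨by linarith, by linarith⟩) (abs_nonneg _) (by linarith)
    have k2 : 0 ≤ al * D0 := mul_nonneg (by linarith) hD0
    have k3 : r^2/4 ≤ al^2 := by nlinarith
    nlinarith [sq_nonneg t]
  have hsub : Bx ∪ (Un r fun j => y (i.succAbove j)) ⊆ Un r y := by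
    apply union_subset
    · exact hin.trans (subset_iUnion (fun i => Metric.closedBall (y i) r) i)
    · exact iUnion_subset fun j => subset_iUnion (fun i => Metric.closedBall (y i) r) (i.succAbove j)
  calc _ ≤ unifSquare.real Bx + unifSquare.real (Un r fun j => y (i.succAbove j)) := by linarith
    _ = unifSquare.real (Bx ∪ (Un r fun j => y (i.succAbove j))) :=
      (measureReal_union hdisj (measurableSet_Un _ _)).symm
    _ ≤ _ := measureReal_mono hsub

noncomputable def aa (n k : ℕ) (r : ℝ) : ℝ≥0∞ :=
  ∫⁻ y in SS k r, ENNReal.ofReal (Real.exp (-(n * unifSquare.real (Un r y)))) ∂(PP k)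

lemma aa_zero (n : ℕ) (r : ℝ) : aa n 0 r ≤ 1 := by
  unfold aa
  calc _ ≤ ∫⁻ y in SS 0 r, 1 ∂(PP 0) := by
        refine lintegral_mono fun y => ?_
        rw [ENNReal.ofReal_le_one, Real.exp_le_one_iff]
        have : 0 ≤ (n:ℝ) * unifSquare.real (Un r y) := mul_nonneg (by positivity) measureReal_nonneg
        linarith
    _ ≤ 1 := by
        rw [lintegral_one, Measure.restrict_apply_univ]; exact prob_le_one

lemma aa_succ (n k : ℕ) {r : ℝ} (hr : 0 < r) :
    aa n (k + 1) r ≤ ENNReal.ofReal (Real.exp (-(n * ((k + 1 : ℕ) * (Real.pi * r ^ 2)))))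
      + (k + 1 : ℕ) * (k * ENNReal.ofReal (Real.pi * (2 * r) ^ 2)
        * (ENNReal.ofReal (Real.exp (-(n * r ^ 2 / 32))) * aa n k r)) := by
  set E : (Fin k → Pt) → ℝ≥0∞ := (SS k r).indicator
    fun y => ENNReal.ofReal (Real.exp (-(n * unifSquare.real (Un r y)))) with hE
  have hEm : Measurable E := by
    refine Measurable.indicator ?_ (measurableSet_SS k r)
    have := measurable_Un_real k r
    fun_prop
  set N : Fin (k + 1) → Fin k → Set (Fin (k + 1) → Pt) := fun i j =>
    {y | ‖y i - y (i.succAbove j)‖ ≤ 2 * r} with hN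
  have hNm : ∀ i j, MeasurableSet (N i j) := fun i j => by
    have : MeasurableSet {y : Fin (k + 1) → Pt | ‖y i - y (i.succAbove j)‖ ≤ 2 * r} :=
      measurableSet_le (by fun_prop) (by fun_prop)
    exact this
  set c0 := ENNReal.ofReal (Real.exp (-(n * ((k + 1 : ℕ) * (Real.pi * r ^ 2)))))
  set c1 := ENNReal.ofReal (Real.exp (-(n * r ^ 2 / 32)))
  set F : Fin (k + 1) → Fin k → (Fin (k + 1) → Pt) → ℝ≥0∞ := fun i j y =>
    (N i j).indicator 1 y * (c1 * E fun l => y (i.succAbove l)) with hF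
  have hFm : ∀ i j, Measurable (F i j) := fun i j => by
    have h1 : Measurable ((N i j).indicator (1 : (Fin (k + 1) → Pt) → ℝ≥0∞)) :=
      measurable_one.indicator (hNm i j)
    have h2 : Measurable fun y : Fin (k + 1) → Pt => E fun l => y (i.succAbove l) := hEm.comp (by fun_prop)
    exact h1.mul (h2.const_mul _)
  have hpt : ∀ y ∈ SS (k + 1) r, ENNReal.ofReal (Real.exp (-(n * unifSquare.real (Un r y)))) ≤
      c0 + ∑ i, ∑ j, F i j y := by
    intro y hy
    by_cases hf : ∃ i j, i ≠ j ∧ ‖y i - y j‖ ≤ 2 * r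
    · obtain ⟨i, j, h1, h2⟩ := Un_real_close hr y hy hf
      have hS : (fun l => y (i.succAbove l)) ∈ SS k r := by
        refine ⟨fun l => hy.1 _, fun l l' h => hy.2 _ _ fun h' => h (Fin.succAbove_right_injective h')⟩
      have : ENNReal.ofReal (Real.exp (-(n * unifSquare.real (Un r y)))) ≤ F i j y := by
        have hmem : y ∈ N i j := h1
        simp only [hF, hE, indicator_of_mem hmem, indicator_of_mem hS, Pi.one_apply, one_mul, c1]
        rw [← ENNReal.ofReal_mul (Real.exp_pos _).le, ← Real.exp_add]
        apply ENNReal.ofReal_le_ofReal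
        apply Real.exp_le_exp.2
        have := mul_le_mul_of_nonneg_left h2 (Nat.cast_nonneg (α := ℝ) n)
        linarith
      refine this.trans (le_trans ?_ le_add_self)
      refine le_trans ?_ (Finset.single_le_sum (f := fun i => ∑ j, F i j y) (fun _ _ => zero_le) (Finset.mem_univ i))
      exact Finset.single_le_sum (f := fun j => F i j y) (fun _ _ => zero_le) (Finset.mem_univ j)
    · push Not at hf
      rw [Un_real_far hr.le y hy hf]
      exact le_self_add
  have hFint : ∀ i j, ∫⁻ y, F i j y ∂(PP (k + 1)) ≤
      ENNReal.ofReal (Real.pi * (2 * r) ^ 2) * (c1 * aa n k r) := by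
    intro i j
    rw [lintegral_PP_succ i _ (hFm i j)]
    have : ∀ y : Fin k → Pt, ∫⁻ a, F i j (i.insertNth a y) ∂unifSquare ≤
        ENNReal.ofReal (Real.pi * (2 * r) ^ 2) * (c1 * E y) := by
      intro y
      have e : ∀ a : Pt, F i j (i.insertNth a y) =
          (Metric.closedBall (y j) (2 * r)).indicator 1 a * (c1 * E y) := by
        intro a
        simp only [hF, Fin.insertNth_apply_succAbove]
        congr 1
        simp only [indicator, hN, mem_ofPred_eq, Fin.insertNth_apply_succAbove, Fin.insertNth_apply_same,
          Metric.mem_closedBall, dist_eq_norm, Pi.one_apply]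
      simp only [e]
      rw [lintegral_mul_const _ (measurable_one.indicator Metric.isClosed_closedBall.measurableSet),
        lintegral_indicator_one Metric.isClosed_closedBall.measurableSet]
      gcongr
      refine (unif_le_volume _).trans ?_
      rw [volume_disc _ (by linarith)]
    refine (lintegral_mono this).trans ?_
    rw [lintegral_const_mul _ (hEm.const_mul _), lintegral_const_mul _ hEm, hE,
      lintegral_indicator (measurableSet_SS k r)]
    rfl
  calc aa n (k + 1) r ≤ ∫⁻ y in SS (k + 1) r, (c0 + ∑ i, ∑ j, F i j y) ∂(PP (k + 1)) :=
        setLIntegral_mono' (measurableSet_SS _ _) hpt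
    _ ≤ ∫⁻ y, (c0 + ∑ i, ∑ j, F i j y) ∂(PP (k + 1)) := setLIntegral_le_lintegral _ _
    _ = c0 + ∑ i, ∑ j, ∫⁻ y, F i j y ∂(PP (k + 1)) := by
        rw [lintegral_add_left measurable_const, lintegral_const, measure_univ, mul_one,
          lintegral_finsetSum _ (fun i _ => Finset.measurable_sum _ fun j _ => hFm i j)]
        congr 1
        refine Finset.sum_congr rfl fun i _ => ?_
        rw [lintegral_finsetSum _ (fun j _ => hFm i j)]
    _ ≤ c0 + ∑ i : Fin (k + 1), ∑ j : Fin k, ENNReal.ofReal (Real.pi * (2 * r) ^ 2) * (c1 * aa n k r) := by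
        gcongr with i _ j _
        exact hFint i j
    _ = _ := by
        simp only [Finset.sum_const, Finset.card_univ, Fintype.card_fin, nsmul_eq_mul]
        ring


/-! ### Factorial moments: asymptotics -/

noncomputable def BB (lam T : ℝ) : ℕ → ℝ
  | 0 => 1
  | k + 1 => lam ^ (k + 1) + (k + 1) * (k * (4 * Real.pi * T * Real.exp (-(T / 32)) * BB lam T k))

lemma BB_nonneg {lam T : ℝ} (hl : 0 ≤ lam) (hT : 0 ≤ T) (k : ℕ) : 0 ≤ BB lam T k := by
  induction k with
  | zero => simp [BB]
  | succ k ih => rw [BB]; have := Real.pi_pos; positivity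

lemma BB_tendsto (lam : ℝ) (k : ℕ) : Tendsto (fun T => BB lam T k) atTop (𝓝 (lam ^ k)) := by
  induction k with
  | zero => simp [BB]
  | succ k ih =>
    simp only [BB]
    have h1 : Tendsto (fun T : ℝ => T * Real.exp (-(T / 32))) atTop (𝓝 0) := by
      have h := (Real.tendsto_pow_mul_exp_neg_atTop_nhds_zero 1).comp
        (tendsto_id.atTop_div_const (by norm_num : (0:ℝ) < 32))
      have h2 := h.const_mul 32
      rw [mul_zero] at h2
      refine h2.congr fun T => ?_
      simp only [Function.comp, id, pow_one]; ring
    have h2 := ((((h1.const_mul (4 * Real.pi)).mul ih).const_mul (k : ℝ)).const_mul ((k : ℝ) + 1)).const_add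
      (lam ^ (k + 1))
    simp only [mul_zero, zero_mul, add_zero] at h2
    refine h2.congr fun T => ?_
    ring

lemma aa_le {n : ℕ} {r lam : ℝ} (hr : 0 < r) (hlam : n * Real.exp (-(n * (Real.pi * r^2))) = lam) (k : ℕ) :
    (n : ℝ≥0∞) ^ k * aa n k r ≤ ENNReal.ofReal (BB lam (n * r ^ 2) k) := by
  have hpi := Real.pi_pos
  have hl : 0 ≤ lam := by rw [← hlam]; positivity
  have hT : 0 ≤ n * r ^ 2 := by positivity
  induction k with
  | zero => simpa [BB] using aa_zero n r
  | succ k ih =>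
    have hB := BB_nonneg hl hT k
    have h1 : (n : ℝ≥0∞) ^ (k + 1) * ENNReal.ofReal (Real.exp (-(n * ((k + 1 : ℕ) * (Real.pi * r ^ 2)))))
        = ENNReal.ofReal (lam ^ (k + 1)) := by
      rw [← hlam, mul_pow, ← Real.exp_nat_mul, ENNReal.ofReal_mul (by positivity),
        ENNReal.ofReal_pow (by positivity), ENNReal.ofReal_natCast]
      congr 3; ring
    calc (n : ℝ≥0∞) ^ (k + 1) * aa n (k + 1) r
        ≤ (n : ℝ≥0∞) ^ (k + 1) * (ENNReal.ofReal (Real.exp (-(n * ((k + 1 : ℕ) * (Real.pi * r ^ 2)))))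
      + (k + 1 : ℕ) * (k * ENNReal.ofReal (Real.pi * (2 * r) ^ 2)
        * (ENNReal.ofReal (Real.exp (-(n * r ^ 2 / 32))) * aa n k r))) := mul_le_mul_right (aa_succ n k hr) _
      _ = ENNReal.ofReal (lam ^ (k + 1)) + (k + 1 : ℕ) * (k * (n * ENNReal.ofReal (Real.pi * (2 * r) ^ 2)
        * ENNReal.ofReal (Real.exp (-(n * r ^ 2 / 32))) * ((n : ℝ≥0∞) ^ k * aa n k r))) := by
          rw [mul_add, h1]; ring
      _ ≤ ENNReal.ofReal (lam ^ (k + 1)) + (k + 1 : ℕ) * (k * (n * ENNReal.ofReal (Real.pi * (2 * r) ^ 2)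
        * ENNReal.ofReal (Real.exp (-(n * r ^ 2 / 32))) * ENNReal.ofReal (BB lam (n * r ^ 2) k))) := by
          gcongr
      _ = _ := by
          rw [BB, ENNReal.ofReal_add (by positivity) (by positivity)]
          congr 1
          rw [← ENNReal.ofReal_natCast (k + 1), ← ENNReal.ofReal_natCast k, ← ENNReal.ofReal_natCast n,
            ← ENNReal.ofReal_mul (by positivity), ← ENNReal.ofReal_mul (by positivity),
            ← ENNReal.ofReal_mul (by positivity), ← ENNReal.ofReal_mul (by positivity),
            ← ENNReal.ofReal_mul (by positivity)]
          congr 1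
          push_cast; ring

noncomputable def pk (n k : ℕ) (r : ℝ) : ℝ≥0∞ :=
  ∫⁻ y in SS k r, (unifSquare (Un r y)ᶜ) ^ (n - k) ∂(PP k)

lemma pk_le {n k : ℕ} {r : ℝ} (hr : 0 < r) :
    pk n k r ≤ ENNReal.ofReal (Real.exp (k ^ 2 * (Real.pi * r ^ 2))) * aa n k r := by
  unfold pk aa
  rw [← lintegral_const_mul' _ _ ENNReal.ofReal_ne_top]
  refine lintegral_mono fun y => ?_
  refine (unif_compl_pow_le _ (measurableSet_Un r y) _).trans ?_
  rw [← ENNReal.ofReal_mul (Real.exp_pos _).le, ← Real.exp_add]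
  apply ENNReal.ofReal_le_ofReal
  apply Real.exp_le_exp.2
  have h1 : (n : ℝ) - k ≤ (n - k : ℕ) := by
    rw [sub_le_iff_le_add]; exact_mod_cast (by omega : n ≤ n - k + k)
  have h2 := Un_real_le hr.le y
  have h3 : 0 ≤ unifSquare.real (Un r y) := measureReal_nonneg
  have h4 := mul_le_mul_of_nonneg_right h1 h3
  have h5 := mul_le_mul_of_nonneg_left h2 (Nat.cast_nonneg (α := ℝ) k)
  nlinarith

lemma unif_QI_compl {r : ℝ} (hr : 0 < r) (hr1 : r ≤ 1 / 2) : unifSquare (QI r)ᶜ ≤ ENNReal.ofReal (4 * r) := by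
  have h1 := unif_box_ge 0 (A := QI r) (a := r) (b := 1 - r) (c := r) (d := 1 - r) (by linarith) (by linarith)
    (by linarith) (by linarith) (by linarith) (fun p h1 h2 h3 h4 i => by
      fin_cases i
      · exact ⟨h1.le, h2.le⟩
      · exact ⟨h3.le, h4.le⟩)
  rw [← ofReal_measureReal]
  apply ENNReal.ofReal_le_ofReal
  rw [measureReal_compl (measurableSet_QI r), probReal_univ]
  nlinarith

lemma prob_pair {k : ℕ} {r : ℝ} (hr : 0 ≤ r) (i j : Fin k) (hij : i ≠ j) :
    PP k {y | ‖y i - y j‖ ≤ r} ≤ ENNReal.ofReal (Real.pi * r ^ 2) := by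
  cases k with
  | zero => exact i.elim0
  | succ k =>
    obtain ⟨l, rfl⟩ := Fin.exists_succAbove_eq hij.symm
    have hm : MeasurableSet {y : Fin (k + 1) → Pt | ‖y i - y (i.succAbove l)‖ ≤ r} :=
      measurableSet_le (by fun_prop) (by fun_prop)
    rw [← lintegral_indicator_one hm, lintegral_PP_succ i _ (measurable_one.indicator hm)]
    have e : ∀ (y : Fin k → Pt) (a : Pt), ({y : Fin (k + 1) → Pt | ‖y i - y (i.succAbove l)‖ ≤ r}.indicator
        (1 : (Fin (k + 1) → Pt) → ℝ≥0∞) (i.insertNth a y)) = (Metric.closedBall (y l) r).indicator 1 a := by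
      intro y a
      simp only [indicator, mem_ofPred_eq, Fin.insertNth_apply_succAbove, Fin.insertNth_apply_same,
          Metric.mem_closedBall, dist_eq_norm, Pi.one_apply]
    simp only [e]
    have : ∀ y : Fin k → Pt, ∫⁻ a, (Metric.closedBall (y l) r).indicator 1 a ∂unifSquare ≤
        ENNReal.ofReal (Real.pi * r ^ 2) := by
      intro y
      rw [lintegral_indicator_one Metric.isClosed_closedBall.measurableSet]
      refine (unif_le_volume _).trans ?_
      rw [volume_disc _ hr]
    refine (lintegral_mono this).trans ?_
    simp

lemma prob_SS {k : ℕ} {r : ℝ} (hr : 0 < r) (hr1 : r ≤ 1 / 2) :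
    1 - (k * (4 * r) + k * (k * (Real.pi * r ^ 2))) ≤ (PP k).real (SS k r) := by
  have hpi := Real.pi_pos
  have hc : PP k (SS k r)ᶜ ≤ ENNReal.ofReal (k * (4 * r) + k * (k * (Real.pi * r ^ 2))) := by
    have hsub : (SS k r)ᶜ ⊆ (⋃ i, {y : Fin k → Pt | y i ∈ (QI r)ᶜ}) ∪
        ⋃ i, ⋃ j, {y : Fin k → Pt | i ≠ j ∧ ‖y i - y j‖ ≤ r} := by
      intro y hy
      simp only [SS, mem_compl_iff, mem_ofPred_eq, not_and_or, not_forall, not_lt] at hy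
      rcases hy with ⟨i, h⟩ | ⟨i, j, h, h'⟩
      · exact Or.inl (mem_iUnion.2 ⟨i, h⟩)
      · exact Or.inr (mem_iUnion.2 ⟨i, mem_iUnion.2 ⟨j, h, h'⟩⟩)
    refine (measure_mono hsub).trans ((measure_union_le _ _).trans ?_)
    rw [ENNReal.ofReal_add (by positivity) (by positivity)]
    refine add_le_add ?_ ?_
    · refine (measure_iUnion_fintype_le _ _).trans ?_
      have : ∀ i : Fin k, PP k {y : Fin k → Pt | y i ∈ (QI r)ᶜ} ≤ ENNReal.ofReal (4 * r) := by
        intro i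
        have h := (measurePreserving_eval (fun _ : Fin k => unifSquare) i).measure_preimage
          (measurableSet_QI r).compl.nullMeasurableSet
        exact h.le.trans (unif_QI_compl hr hr1)
      refine (Finset.sum_le_sum fun i _ => this i).trans ?_
      rw [ENNReal.ofReal_mul (by positivity)]; simp
    · refine (measure_iUnion_fintype_le _ _).trans ?_
      have : ∀ i j : Fin k, PP k {y : Fin k → Pt | i ≠ j ∧ ‖y i - y j‖ ≤ r} ≤ ENNReal.ofReal (Real.pi * r ^ 2) := by
        intro i j
        by_cases hij : i = j
        · simp [hij]
        · exact (measure_mono fun y hy => hy.2).trans (prob_pair hr.le i j hij)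
      refine (Finset.sum_le_sum fun i _ => (measure_iUnion_fintype_le _ _).trans
        (Finset.sum_le_sum fun j _ => this i j)).trans ?_
      generalize Real.pi * r ^ 2 = D
      rw [ENNReal.ofReal_mul (by positivity), ENNReal.ofReal_mul (by positivity)]; simp
  have h2 : (PP k).real (SS k r)ᶜ ≤ k * (4 * r) + k * (k * (Real.pi * r ^ 2)) :=
    ENNReal.toReal_le_of_le_ofReal (by positivity) hc
  rw [measureReal_compl (measurableSet_SS k r), probReal_univ] at h2
  linarith

lemma pk_le_one (n k : ℕ) (r : ℝ) : pk n k r ≤ 1 := by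
  unfold pk
  calc _ ≤ ∫⁻ y in SS k r, 1 ∂(PP k) := lintegral_mono fun y => pow_le_one' prob_le_one _
    _ ≤ 1 := by rw [lintegral_one, Measure.restrict_apply_univ]; exact prob_le_one

lemma pk_ge {n k : ℕ} {r : ℝ} (hr : 0 < r) (hr1 : r ≤ 1 / 2) (hk : k * (Real.pi * r ^ 2) < 1) :
    (1 - (k * (4 * r) + k * (k * (Real.pi * r ^ 2)))) *
      Real.exp (-(n * (k * (Real.pi * r ^ 2) / (1 - k * (Real.pi * r ^ 2))))) ≤ (pk n k r).toReal := by
  have hpi := Real.pi_pos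
  set u := k * (Real.pi * r ^ 2)
  have hu : 0 ≤ u := by positivity
  have h1 : Real.exp (-(n * (u / (1 - u)))) ≤ (1 - u) ^ (n - k) := by
    have h2 : Real.exp (-(u / (1 - u))) ≤ 1 - u := by
      rw [← Real.le_log_iff_exp_le (by linarith)]
      refine le_trans (le_of_eq ?_) (Real.one_sub_inv_le_log_of_pos (by linarith))
      have : 1 - u ≠ 0 := by linarith
      field_simp; ring
    calc Real.exp (-(n * (u / (1 - u)))) = Real.exp (-(u / (1 - u))) ^ n := by
          rw [← Real.exp_nat_mul]; ring_nf
      _ ≤ (1 - u) ^ n := by gcongr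
      _ ≤ (1 - u) ^ (n - k) := pow_le_pow_of_le_one (by linarith) (by linarith) (Nat.sub_le _ _)
  have h3 : ENNReal.ofReal ((1 - u) ^ (n - k)) * PP k (SS k r) ≤ pk n k r := by
    unfold pk
    rw [← setLIntegral_const]
    refine lintegral_mono fun y => ?_
    rw [ENNReal.ofReal_pow (by linarith)]
    refine pow_le_pow_left' ?_ _
    rw [← ofReal_measureReal (μ := unifSquare)]
    apply ENNReal.ofReal_le_ofReal
    rw [measureReal_compl (measurableSet_Un r y), probReal_univ]
    linarith [Un_real_le hr.le y]
  have h4 := ENNReal.toReal_mono (ne_top_of_le_ne_top ENNReal.one_ne_top (pk_le_one n k r)) h3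
  rw [ENNReal.toReal_mul, ENNReal.toReal_ofReal (pow_nonneg (by linarith) _)] at h4
  refine le_trans ?_ h4
  rw [mul_comm]
  by_cases h0 : 0 ≤ 1 - (k * (4 * r) + k * u)
  · exact mul_le_mul h1 (prob_SS hr hr1) h0 (pow_nonneg (by linarith) _)
  · push Not at h0
    refine le_trans (mul_nonpos_of_nonneg_of_nonpos (Real.exp_pos _).le h0.le) ?_
    exact mul_nonneg (pow_nonneg (by linarith) _) ENNReal.toReal_nonneg

/-- the `k`-th factorial moment converges -/
lemma pk_tendsto {r : ℕ → ℝ} {lam : ℝ} (hl : 0 < lam) (hr : ∀ᶠ n in atTop, 0 < r n) (hr0 : Tendsto r atTop (𝓝 0))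
    (hlam : ∀ᶠ n : ℕ in atTop, n * Real.exp (-(n * (Real.pi * (r n)^2))) = lam)
    (hT : Tendsto (fun n : ℕ => n * (r n)^2) atTop atTop)
    (hT4 : Tendsto (fun n : ℕ => n * (r n)^4) atTop (𝓝 0)) (k : ℕ) :
    Tendsto (fun n : ℕ => (n : ℝ) ^ k * (pk n k (r n)).toReal) atTop (𝓝 (lam ^ k)) := by
  have hpi := Real.pi_pos
  have hr2 : Tendsto (fun n => k * (Real.pi * (r n) ^ 2)) atTop (𝓝 0) := by
    have := ((hr0.pow 2).const_mul Real.pi).const_mul (k : ℝ)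
    simpa using this
  have hlow : Tendsto (fun n : ℕ => lam ^ k * ((1 - (k * (4 * r n) + k * (k * (Real.pi * (r n) ^ 2)))) *
      Real.exp (-((k * Real.pi) ^ 2 * (n * (r n) ^ 4) / (1 - k * (Real.pi * (r n) ^ 2)))))) atTop (𝓝 (lam ^ k)) := by
    have a1 : Tendsto (fun n => 1 - (k * (4 * r n) + k * (k * (Real.pi * (r n) ^ 2)))) atTop (𝓝 1) := by
      have := (((hr0.const_mul 4).const_mul (k : ℝ)).add (hr2.const_mul (k : ℝ))).const_sub 1
      simpa using this
    have a2 : Tendsto (fun n : ℕ => Real.exp (-((k * Real.pi) ^ 2 * (n * (r n) ^ 4) / (1 - k * (Real.pi * (r n) ^ 2)))))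
        atTop (𝓝 1) := by
      have := (((hT4.const_mul ((k * Real.pi) ^ 2)).div (hr2.const_sub 1) (by norm_num)).neg).rexp
      simpa using this
    have := (a1.mul a2).const_mul (lam ^ k)
    simpa using this
  have hup : Tendsto (fun n : ℕ => Real.exp (k ^ 2 * (Real.pi * (r n) ^ 2)) * BB lam (n * (r n) ^ 2) k) atTop
      (𝓝 (lam ^ k)) := by
    have a1 := ((hr2.const_mul (k : ℝ))).rexp
    have := a1.mul ((BB_tendsto lam k).comp hT)
    simp only [mul_zero, Real.exp_zero, one_mul] at this
    refine this.congr fun n => ?_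
    simp only [Function.comp]
    congr 2; ring
  refine tendsto_of_tendsto_of_tendsto_of_le_of_le' hlow hup ?_ ?_
  · filter_upwards [hr, hlam, hr0.eventually_le_const (show (0:ℝ) < 1/2 by norm_num),
      hr2.eventually_lt_const (show (0:ℝ) < 1 by norm_num)] with n h1 h2 h3 h4
    have := mul_le_mul_of_nonneg_left (pk_ge (n := n) h1 h3 h4) (show (0:ℝ) ≤ (n:ℝ) ^ k by positivity)
    refine le_trans (le_of_eq ?_) this
    rw [← h2, mul_pow, ← Real.exp_nat_mul]
    have h5 : 1 - k * (Real.pi * (r n) ^ 2) ≠ 0 := by linarith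
    have e : Real.exp (-(n * (k * (Real.pi * r n ^ 2) / (1 - k * (Real.pi * r n ^ 2))))) =
        Real.exp (k * -(n * (Real.pi * r n ^ 2))) *
        Real.exp (-((k * Real.pi) ^ 2 * (n * (r n) ^ 4) / (1 - k * (Real.pi * (r n) ^ 2)))) := by
      rw [← Real.exp_add]; congr 1
      have gen : ∀ w N : ℝ, 1 - w ≠ 0 → -(N * (w / (1 - w))) = -(N * w) + -(N * w ^ 2 / (1 - w)) := by
        intro w N hw
        field_simp
        ring
      rw [gen _ _ h5]
      congr 1
      · ring
      · congr 2; ring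
    rw [e]; ring
  · filter_upwards [hr, hlam] with n h1 h2
    have hB := BB_nonneg hl.le (show 0 ≤ n * (r n) ^ 2 by positivity) k
    have h : (n : ℝ≥0∞) ^ k * pk n k (r n) ≤
        ENNReal.ofReal (Real.exp (k ^ 2 * (Real.pi * (r n) ^ 2)) * BB lam (n * (r n) ^ 2) k) := by
      calc _ ≤ (n : ℝ≥0∞) ^ k * (ENNReal.ofReal (Real.exp (k ^ 2 * (Real.pi * (r n) ^ 2))) * aa n k (r n)) :=
            mul_le_mul_right (pk_le h1) _
        _ = ENNReal.ofReal (Real.exp (k ^ 2 * (Real.pi * (r n) ^ 2))) * ((n : ℝ≥0∞) ^ k * aa n k (r n)) := by ring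
        _ ≤ _ := by
            rw [ENNReal.ofReal_mul (Real.exp_pos _).le]
            exact mul_le_mul_right (aa_le h1 h2 k) _
    have := ENNReal.toReal_le_of_le_ofReal (by positivity) h
    simpa [ENNReal.toReal_mul] using this


/-! ### Bonferroni and the Poisson limit -/

/-- all the vertices in `s` are isolated, and in the inner square -/
def isoEv (n : ℕ) (r : ℝ) (s : Finset (Fin n)) : Set (Fin n → Pt) :=
  {x | ∀ i ∈ s, x i ∈ QI r ∧ ∀ j, j ≠ i → r < ‖x j - x i‖}

lemma measurableSet_isoEv (n : ℕ) (r : ℝ) (s : Finset (Fin n)) : MeasurableSet (isoEv n r s) := by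
  have e : isoEv n r s = ⋂ i ∈ s, ({x : Fin n → Pt | x i ∈ QI r} ∩ ⋂ j, ⋂ (_ : j ≠ i), {x : Fin n → Pt | r < ‖x j - x i‖}) := by
    ext x; simp [isoEv]
  rw [e]
  refine Finset.measurableSet_biInter _ fun i _ => MeasurableSet.inter ?_ (MeasurableSet.iInter fun j =>
    MeasurableSet.iInter fun _ => measurableSet_far r j i)
  exact (measurable_pi_apply i) (measurableSet_QI r)

lemma prob_isoEv (n k : ℕ) (r : ℝ) (s : Finset (Fin n)) (hs : s.card = k) : PP n (isoEv n r s) = pk n k r := by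
  rw [pk, ← prob_tuple (s.orderEmbOfFin hs).toEmbedding (SS k r) (measurableSet_SS k r) (fun y => Un r y)
    (measurableSet_Un_prod k r)]
  congr 1
  have hrange : ∀ j, j ∈ range (s.orderEmbOfFin hs) ↔ j ∈ s := fun j => by
    rw [Finset.range_orderEmbOfFin]; rfl
  ext x
  simp only [mem_ofPred_eq, isoEv, SS, Un, mem_iUnion, Metric.mem_closedBall, dist_eq_norm, not_exists, not_le,
    RelEmbedding.coe_toEmbedding, Function.comp]
  constructor
  · intro h
    refine ⟨⟨fun i => (h _ ((hrange _).1 ⟨i, rfl⟩)).1, fun i j hij => ?_⟩, fun j hj i => ?_⟩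
    · exact (h _ ((hrange _).1 ⟨j, rfl⟩)).2 _ fun h' => hij ((s.orderEmbOfFin hs).injective h')
    · refine (h _ ((hrange _).1 ⟨i, rfl⟩)).2 _ fun h' => hj ⟨i, h'.symm⟩
  · rintro ⟨⟨h1, h2⟩, h3⟩ i hi
    obtain ⟨a, rfl⟩ := (hrange i).2 hi
    refine ⟨h1 a, fun j hj => ?_⟩
    by_cases hjs : j ∈ range (s.orderEmbOfFin hs)
    · obtain ⟨b, rfl⟩ := hjs
      exact h2 b a fun h' => hj (by rw [h'])
    · exact h3 j hjs a

open Classical in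
noncomputable def isoCount (n : ℕ) (r : ℝ) (x : Fin n → Pt) : ℕ :=
  (Finset.univ.filter fun i => x ∈ isoEv n r {i}).card

lemma isoEv_iff (n : ℕ) (r : ℝ) (s : Finset (Fin n)) (x : Fin n → Pt) :
    x ∈ isoEv n r s ↔ ∀ i ∈ s, x ∈ isoEv n r {i} := by
  simp [isoEv]

lemma isoCount_zero (n : ℕ) (r : ℝ) (x : Fin n → Pt) : isoCount n r x = 0 ↔ x ∈ (isoQI n r)ᶜ := by
  classical
  rw [isoCount, Finset.card_eq_zero, Finset.filter_eq_empty_iff]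
  simp [isoQI, isoEv]

lemma choose_isoCount (n k : ℕ) (r : ℝ) (x : Fin n → Pt) :
    ((isoCount n r x).choose k : ℝ) =
      ∑ s ∈ Finset.powersetCard k (Finset.univ : Finset (Fin n)), (isoEv n r s).indicator 1 x := by
  classical
  rw [isoCount, ← Finset.card_powersetCard]
  have : ∀ s, (isoEv n r s).indicator (1 : (Fin n → Pt) → ℝ) x = if x ∈ isoEv n r s then 1 else 0 := by
    intro s; simp [indicator]
  simp only [this]
  rw [Finset.sum_ite, Finset.sum_const_zero, add_zero, Finset.sum_const, nsmul_eq_mul, mul_one]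
  congr 2
  ext s
  simp only [Finset.mem_powersetCard, Finset.mem_filter, Finset.subset_univ, true_and]
  rw [isoEv_iff, and_comm]
  simp [Finset.subset_iff]

lemma integrable_ind (n : ℕ) (r : ℝ) (s : Finset (Fin n)) :
    Integrable ((isoEv n r s).indicator (1 : (Fin n → Pt) → ℝ)) (PP n) :=
  (integrable_const (1 : ℝ)).indicator (measurableSet_isoEv n r s)

lemma integrable_choose (n k : ℕ) (r : ℝ) :
    Integrable (fun x => ((isoCount n r x).choose k : ℝ)) (PP n) := by
  simp only [choose_isoCount]
  exact integrable_finsetSum _ fun s _ => integrable_ind n r s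

lemma integral_choose (n k : ℕ) (r : ℝ) :
    ∫ x, ((isoCount n r x).choose k : ℝ) ∂(PP n) = n.choose k * (pk n k r).toReal := by
  simp only [choose_isoCount]
  rw [integral_finsetSum _ fun s _ => integrable_ind n r s]
  have : ∀ s ∈ Finset.powersetCard k (Finset.univ : Finset (Fin n)),
      ∫ x, (isoEv n r s).indicator (1 : (Fin n → Pt) → ℝ) x ∂(PP n) = (pk n k r).toReal := by
    intro s hs
    rw [integral_indicator_one (measurableSet_isoEv n r s), measureReal_def,
      prob_isoEv n k r s (Finset.mem_powersetCard.1 hs).2]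
  rw [Finset.sum_congr rfl this, Finset.sum_const, Finset.card_powersetCard]
  simp

lemma alt_sum (m K : ℕ) : (∑ k ∈ Finset.range (K + 1), (-1 : ℝ) ^ k * (m.choose k : ℝ)) =
    if m = 0 then 1 else (-1) ^ K * ((m - 1).choose K : ℝ) := by
  cases m with
  | zero =>
    rw [Finset.sum_range_succ']
    simp
  | succ m =>
    have := Int.alternating_sum_range_choose_eq_choose (n := m) (m := K)
    have h2 := congrArg (fun z : ℤ => (z : ℝ)) this
    push_cast at h2
    simpa using h2

noncomputable def bonf (n K : ℕ) (r : ℝ) : ℝ :=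
  ∑ k ∈ Finset.range (K + 1), (-1 : ℝ) ^ k * (n.choose k * (pk n k r).toReal)

lemma bonf_eq (n K : ℕ) (r : ℝ) : bonf n K r =
    ∫ x, (∑ k ∈ Finset.range (K + 1), (-1 : ℝ) ^ k * ((isoCount n r x).choose k : ℝ)) ∂(PP n) := by
  rw [integral_finsetSum _ fun k _ => (integrable_choose n k r).const_mul _, bonf]
  refine Finset.sum_congr rfl fun k _ => ?_
  rw [integral_const_mul, integral_choose]

lemma measurableSet_isoQI (n : ℕ) (r : ℝ) : MeasurableSet (isoQI n r) := by
  have e : isoQI n r = ⋃ i, isoEv n r {i} := by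
    ext x; simp [isoQI, isoEv]
  rw [e]
  exact MeasurableSet.iUnion fun i => measurableSet_isoEv n r {i}

lemma prob_eq_integral (n : ℕ) (r : ℝ) : (PP n).real (isoQI n r)ᶜ =
    ∫ x, (if isoCount n r x = 0 then (1:ℝ) else 0) ∂(PP n) := by
  rw [← integral_indicator_one (measurableSet_isoQI n r).compl]
  congr 1; ext x
  by_cases h : x ∈ (isoQI n r)ᶜ
  · rw [indicator_of_mem h, if_pos ((isoCount_zero n r x).2 h), Pi.one_apply]
  · rw [indicator_of_notMem h, if_neg (mt (isoCount_zero n r x).1 h)]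

lemma integrable_zero (n : ℕ) (r : ℝ) :
    Integrable (fun x => if isoCount n r x = 0 then (1:ℝ) else 0) (PP n) := by
  have : Integrable ((isoQI n r)ᶜ.indicator (1 : (Fin n → Pt) → ℝ)) (PP n) :=
    (integrable_const (1 : ℝ)).indicator (measurableSet_isoQI n r).compl
  refine this.congr (ae_of_all _ fun x => ?_)
  by_cases h : x ∈ (isoQI n r)ᶜ
  · simp only [indicator_of_mem h, if_pos ((isoCount_zero n r x).2 h), Pi.one_apply]
  · simp only [indicator_of_notMem h, if_neg (mt (isoCount_zero n r x).1 h)]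

lemma integrable_alt (n K : ℕ) (r : ℝ) :
    Integrable (fun x => ∑ k ∈ Finset.range (K + 1), (-1 : ℝ) ^ k * ((isoCount n r x).choose k : ℝ)) (PP n) :=
  integrable_finsetSum _ fun k _ => (integrable_choose n k r).const_mul _

lemma bonf_upper (n L : ℕ) (r : ℝ) : (PP n).real (isoQI n r)ᶜ ≤ bonf n (2 * L) r := by
  rw [prob_eq_integral, bonf_eq]
  refine integral_mono (integrable_zero n r) (integrable_alt n _ r) fun x => ?_
  simp only [alt_sum]
  split_ifs
  · exact le_rfl
  · rw [pow_mul]; simp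

lemma bonf_lower (n L : ℕ) (r : ℝ) : bonf n (2 * L + 1) r ≤ (PP n).real (isoQI n r)ᶜ := by
  rw [prob_eq_integral, bonf_eq]
  refine integral_mono (integrable_alt n _ r) (integrable_zero n r) fun x => ?_
  simp only [alt_sum]
  split_ifs
  · exact le_rfl
  · rw [pow_succ, pow_mul]; simp

lemma choose_tendsto (k : ℕ) : Tendsto (fun n : ℕ => (n.choose k : ℝ) / n ^ k) atTop (𝓝 (1 / k.factorial)) := by
  have h := (Asymptotics.isEquivalent_iff_tendsto_one (by
    filter_upwards [eventually_gt_atTop 0] with n hn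
    positivity)).1 (isEquivalent_choose k)
  have h2 := h.mul_const (1 / (k.factorial : ℝ))
  rw [one_mul] at h2
  refine h2.congr' ?_
  filter_upwards [eventually_gt_atTop 0] with n hn
  have : (n : ℝ) ^ k ≠ 0 := by positivity
  have h3 : (k.factorial : ℝ) ≠ 0 := by positivity
  simp only [Pi.div_apply]
  field_simp

lemma prob_isoQI_tendsto {r : ℕ → ℝ} {lam : ℝ} (hl : 0 < lam) (hr : ∀ᶠ n in atTop, 0 < r n)
    (hr0 : Tendsto r atTop (𝓝 0))
    (hlam : ∀ᶠ n : ℕ in atTop, n * Real.exp (-(n * (Real.pi * (r n)^2))) = lam)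
    (hT : Tendsto (fun n : ℕ => n * (r n)^2) atTop atTop)
    (hT4 : Tendsto (fun n : ℕ => n * (r n)^4) atTop (𝓝 0)) :
    Tendsto (fun n => (PP n).real (isoQI n (r n))ᶜ) atTop (𝓝 (Real.exp (-lam))) := by
  have hb : ∀ K, Tendsto (fun n => bonf n K (r n)) atTop
      (𝓝 (∑ k ∈ Finset.range (K + 1), (-lam) ^ k / k.factorial)) := by
    intro K
    unfold bonf
    refine tendsto_finsetSum _ fun k _ => ?_
    have h := ((choose_tendsto k).mul (pk_tendsto hl hr hr0 hlam hT hT4 k)).const_mul ((-1 : ℝ) ^ k)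
    have e : (-1 : ℝ) ^ k * (1 / k.factorial * lam ^ k) = (-lam) ^ k / k.factorial := by
      rw [neg_pow lam]; ring
    rw [e] at h
    refine h.congr' ?_
    filter_upwards [eventually_gt_atTop 0] with n hn
    have : (n : ℝ) ^ k ≠ 0 := by positivity
    field_simp
  have hexp : Tendsto (fun K : ℕ => ∑ k ∈ Finset.range K, (-lam) ^ k / k.factorial) atTop (𝓝 (Real.exp (-lam))) := by
    rw [Real.exp_eq_exp_ℝ]
    exact (NormedSpace.expSeries_div_hasSum_exp (-lam)).tendsto_sum_nat
  rw [Metric.tendsto_atTop]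
  intro ε hε
  obtain ⟨K0, hK0⟩ := Metric.tendsto_atTop.1 hexp (ε / 2) (by linarith)
  obtain ⟨N1, hN1⟩ := Metric.tendsto_atTop.1 (hb (2 * K0)) (ε / 2) (by linarith)
  obtain ⟨N2, hN2⟩ := Metric.tendsto_atTop.1 (hb (2 * K0 + 1)) (ε / 2) (by linarith)
  refine ⟨max N1 N2, fun n hn => ?_⟩
  have a1 := hN1 n ((le_max_left _ _).trans hn)
  have a2 := hN2 n ((le_max_right _ _).trans hn)
  have b1 := hK0 (2 * K0 + 1) (by omega)
  have b2 := hK0 (2 * K0 + 1 + 1) (by omega)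
  have u := bonf_upper n K0 (r n)
  have l := bonf_lower n K0 (r n)
  rw [Real.dist_eq, abs_lt] at *
  constructor <;> linarith [a1.1, a1.2, a2.1, a2.2, b1.1, b1.2, b2.1, b2.2]


/-! ### Assembly -/

noncomputable def rad (c : ℝ) (n : ℕ) : ℝ := Real.sqrt ((Real.log n + c) / (Real.pi * n))

lemma log_atTop (c : ℝ) : Tendsto (fun n : ℕ => Real.log n + c) atTop atTop :=
  tendsto_atTop_add_const_right _ _ (Real.tendsto_log_atTop.comp tendsto_natCast_atTop_atTop)

lemma rad_sq (c : ℝ) : ∀ᶠ n : ℕ in atTop, 0 < rad c n ∧ rad c n ^ 2 = (Real.log n + c) / (Real.pi * n) ∧ 2 ≤ n := by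
  filter_upwards [(log_atTop c).eventually_gt_atTop 0, eventually_ge_atTop 2] with n h1 h2
  have hpi := Real.pi_pos
  have : 0 < (Real.log n + c) / (Real.pi * n) := by positivity
  exact ⟨Real.sqrt_pos.2 this, Real.sq_sqrt this.le, h2⟩

lemma log_sq_div (c : ℝ) : Tendsto (fun n : ℕ => (Real.log n + c) ^ 2 / n) atTop (𝓝 0) := by
  have h2 := Real.tendsto_pow_log_div_mul_add_atTop 1 0 2 one_ne_zero
  have h1 := Real.tendsto_pow_log_div_mul_add_atTop 1 0 1 one_ne_zero
  have h0 := Real.tendsto_pow_log_div_mul_add_atTop 1 0 0 one_ne_zero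
  have h := ((h2.add (h1.const_mul (2 * c))).add (h0.const_mul (c ^ 2))).comp tendsto_natCast_atTop_atTop
  simp only [mul_zero, add_zero] at h
  refine h.congr fun n => ?_
  simp only [Function.comp, pow_zero, pow_one, one_mul]
  ring

lemma rad_T (c : ℝ) : Tendsto (fun n : ℕ => n * (rad c n) ^ 2) atTop atTop := by
  have h := (log_atTop c).atTop_div_const Real.pi_pos
  refine h.congr' ?_
  filter_upwards [rad_sq c] with n ⟨_, h, hn⟩
  have : (n : ℝ) ≠ 0 := by positivity
  have hpi := Real.pi_pos
  rw [h]; field_simp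

lemma rad_T4 (c : ℝ) : Tendsto (fun n : ℕ => n * (rad c n) ^ 4) atTop (𝓝 0) := by
  have h := (log_sq_div c).mul_const (1 / Real.pi ^ 2)
  rw [zero_mul] at h
  refine h.congr' ?_
  filter_upwards [rad_sq c] with n ⟨_, h, hn⟩
  have : (n : ℝ) ≠ 0 := by positivity
  have hpi := Real.pi_pos
  rw [show rad c n ^ 4 = (rad c n ^ 2) ^ 2 by ring, h]; field_simp

lemma rad_zero (c : ℝ) : Tendsto (rad c) atTop (𝓝 0) := by
  have h4 : Tendsto (fun n : ℕ => (rad c n) ^ 4) atTop (𝓝 0) := by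
    refine squeeze_zero' (Eventually.of_forall fun n => by positivity) ?_ (rad_T4 c)
    filter_upwards [eventually_ge_atTop 1] with n hn
    have : (1 : ℝ) ≤ n := by exact_mod_cast hn
    nlinarith [show 0 ≤ rad c n ^ 4 by positivity]
  have h := (h4.sqrt).sqrt
  simp only [Real.sqrt_zero] at h
  refine h.congr fun n => ?_
  have h0 : 0 ≤ rad c n := Real.sqrt_nonneg _
  rw [show rad c n ^ 4 = (rad c n ^ 2) ^ 2 by ring, Real.sqrt_sq (by positivity), Real.sqrt_sq h0]

lemma rad_lam (c : ℝ) : ∀ᶠ n : ℕ in atTop,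
    n * Real.exp (-(n * (Real.pi * (rad c n)^2))) = Real.exp (-c) := by
  filter_upwards [rad_sq c] with n ⟨_, h, hn⟩
  have hn0 : (0 : ℝ) < n := by positivity
  have hpi := Real.pi_pos
  rw [h, show (n : ℝ) * (Real.pi * ((Real.log n + c) / (Real.pi * n))) = Real.log n + c by field_simp,
    neg_add, Real.exp_add, Real.exp_neg, Real.exp_log hn0]
  field_simp

theorem main_limit (c : ℝ) : Tendsto (fun n : ℕ => ((PP n)
    {x : Fin n → Pt | (geomGraph x (rad c n)).Connected}).toReal) atTop (𝓝 (Real.exp (-Real.exp (-c)))) := by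
  have hiso := prob_isoQI_tendsto (Real.exp_pos (-c)) ((rad_sq c).mono fun n h => h.1) (rad_zero c) (rad_lam c)
    (rad_T c) (rad_T4 c)
  have herr := (errTot_tendsto (Real.exp (-c))).comp (rad_T c)
  have herr' : Tendsto (fun n : ℕ => max (errTot (Real.exp (-c)) (n * (rad c n) ^ 2)) 0) atTop (𝓝 0) := by
    have := herr.max (tendsto_const_nhds (x := (0:ℝ)))
    simpa using this
  have hlow := hiso.sub herr'
  rw [sub_zero] at hlow
  refine tendsto_of_tendsto_of_tendsto_of_le_of_le' hlow hiso ?_ ?_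
  · filter_upwards [rad_sq c, rad_lam c, (rad_zero c).eventually_le_const (show (0:ℝ) < 1/1000 by norm_num)]
      with n ⟨hr, _, hn⟩ hlam hr1
    set r := rad c n
    have hM1 : 3 / r ≤ ⌈3 / r⌉₊ := Nat.le_ceil _
    have hM2 : (⌈3 / r⌉₊ : ℝ) < 3 / r + 1 := Nat.ceil_lt_add_one (by positivity)
    set M := ⌈3 / r⌉₊
    have hM3 : 3 ≤ r * M := by rw [div_le_iff₀ hr] at hM1; linarith
    have hM4 : r * M ≤ 4 := by
      have := mul_le_mul_of_nonneg_left hM2.le hr.le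
      rw [mul_add, mul_div_cancel₀ _ hr.ne'] at this
      linarith
    have hM5 : 1300 ≤ M := by
      have : (1300 : ℝ) ≤ M := by
        by_contra hlt
        push Not at hlt
        nlinarith
      exact_mod_cast this
    have hsub : (isoQI n r)ᶜ ⊆ {x : Fin n → Pt | (geomGraph x r).Connected} ∪ badAll n M r := by
      intro x hx
      by_cases hb : x ∈ badAll n M r
      · exact Or.inr hb
      · exact Or.inl (conn_of_not_bad (by omega) hr (by linarith) hM5 hM3 hM4 x hb hx)
    have hbad := prob_badAll (n := n) (M := M) (by omega) hr (by linarith) (by omega) hM4 hlam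
    have hbad' : (PP n).real (badAll n M r) ≤ max (errTot (Real.exp (-c)) (n * r ^ 2)) 0 := by
      refine ENNReal.toReal_le_of_le_ofReal (le_max_right _ _) (hbad.trans ?_)
      exact ENNReal.ofReal_le_ofReal (le_max_left _ _)
    have h1 := measureReal_mono (μ := PP n) hsub
    have h2 := measureReal_union_le (μ := PP n) {x : Fin n → Pt | (geomGraph x r).Connected} (badAll n M r)
    change _ ≤ (PP n).real _
    linarith
  · filter_upwards [eventually_ge_atTop 2] with n hn
    refine measureReal_mono (μ := PP n) ?_
    intro x hx hi
    exact not_conn_of_iso hn x hi hx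


end Aux

/-- Penrose, random geometric graphs: with `r_n = sqrt((log n + c)/(π n))`,
the probability that the geometric graph with radius `r_n` on `n` i.i.d. uniform points in the
unit square is connected tends to `exp(−e^{−c})` as `n → ∞`. -/
theorem stmt_2 (c : ℝ) :
    Filter.Tendsto
      (fun n : ℕ =>
        ((Measure.pi fun _ : Fin n => unifSquare)
          {x : Fin n → EuclideanSpace ℝ (Fin 2) |
            (geomGraph x (Real.sqrt ((Real.log n + c) / (Real.pi * n)))).Connected}).toReal)
      Filter.atTop (nhds (Real.exp (-Real.exp (-c)))) := by
  exact main_limit c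
end

section
/- Let n points x_1,…,x_n be independent uniformly distributed random points in the unit square Q = [0,1]² ⊂ ℝ². Fix a radius r with 0 < r < √2 and a real ε with 0 < ε < 1, and set b := ⌈√5 / r⌉. If n ≥ b² · log( b² / ε ), then with probability at least 1 − ε the geometric graph on x_1,…,x_n with radius r (edge between distinct i, j iff ‖x_i − x_j‖₂ ≤ r) is connected. -/
open MeasureTheory

/-- A closed axis-parallel box. -/
def boxS (a c : Fin 2 → ℝ) : Set (EuclideanSpace ℝ (Fin 2)) :=
  {p | ∀ i, p i ∈ Set.Icc (a i) (c i)}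

lemma boxS_eq (a c : Fin 2 → ℝ) :
    boxS a c = (fun p : EuclideanSpace ℝ (Fin 2) => WithLp.ofLp p) ⁻¹'
      (Set.univ.pi fun i => Set.Icc (a i) (c i)) := by
  ext p; simp only [boxS, Set.mem_setOf_eq, Set.mem_preimage, Set.mem_univ_pi]

lemma boxS_meas (a c : Fin 2 → ℝ) : MeasurableSet (boxS a c) := by
  rw [boxS_eq]
  exact (PiLp.volume_preserving_ofLp (Fin 2)).measurable
    (MeasurableSet.univ_pi fun i => measurableSet_Icc)

lemma boxS_vol (a c : Fin 2 → ℝ) :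
    volume (boxS a c) = ∏ i, ENNReal.ofReal (c i - a i) := by
  rw [boxS_eq]
  rw [(PiLp.volume_preserving_ofLp (Fin 2)).measure_preimage
    (MeasurableSet.univ_pi fun i => measurableSet_Icc).nullMeasurableSet]
  rw [volume_pi_pi]
  simp

lemma unitSquare_eq_s4 : unitSquare = boxS (fun _ => 0) (fun _ => 1) := rfl

instance unif_prob : IsProbabilityMeasure unifSquare := by
  constructor
  rw [unifSquare, Measure.restrict_apply_univ, unitSquare_eq_s4, boxS_vol]
  simp

/-- The grid cell `(i,j)`. -/
def cellS (b i j : ℕ) : Set (EuclideanSpace ℝ (Fin 2)) :=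
  boxS ![(i : ℝ) / b, (j : ℝ) / b] ![((i : ℝ) + 1) / b, ((j : ℝ) + 1) / b]

lemma cellS_meas (b i j : ℕ) : MeasurableSet (cellS b i j) := boxS_meas _ _

lemma cellS_unif (b i j : ℕ) (hi : i < b) (hj : j < b) :
    unifSquare (cellS b i j) = ENNReal.ofReal (1 / (b : ℝ) ^ 2) := by
  have hb : (0 : ℝ) < b := by exact_mod_cast (by omega : 0 < b)
  have hi' : (i : ℝ) + 1 ≤ b := by exact_mod_cast hi
  have hj' : (j : ℝ) + 1 ≤ b := by exact_mod_cast hj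
  have hsub : cellS b i j ⊆ unitSquare := by
    intro p hp k
    have h := hp k
    fin_cases k
    · have h' : (i : ℝ) / b ≤ p 0 ∧ p 0 ≤ ((i : ℝ) + 1) / b := h
      exact ⟨le_trans (by positivity) h'.1, h'.2.trans ((div_le_one hb).2 hi')⟩
    · have h' : (j : ℝ) / b ≤ p 1 ∧ p 1 ≤ ((j : ℝ) + 1) / b := h
      exact ⟨le_trans (by positivity) h'.1, h'.2.trans ((div_le_one hb).2 hj')⟩
  rw [unifSquare, Measure.restrict_apply (cellS_meas _ _ _), Set.inter_eq_left.2 hsub, cellS,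
    boxS_vol, Fin.prod_univ_two, ← ENNReal.ofReal_mul]
  · congr 1
    simp
    field_simp
    ring
  · simp
    gcongr
    linarith

lemma cellS_compl (b i j : ℕ) (hi : i < b) (hj : j < b) :
    unifSquare (cellS b i j)ᶜ = ENNReal.ofReal (1 - 1 / (b : ℝ) ^ 2) := by
  rw [prob_compl_eq_one_sub (cellS_meas _ _ _), cellS_unif b i j hi hj,
    ENNReal.ofReal_sub _ (by positivity), ENNReal.ofReal_one]

lemma cover1 (b : ℕ) (hb : 0 < b) (t : ℝ) (h0 : 0 ≤ t) (h1 : t ≤ 1) :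
    ∃ i < b, (i : ℝ) / b ≤ t ∧ t ≤ ((i : ℝ) + 1) / b := by
  have hb' : (0 : ℝ) < b := by exact_mod_cast hb
  by_cases h : t = 1
  · refine ⟨b - 1, by omega, ?_⟩
    rw [Nat.cast_sub (by omega)]
    subst h
    refine ⟨(div_le_one hb').2 (by simp), (one_le_div hb').2 (by simp)⟩
  · have ht : t < 1 := lt_of_le_of_ne h1 h
    refine ⟨⌊t * b⌋₊, ?_, ?_, ?_⟩
    · rw [Nat.floor_lt (by positivity)]
      nlinarith
    · rw [div_le_iff₀ hb']
      exact Nat.floor_le (by positivity)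
    · rw [le_div_iff₀ hb']
      exact (Nat.lt_floor_add_one _).le

lemma cover2 (b : ℕ) (hb : 0 < b) (p : EuclideanSpace ℝ (Fin 2)) (hp : p ∈ unitSquare) :
    ∃ i < b, ∃ j < b, p ∈ cellS b i j := by
  obtain ⟨i, hi, h1, h2⟩ := cover1 b hb (p 0) (hp 0).1 (hp 0).2
  obtain ⟨j, hj, h3, h4⟩ := cover1 b hb (p 1) (hp 1).1 (hp 1).2
  refine ⟨i, hi, j, hj, ?_⟩
  intro k
  fin_cases k
  · exact ⟨h1, h2⟩
  · exact ⟨h3, h4⟩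

lemma norm_le_aux (p q : EuclideanSpace ℝ (Fin 2)) (b r u v : ℝ) (hr : 0 < r) (hb : 0 < b)
    (hbr : Real.sqrt 5 / r ≤ b) (h0 : |p 0 - q 0| ≤ u / b) (h1 : |p 1 - q 1| ≤ v / b)
    (huv : u ^ 2 + v ^ 2 ≤ 5) : ‖p - q‖ ≤ r := by
  rw [EuclideanSpace.norm_eq, Fin.sum_univ_two]
  apply Real.sqrt_le_iff.2 ⟨hr.le, ?_⟩
  have h5 : Real.sqrt 5 ≤ b * r := (div_le_iff₀ hr).1 hbr
  have h5' : 5 ≤ (b * r) ^ 2 := (Real.sqrt_le_left (by positivity)).1 h5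
  have e0 : |p 0 - q 0| ^ 2 ≤ (u / b) ^ 2 := pow_le_pow_left₀ (abs_nonneg _) h0 2
  have e1 : |p 1 - q 1| ^ 2 ≤ (v / b) ^ 2 := pow_le_pow_left₀ (abs_nonneg _) h1 2
  have : (u / b) ^ 2 + (v / b) ^ 2 ≤ r ^ 2 := by
    rw [div_pow, div_pow, ← add_div, div_le_iff₀ (by positivity)]
    nlinarith
  simp only [PiLp.sub_apply, Real.norm_eq_abs]
  linarith

lemma reach_of_le {n : ℕ} (x : Fin n → EuclideanSpace ℝ (Fin 2)) (r : ℝ) (k l : Fin n)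
    (h : ‖x k - x l‖ ≤ r) : (geomGraph x r).Reachable k l := by
  by_cases hkl : k = l
  · subst hkl; exact SimpleGraph.Reachable.refl _
  · apply SimpleGraph.Adj.reachable
    rw [geomGraph, SimpleGraph.fromRel_adj]
    exact ⟨hkl, Or.inl h⟩

lemma coord_aux (b i i' s t : ℝ) (hb : 0 < b) (w : ℝ) (h1 : i' ≤ i + w) (h2 : i ≤ i' + w)
    (hs : s ∈ Set.Icc (i / b) ((i + 1) / b)) (ht : t ∈ Set.Icc (i' / b) ((i' + 1) / b)) :
    |s - t| ≤ (w + 1) / b := by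
  obtain ⟨a1, a2⟩ := hs
  obtain ⟨a3, a4⟩ := ht
  rw [div_le_iff₀ hb] at a1 a3
  rw [le_div_iff₀ hb] at a2 a4
  rw [le_div_iff₀ hb]
  rcases abs_cases (s - t) with ⟨h, _⟩ | ⟨h, _⟩ <;> rw [h] <;> linarith

lemma conn_of_cells (b n : ℕ) (r : ℝ) (hr : 0 < r) (hb : 0 < b)
    (hbr : Real.sqrt 5 / r ≤ b) (x : Fin n → EuclideanSpace ℝ (Fin 2))
    (hx : ∀ k, x k ∈ unitSquare) (hc : ∀ i < b, ∀ j < b, ∃ k, x k ∈ cellS b i j) :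
    (geomGraph x r).Connected := by
  have hb' : (0 : ℝ) < b := by exact_mod_cast hb
  -- adjacent cells, vertical
  have key : ∀ (i j i' j' : ℕ) (w z : ℝ) (k l : Fin n), x k ∈ cellS b i j →
      x l ∈ cellS b i' j' → (i' : ℝ) ≤ i + w → (i : ℝ) ≤ i' + w → (j' : ℝ) ≤ j + z →
      (j : ℝ) ≤ j' + z → (w + 1) ^ 2 + (z + 1) ^ 2 ≤ 5 → (geomGraph x r).Reachable k l := by
    intro i j i' j' w z k l hk hl h1 h2 h3 h4 h5
    refine reach_of_le x r k l (norm_le_aux _ _ b r _ _ hr hb' hbr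
      (coord_aux b i i' _ _ hb' w h1 h2 (hk 0) (hl 0))
      (coord_aux b j j' _ _ hb' z h3 h4 (hk 1) (hl 1)) h5)
  obtain ⟨o, ho⟩ := hc 0 hb 0 hb
  have row : ∀ i < b, ∀ k, x k ∈ cellS b i 0 → (geomGraph x r).Reachable k o := by
    intro i
    induction i with
    | zero =>
      intro _ k hk
      exact key 0 0 0 0 0 0 k o hk ho (by simp) (by simp) (by simp) (by simp) (by norm_num)
    | succ i ih =>
      intro hi k hk
      obtain ⟨l, hl⟩ := hc i (by omega) 0 hb
      refine (key (i + 1) 0 i 0 1 0 k l hk hl ?_ ?_ (by simp) (by simp) (by norm_num)).trans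
        (ih (by omega) l hl)
      · push_cast; linarith
      · push_cast; linarith
  have col : ∀ i < b, ∀ j < b, ∀ k, x k ∈ cellS b i j → (geomGraph x r).Reachable k o := by
    intro i hi j
    induction j with
    | zero => intro _ k hk; exact row i hi k hk
    | succ j ih =>
      intro hj k hk
      obtain ⟨l, hl⟩ := hc i hi j (by omega)
      refine (key i (j + 1) i j 0 1 k l hk hl (by simp) (by simp) ?_ ?_ (by norm_num)).trans
        (ih (by omega) l hl)
      · push_cast; linarith
      · push_cast; linarith
  have all : ∀ k, (geomGraph x r).Reachable k o := by
    intro k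
    obtain ⟨i, hi, j, hj, h⟩ := cover2 b hb (x k) (hx k)
    exact col i hi j hj k h
  haveI : Nonempty (Fin n) := ⟨o⟩
  exact SimpleGraph.Connected.mk fun k l => (all k).trans (all l).symm

lemma num_bound (b n : ℕ) (hb : 0 < b) (ε : ℝ) (hε : 0 < ε)
    (hn : (b : ℝ) ^ 2 * Real.log ((b : ℝ) ^ 2 / ε) ≤ n) :
    (b : ℝ) ^ 2 * (1 - 1 / (b : ℝ) ^ 2) ^ n ≤ ε := by
  have hb' : (1 : ℝ) ≤ b := by exact_mod_cast hb
  have hB : (1 : ℝ) ≤ (b : ℝ) ^ 2 := one_le_pow₀ hb'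
  set B := (b : ℝ) ^ 2
  have hB0 : 0 < B := by linarith
  have h1 : (1 - 1 / B) ^ n ≤ Real.exp (-(n / B)) := by
    have : 1 - 1 / B ≤ Real.exp (-(1 / B)) := by
      have := Real.add_one_le_exp (-(1 / B)); linarith
    have h0 : 0 ≤ 1 - 1 / B := by
      rw [sub_nonneg]; exact (div_le_one hB0).2 hB
    calc _ ≤ (Real.exp (-(1 / B))) ^ n := pow_le_pow_left₀ h0 this n
      _ = _ := by rw [← Real.exp_nat_mul]; congr 1; ring
  have h2 : Real.exp (-(n / B)) ≤ ε / B := by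
    have : Real.log (B / ε) ≤ n / B := by rw [le_div_iff₀ hB0]; linarith
    calc _ ≤ Real.exp (-Real.log (B / ε)) := Real.exp_le_exp.2 (by linarith)
      _ = _ := by rw [Real.exp_neg, Real.exp_log (by positivity), inv_div]
  calc _ ≤ B * (ε / B) := by gcongr; exact h1.trans h2
    _ = ε := by field_simp

/-- for `0 < r < √2`, `0 < ε < 1` and `b = ⌈√5/r⌉`, if `n ≥ b²·log(b²/ε)` then
with probability at least `1 − ε` the geometric graph with radius `r` on `n` i.i.d. uniform
points in the unit square is connected. -/
theorem stmt_4 (r ε : ℝ) (hr0 : 0 < r) (hr2 : r < Real.sqrt 2) (hε0 : 0 < ε) (hε1 : ε < 1)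
    (n : ℕ)
    (hn : (⌈Real.sqrt 5 / r⌉₊ : ℝ) ^ 2 * Real.log ((⌈Real.sqrt 5 / r⌉₊ : ℝ) ^ 2 / ε) ≤ (n : ℝ)) :
    ENNReal.ofReal (1 - ε) ≤
      (Measure.pi fun _ : Fin n => unifSquare)
        {x : Fin n → EuclideanSpace ℝ (Fin 2) | (geomGraph x r).Connected} := by
  have hbr : Real.sqrt 5 / r ≤ (⌈Real.sqrt 5 / r⌉₊ : ℝ) := Nat.le_ceil _
  have hb : 0 < ⌈Real.sqrt 5 / r⌉₊ := Nat.ceil_pos.2 (by positivity)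
  generalize ⌈Real.sqrt 5 / r⌉₊ = b at hn hbr hb
  set μ := Measure.pi fun _ : Fin n => unifSquare with hμ
  set S := {x : Fin n → EuclideanSpace ℝ (Fin 2) | (geomGraph x r).Connected}
  let E : Fin b × Fin b → Set (Fin n → EuclideanSpace ℝ (Fin 2)) := fun c =>
    Set.univ.pi fun _ => (cellS b c.1 c.2)ᶜ
  let N : Set (Fin n → EuclideanSpace ℝ (Fin 2)) := {x | ¬ ∀ k, x k ∈ unitSquare}
  have hN : μ N = 0 := by
    have : ∀ᵐ x ∂μ, ∀ k, x k ∈ unitSquare := by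
      rw [ae_all_iff]
      intro k
      have h : ∀ᵐ p ∂unifSquare, p ∈ unitSquare :=
        ae_restrict_mem (boxS_meas _ _)
      exact Measure.tendsto_eval_ae_ae.eventually h
    exact this
  have hE : ∀ c, μ (E c) = ENNReal.ofReal ((1 - 1 / (b : ℝ) ^ 2) ^ n) := by
    intro c
    have h0 : 0 ≤ 1 - 1 / (b : ℝ) ^ 2 := by
      have hb' : (1 : ℝ) ≤ b := by exact_mod_cast hb
      rw [sub_nonneg]
      exact (div_le_one (by positivity)).2 (one_le_pow₀ hb')
    rw [hμ, Measure.pi_pi, Finset.prod_const, cellS_compl b _ _ c.1.2 c.2.2,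
      ENNReal.ofReal_pow h0]
    simp
  have hsub : Sᶜ ⊆ N ∪ ⋃ c, E c := by
    intro x hx
    by_contra hcon
    apply hx
    simp only [Set.mem_union, Set.mem_iUnion, not_or, not_exists] at hcon
    obtain ⟨h1, h2⟩ := hcon
    refine conn_of_cells b n r hr0 hb hbr x (not_not.1 h1) ?_
    intro i hi j hj
    have := h2 (⟨i, hi⟩, ⟨j, hj⟩)
    by_contra hne
    push Not at hne
    exact this fun k _ => hne k
  have hSc : μ Sᶜ ≤ ENNReal.ofReal ε := by
    calc μ Sᶜ ≤ μ (N ∪ ⋃ c, E c) := measure_mono hsub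
      _ ≤ μ N + μ (⋃ c, E c) := measure_union_le _ _
      _ ≤ 0 + ∑ c, μ (E c) := by
        rw [hN]; gcongr; exact measure_iUnion_fintype_le _ _
      _ = ENNReal.ofReal ((b : ℝ) ^ 2 * (1 - 1 / (b : ℝ) ^ 2) ^ n) := by
        simp only [hE, zero_add, Finset.sum_const, Finset.card_univ, Fintype.card_prod,
          Fintype.card_fin, nsmul_eq_mul]
        rw [ENNReal.ofReal_mul (by positivity)]
        congr 1
        rw [ENNReal.ofReal_pow (by positivity), ENNReal.ofReal_natCast]
        push_cast; ring
      _ ≤ _ := ENNReal.ofReal_le_ofReal (num_bound b n hb ε hε0 hn)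
  rw [ENNReal.ofReal_sub _ hε0.le, ENNReal.ofReal_one, tsub_le_iff_right]
  calc (1 : ENNReal) = μ (S ∪ Sᶜ) := by rw [Set.union_compl_self]; exact measure_univ.symm
    _ ≤ μ S + μ Sᶜ := measure_union_le _ _
    _ ≤ _ := by gcongr
end
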